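/- Let β>0, f ∈ C¹([0,1]), and for each integer n≥2 let u_n ∈ PC_{1/n}(0,1) be a minimizer of DPMF_n(β,f,(0,1),·). Let x_n = k_n/n with k_n ∈ {0,…,n−1} and x_n → x_∞ ∈ (0,1), and define w_n(y) = (u_n(x_n + ω(n)y) − f(x_n))/ω(n). Set H = (1/(β|f′(x_∞)|²))^{1/3} and V = f′(x_∞)H (with the canonical (H,V)-staircase identically 0 when f′(x_∞)=0). Then the sequence {w_n} is relatively compact with respect to locally strict convergence in BV_loc(ℝ), and every limit point is an oblique translation of the canonical (H,V)-staircase: for every sequence n_k → +∞ there exist a subsequence n_{k_h} and w_∞ ∈ Obl(H,V) such that w_{n_{k_h}} → w_∞ locally strictly in BV_loc(ℝ). -/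

import Mathlib

open MeasureTheory Filter Set

namespace PeronaMalik

/-- `a_{δ,*} = δ⌊a/δ⌋`, the lower `δ`-approximation of `a`. -/
noncomputable def lowGrid (δ a : ℝ) : ℝ := δ * (⌊a / δ⌋ : ℤ)

/-- `b_δ^* = δ⌈b/δ⌉`, the upper `δ`-approximation of `b`. -/
noncomputable def highGrid (δ b : ℝ) : ℝ := δ * (⌈b / δ⌉ : ℤ)

/-- `u` is piecewise constant at scale `δ`: constant on every interval `[zδ, (z+1)δ)`. -/
def IsPC (δ : ℝ) (u : ℝ → ℝ) : Prop :=
  ∀ z : ℤ, ∀ x ∈ Set.Ico ((z : ℝ) * δ) (((z : ℝ) + 1) * δ), u x = u ((z : ℝ) * δ)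

/-- Discrete derivative `D^δ u (x) = (u(x+δ) - u(x))/δ`. -/
noncomputable def Dd (δ : ℝ) (u : ℝ → ℝ) (x : ℝ) : ℝ := (u (x + δ) - u x) / δ

/-- The discrete Perona–Malik functional with fidelity term on `(a,b)`. -/
noncomputable def DPMF (n : ℕ) (β : ℝ) (f : ℝ → ℝ) (a b : ℝ) (u : ℝ → ℝ) : ℝ :=
  (∫ x in lowGrid (1 / (n : ℝ)) a..(highGrid (1 / (n : ℝ)) b - 1 / (n : ℝ)),
      Real.log (1 + (Dd (1 / (n : ℝ)) u x) ^ 2)) +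
    β * ∫ x in a..b, (u x - f x) ^ 2

/-- `u` is a minimizer of `DPMF n β f (0,1)` over `PC_{1/n}(0,1)`. -/
def IsMinimizer (n : ℕ) (β : ℝ) (f : ℝ → ℝ) (u : ℝ → ℝ) : Prop :=
  IsPC (1 / (n : ℝ)) u ∧
    ∀ v : ℝ → ℝ, IsPC (1 / (n : ℝ)) v → DPMF n β f 0 1 u ≤ DPMF n β f 0 1 v

/-- `m(n,β,f)`, the minimum value of the discrete Perona–Malik functional. -/
noncomputable def mval (n : ℕ) (β : ℝ) (f : ℝ → ℝ) : ℝ :=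
  sInf ((fun u => DPMF n β f 0 1 u) '' {u | IsPC (1 / (n : ℝ)) u})

/-- `ω(n) = (log n / n)^{1/3}`. -/
noncomputable def omg (n : ℕ) : ℝ := (Real.log n / n) ^ ((1 : ℝ) / 3)

/-- `δ(n) = 1/(n ω(n))`. -/
noncomputable def dlt (n : ℕ) : ℝ := 1 / ((n : ℝ) * omg n)

/-- The rescaled discrete Perona–Malik functional. -/
noncomputable def RDPM (n : ℕ) (a b : ℝ) (u : ℝ → ℝ) : ℝ :=
  (1 / omg n ^ 2) *
    ∫ x in lowGrid (dlt n) a..(highGrid (dlt n) b - dlt n),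
      Real.log (1 + (Dd (dlt n) u x) ^ 2)

/-- The rescaled discrete Perona–Malik functional with fidelity term. -/
noncomputable def RDPMF (n : ℕ) (β : ℝ) (f : ℝ → ℝ) (a b : ℝ) (u : ℝ → ℝ) : ℝ :=
  RDPM n a b u + β * ∫ x in Set.Ioo a b, (u x - f x) ^ 2

/-- `u` is a step function with finitely many jumps on `(a,b)`. -/
def IsStep (a b : ℝ) (u : ℝ → ℝ) : Prop :=
  ∃ (s : Finset ℝ) (c : ℝ) (J : ℝ → ℝ),
    (∀ p ∈ s, p ∈ Set.Ioo a b ∧ J p ≠ 0) ∧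
    ∀ x ∈ Set.Ioo a b, u x = c + ∑ p ∈ s, (if p ≤ x then J p else 0)

/-- The set of jump (discontinuity) points of `u` inside `(a,b)`. -/
def jumpSet (a b : ℝ) (u : ℝ → ℝ) : Set ℝ :=
  {x ∈ Set.Ioo a b | ¬ ContinuousAt u x}

/-- The limit functional `JF(α,β,f,(a,b),u) = α·#jumps + β∫(u-f)²`. -/
noncomputable def JF (α β : ℝ) (f : ℝ → ℝ) (a b : ℝ) (u : ℝ → ℝ) : ℝ :=
  α * ((jumpSet a b u).ncard : ℝ) + β * ∫ x in Set.Ioo a b, (u x - f x) ^ 2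

/-- Strict convergence in `BV((a,b))`: `L¹` convergence plus convergence of
total variations. -/
def StrictBV (useq : ℕ → ℝ → ℝ) (u : ℝ → ℝ) (a b : ℝ) : Prop :=
  Tendsto (fun k => ∫ x in Set.Ioo a b, |useq k x - u x|) atTop (nhds 0) ∧
  Tendsto (fun k => eVariationOn (useq k) (Set.Ioo a b)) atTop
    (nhds (eVariationOn u (Set.Ioo a b)))

/-- Locally strict convergence in `BV_loc(ℝ)`: strict convergence on every bounded
interval whose endpoints are not jump points of the limit. -/
def LocStrictBV (useq : ℕ → ℝ → ℝ) (u : ℝ → ℝ) : Prop :=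
  ∀ a b : ℝ, a < b → ContinuousAt u a → ContinuousAt u b → StrictBV useq u a b

/-- `S(x) = 2⌊(x+1)/2⌋`. -/
noncomputable def stairS (x : ℝ) : ℝ := 2 * (⌊(x + 1) / 2⌋ : ℤ)

/-- The canonical `(H,V)`-staircase `S_{H,V}(x) = V·S(x/H)`. -/
noncomputable def canStair (H V : ℝ) (x : ℝ) : ℝ := V * stairS (x / H)

/-- Oblique translations of the canonical `(H,V)`-staircase. -/
def Obl (H V : ℝ) (v : ℝ → ℝ) : Prop :=
  ∃ τ ∈ Set.Icc (-1 : ℝ) 1, ∀ x, v x = canStair H V (x - H * τ) + V * τ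

/-- Graph translations of horizontal type of the canonical `(H,V)`-staircase. -/
def Orz (H V : ℝ) (v : ℝ → ℝ) : Prop :=
  ∃ τ ∈ Set.Icc (-1 : ℝ) 1, ∀ x, v x = canStair H V (x - H * τ)

/-- `μ_n(β,L,M)`: minimum of the rescaled functional with affine forcing term. -/
noncomputable def muDisc (n : ℕ) (β L M : ℝ) : ℝ :=
  sInf ((fun u => RDPMF n β (fun x => M * x) 0 L u) '' {u | IsPC (dlt n) u})

/-- `μ*_n(β,L,M)`: same as `μ_n` but with boundary conditions `u(0)=0`, `u(L^*)=ML`. -/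
noncomputable def muDiscStar (n : ℕ) (β L M : ℝ) : ℝ :=
  sInf ((fun u => RDPMF n β (fun x => M * x) 0 L u) ''
    {u | IsPC (dlt n) u ∧ u 0 = 0 ∧ u (highGrid (dlt n) L - dlt n) = M * L})

/-- `μ(α,β,L,M)`: minimum of the limit functional with affine forcing term. -/
noncomputable def muLim (α β L M : ℝ) : ℝ :=
  sInf ((fun u => JF α β (fun x => M * x) 0 L u) '' {u | IsStep 0 L u})

/-- `μ*(α,β,L,M)`: same as `μ` but with boundary values `u(0⁺)=0`, `u(L⁻)=ML`. -/
noncomputable def muLimStar (α β L M : ℝ) : ℝ :=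
  sInf ((fun u => JF α β (fun x => M * x) 0 L u) ''
    {u | IsStep 0 L u ∧ Tendsto u (nhdsWithin 0 (Set.Ioi 0)) (nhds 0) ∧
         Tendsto u (nhdsWithin L (Set.Iio L)) (nhds (M * L))})

/-- `u` and `v` have the same boundary values `u(a⁺)=v(a⁺)`, `u(b⁻)=v(b⁻)`. -/
def SameBdry (a b : ℝ) (u v : ℝ → ℝ) : Prop :=
  (∀ c : ℝ, Tendsto v (nhdsWithin a (Set.Ioi a)) (nhds c) →
     Tendsto u (nhdsWithin a (Set.Ioi a)) (nhds c)) ∧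
  (∀ c : ℝ, Tendsto v (nhdsWithin b (Set.Iio b)) (nhds c) →
     Tendsto u (nhdsWithin b (Set.Iio b)) (nhds c))

/-- `v` is a local minimizer for `JF(α,β,f,(a,b),·)` among step functions with the
same boundary values. -/
def IsLocalMinJF (α β : ℝ) (f : ℝ → ℝ) (a b : ℝ) (v : ℝ → ℝ) : Prop :=
  IsStep a b v ∧
  ∀ u : ℝ → ℝ, IsStep a b u → SameBdry a b u v → JF α β f a b v ≤ JF α β f a b u

/-- `v` is an entire local minimizer for `JF(α,β,f,·,·)`. -/
def IsEntireLocalMinJF (α β : ℝ) (f : ℝ → ℝ) (v : ℝ → ℝ) : Prop :=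
  ∀ a b : ℝ, a < b → IsLocalMinJF α β f a b v

/-- `v` is a local minimizer for `RDPMF_n(β,f,(a,b),·)` among piecewise constant
functions with the same boundary values. -/
def IsLocalMinRDPMF (n : ℕ) (β : ℝ) (f : ℝ → ℝ) (a b : ℝ) (v : ℝ → ℝ) : Prop :=
  IsPC (dlt n) v ∧
  ∀ u : ℝ → ℝ, IsPC (dlt n) u →
    u (lowGrid (dlt n) a) = v (lowGrid (dlt n) a) →
    u (highGrid (dlt n) b - dlt n) = v (highGrid (dlt n) b - dlt n) →
    RDPMF n β f a b v ≤ RDPMF n β f a b u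

/-!
A minimizer is determined by its values on the cells, and on the cells the functional is, up to
positive factors, a sum of a jump cost, which at the scale `ω(n)` tends to `4 / 3` for every fixed
nonzero jump, and of a quadratic fidelity to the averages of `f`, which blow up to the line
`y ↦ M y` with `M = f' x_∞`. Replacing the blown-up minimizer between two cells by a staircase
centred on this line, at the price of two extra jumps, bounds its energy on bounded intervals; this
yields local bounds, bounds on the distances between consecutive jumps, and convergence of the
plateaus.

Moving a plateau up or down does not change the limit cost, so each plateau is at the height of the
line above its midpoint. Moving a jump does not change it either, so each jump is at the point where
the line crosses the middle of the jump. Hence all distances between consecutive jumps have the same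
limit `ℓ`, and comparison with staircases of other steps over long intervals shows that `ℓ`
minimizes the mean energy `(4 / 3 + β M² ℓ³ / 12) / ℓ`, so `ℓ = 2H`. Only the height of the plateau
over the origin remains free; it converges along a subsequence, and its limit selects the oblique
translation. For `M = 0` long steps cost nothing, the energy per unit length vanishes, and the
blow-ups tend to `0`.
-/

/-! ### The discrete problem -/

/-- Admissible jump costs: even functions of the jump height, nondecreasing in its modulus. The
costs `h ↦ log (1 + (h/δ)²) / log n` of the rescaled functionals have these properties. -/
structure IsJumpCost (g : ℝ → ℝ) : Prop where
  nonneg : ∀ h, 0 ≤ g h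
  map_zero : g 0 = 0
  mono : ∀ ⦃h h'⦄, |h| ≤ |h'| → g h ≤ g h'

/-- Energy of the cell values `W` on the cells `A, …, B - 1`, with jump cost `g`, forcing term `a`
and fidelity weight `κ`. The increment from the last cell to the cell `B` is included. -/
noncomputable def energy (g : ℝ → ℝ) (κ : ℝ) (a W : ℕ → ℝ) (A B : ℕ) : ℝ :=
  ∑ i ∈ Finset.Ico A B, (g (W (i + 1) - W i) + κ * (W i - a i) ^ 2)

/-- Local minimality on the cells `0, …, N`: between any two cells, `W` has the least energy among
the sequences with the same values on these two cells. -/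
def IsEnergyLocalMin (g : ℝ → ℝ) (κ : ℝ) (a W : ℕ → ℝ) (N : ℕ) : Prop :=
  ∀ ⦃A B⦄, A < B → B ≤ N → ∀ V : ℕ → ℝ, V A = W A → V B = W B →
    energy g κ a W A B ≤ energy g κ a V A B

lemma IsJumpCost.map_neg {g : ℝ → ℝ} (hg : IsJumpCost g) (h : ℝ) : g (-h) = g h :=
  le_antisymm (hg.mono (by simp)) (hg.mono (by simp))

lemma IsJumpCost.map_sub_comm {g : ℝ → ℝ} (hg : IsJumpCost g) (x y : ℝ) :
    g (x - y) = g (y - x) := by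
  rw [← hg.map_neg, neg_sub]

section Energy

variable {g : ℝ → ℝ} {κ : ℝ}

lemma energy_add (g : ℝ → ℝ) (κ : ℝ) (a W : ℕ → ℝ) {A B C : ℕ} (hAB : A ≤ B) (hBC : B ≤ C) :
    energy g κ a W A B + energy g κ a W B C = energy g κ a W A C :=
  Finset.sum_Ico_consecutive _ hAB hBC

lemma energy_succ (g : ℝ → ℝ) (κ : ℝ) (a W : ℕ → ℝ) (A : ℕ) :
    energy g κ a W A (A + 1) = g (W (A + 1) - W A) + κ * (W A - a A) ^ 2 := by
  simp [energy]

lemma energy_congr {a V W : ℕ → ℝ} {A B : ℕ} (h : ∀ i, A ≤ i → i ≤ B → V i = W i) :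
    energy g κ a V A B = energy g κ a W A B := by
  refine Finset.sum_congr rfl fun i hi => ?_
  rw [Finset.mem_Ico] at hi
  rw [h i hi.1 (by omega), h (i + 1) (by omega) (by omega)]

lemma energy_neg (hg : IsJumpCost g) (a V : ℕ → ℝ) (A B : ℕ) :
    energy g κ (-a) (-V) A B = energy g κ a V A B := by
  refine Finset.sum_congr rfl fun i _ => ?_
  rw [← hg.map_neg (V (i + 1) - V i)]
  simp only [Pi.neg_apply]
  ring_nf

lemma energy_mono (hg : IsJumpCost g) (hκ : 0 ≤ κ) (a W : ℕ → ℝ) {A A' B B' : ℕ}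
    (hA : A' ≤ A) (hB : B ≤ B') : energy g κ a W A B ≤ energy g κ a W A' B' :=
  Finset.sum_le_sum_of_subset_of_nonneg (Finset.Ico_subset_Ico hA hB)
    fun _ _ _ => add_nonneg (hg.nonneg _) (mul_nonneg hκ (sq_nonneg _))

end Energy

namespace IsEnergyLocalMin

variable {g : ℝ → ℝ} {κ : ℝ} {a W : ℕ → ℝ} {N : ℕ}

lemma neg (hg : IsJumpCost g) (hW : IsEnergyLocalMin g κ a W N) :
    IsEnergyLocalMin g κ (-a) (-W) N := by
  intro A B hAB hB V hA hB'
  rw [energy_neg hg, ← neg_neg V, energy_neg hg]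
  exact hW hAB hB (-V) (by simp [hA]) (by simp [hB'])

/-- All stationarity conditions come from this comparison: the competitor is `W` translated
vertically by `t` on the cells `p + 1, …, q`. -/
lemma le_add_shift (hW : IsEnergyLocalMin g κ a W N) {p q : ℕ} (hpq : p < q) (hq : q + 1 ≤ N)
    (t : ℝ) :
    g (W (p + 1) - W p) + g (W (q + 1) - W q) ≤
      g (W (p + 1) - W p + t) + g (W (q + 1) - W q - t) +
        κ * ∑ i ∈ Finset.Ico (p + 1) (q + 1), (2 * t * (W i - a i) + t ^ 2) := by
  set V : ℕ → ℝ := fun i => if p < i ∧ i ≤ q then W i + t else W i with hV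
  have V_in {i : ℕ} (hi : p < i) (hi' : i ≤ q) : V i = W i + t := by simp [hV, hi, hi']
  have V_left : V p = W p := by simp [hV]
  have V_right : V (q + 1) = W (q + 1) := by simp [hV]
  have interior : energy g κ a V (p + 1) q = energy g κ a W (p + 1) q +
      κ * ∑ i ∈ Finset.Ico (p + 1) q, (2 * t * (W i - a i) + t ^ 2) := by
    rw [energy, energy, Finset.mul_sum, ← Finset.sum_add_distrib]
    refine Finset.sum_congr rfl fun i hi => ?_
    rw [Finset.mem_Ico] at hi
    rw [V_in (by omega) (by omega), V_in (by omega) (by omega), add_sub_add_right_eq_sub]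
    ring
  have hmin := hW (by omega) hq V V_left V_right
  have split (U : ℕ → ℝ) : energy g κ a U p (q + 1) =
      energy g κ a U p (p + 1) + energy g κ a U (p + 1) q + energy g κ a U q (q + 1) := by
    rw [energy_add g κ a U (by omega) hpq, energy_add g κ a U hpq.le (by omega)]
  rw [split, split, interior] at hmin
  simp only [energy_succ, V_left, V_right, V_in hpq le_rfl, V_in (Nat.lt_succ_self p) hpq] at hmin
  rw [Finset.sum_Ico_succ_top (by omega),
    show W (p + 1) - W p + t = W (p + 1) + t - W p by ring,
    show W (q + 1) - W q - t = W (q + 1) - (W q + t) by ring]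
  nlinarith [hmin]

/-- Maximum principle: truncating from above lowers the energy. -/
lemma le_of_boundary_le (hg : IsJumpCost g) (hκ : 0 < κ) (hW : IsEnergyLocalMin g κ a W N)
    {A B : ℕ} (hB : B ≤ N) {T : ℝ} (hWA : W A ≤ T) (hWB : W B ≤ T)
    (ha : ∀ i, A < i → i < B → a i ≤ T) : ∀ i, A ≤ i → i ≤ B → W i ≤ T := by
  by_contra! hcon
  obtain ⟨j, hAj, hjB, hj⟩ := hcon
  replace hAj : A < j := lt_of_le_of_ne hAj (by rintro rfl; linarith)
  replace hjB : j < B := lt_of_le_of_ne hjB (by rintro rfl; linarith)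
  have cost_le (i : ℕ) : g (min (W (i + 1)) T - min (W i) T) ≤ g (W (i + 1) - W i) :=
    hg.mono (by simpa using abs_min_sub_min_le_max (W (i + 1)) T (W i) T)
  have sq_le (i : ℕ) (hi : i ∈ Finset.Ico A B) : (min (W i) T - a i) ^ 2 ≤ (W i - a i) ^ 2 := by
    rw [Finset.mem_Ico] at hi
    rcases le_total (W i) T with h | h
    · rw [min_eq_left h]
    · rw [min_eq_right h]
      rcases hi.1.eq_or_lt with rfl | hAi
      · rw [le_antisymm hWA h]
      · nlinarith [ha i hAi hi.2]
  have sq_lt : (min (W j) T - a j) ^ 2 < (W j - a j) ^ 2 := by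
    rw [min_eq_right hj.le]
    nlinarith [ha j hAj hjB]
  refine (hW (hAj.trans hjB) hB (fun i => min (W i) T) (min_eq_left hWA)
    (min_eq_left hWB)).not_gt ?_
  refine Finset.sum_lt_sum (fun i hi => ?_) ⟨j, Finset.mem_Ico.mpr ⟨hAj.le, hjB⟩, ?_⟩
  · exact add_le_add (cost_le i) (mul_le_mul_of_nonneg_left (sq_le i hi) hκ.le)
  · exact add_lt_add_of_le_of_lt (cost_le j) (mul_lt_mul_of_pos_left sq_lt hκ)

lemma abs_le_of_boundary_le (hg : IsJumpCost g) (hκ : 0 < κ) (hW : IsEnergyLocalMin g κ a W N)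
    {A B : ℕ} (hB : B ≤ N) {T : ℝ} (hWA : |W A| ≤ T) (hWB : |W B| ≤ T)
    (ha : ∀ i, A < i → i < B → |a i| ≤ T) : ∀ i, A ≤ i → i ≤ B → |W i| ≤ T := by
  have upper := hW.le_of_boundary_le hg hκ hB (abs_le.mp hWA).2 (abs_le.mp hWB).2
    fun i hi hi' => (abs_le.mp (ha i hi hi')).2
  have lower := (hW.neg hg).le_of_boundary_le hg hκ hB (neg_le.mp (abs_le.mp hWA).1)
    (neg_le.mp (abs_le.mp hWB).1) fun i hi hi' => neg_le.mp (abs_le.mp (ha i hi hi')).1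
  exact fun i hi hi' => abs_le.mpr ⟨neg_le.mp (lower i hi hi'), upper i hi hi'⟩

lemma energy_le_splice (hg : IsJumpCost g) (hW : IsEnergyLocalMin g κ a W N) (V : ℕ → ℝ) {A L : ℕ}
    (hN : A + 1 + (L + 1) ≤ N) :
    energy g κ a W A (A + 1 + (L + 1)) ≤ κ * (W A - a A) ^ 2 + g (V 0 - W A) +
      energy g κ (fun j => a (A + 1 + j)) V 0 (L + 1) + g (V L - W (A + 1 + (L + 1))) := by
  set U : ℕ → ℝ := fun i => if A < i ∧ i < A + 1 + (L + 1) then V (i - (A + 1)) else W i with hU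
  have U_left : U A = W A := by simp [hU]
  have U_right : U (A + 1 + (L + 1)) = W (A + 1 + (L + 1)) := by simp [hU]
  have U_in (j : ℕ) (hj : j ≤ L) : U (A + 1 + j) = V j := by
    simp [hU, show A < A + 1 + j by omega, hj]
  have head : energy g κ a U A (A + 1) = g (V 0 - W A) + κ * (W A - a A) ^ 2 := by
    rw [energy_succ, U_left, ← U_in 0 L.zero_le, add_zero]
  have last : energy g κ a U (A + 1 + L) (A + 1 + (L + 1)) ≤
      g (V L - W (A + 1 + (L + 1))) +
        energy g κ (fun j => a (A + 1 + j)) V L (L + 1) := by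
    rw [← add_assoc, energy_succ, energy_succ, U_in L le_rfl, add_assoc, U_right,
      hg.map_sub_comm]
    linarith [hg.nonneg (V (L + 1) - V L)]
  have interior : energy g κ a U (A + 1) (A + 1 + L) =
      energy g κ (fun j => a (A + 1 + j)) V 0 L := by
    rw [energy, Finset.sum_Ico_eq_sum_range, add_tsub_cancel_left, energy,
      Nat.Ico_zero_eq_range]
    refine Finset.sum_congr rfl fun j hj => ?_
    rw [Finset.mem_range] at hj
    rw [add_assoc (A + 1), U_in j hj.le, U_in (j + 1) hj]
  refine (hW (by omega) hN U U_left U_right).trans ?_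
  rw [← energy_add g κ a U (by omega : A ≤ A + 1) (by omega),
    ← energy_add g κ a U (by omega : A + 1 ≤ A + 1 + L) (by omega),
    ← energy_add g κ (fun j => a (A + 1 + j)) V L.zero_le (Nat.le_succ L), head, interior]
  linarith

end IsEnergyLocalMin

/-! ### Comparison with staircases -/

/-- The staircase with steps of `m` cells centred on the graph of the affine sequence
`j ↦ c + s * j`: its value on a step is the mean of the affine sequence over this step. -/
noncomputable def centredStairs (c s : ℝ) (m j : ℕ) : ℝ :=
  c + s * (m * (j / m : ℕ) + ((m : ℝ) - 1) / 2)

section CentredStairs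

variable {c s : ℝ} {m : ℕ}

lemma centredStairs_mul_add {b r : ℕ} (hr : r < m) :
    centredStairs c s m (b * m + r) = c + s * (m * b + ((m : ℝ) - 1) / 2) := by
  rw [centredStairs, mul_comm b m, Nat.mul_add_div (by omega), Nat.div_eq_of_lt hr, add_zero]

lemma abs_centredStairs_le {P j : ℕ} (hj : j < P * m) {C : ℝ}
    (hC : ∀ t ∈ Icc (0 : ℝ) (P * m), |c + s * t| ≤ C) : |centredStairs c s m j| ≤ C := by
  have hm : 0 < m := Nat.pos_of_mul_pos_left (Nat.zero_lt_of_lt hj)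
  have step_le : ((j / m : ℕ) : ℝ) + 1 ≤ P := by
    exact_mod_cast (Nat.div_lt_iff_lt_mul hm).mpr hj
  have hm' : (1 : ℝ) ≤ m := by exact_mod_cast hm
  have : (0 : ℝ) ≤ m * ((j / m : ℕ) : ℝ) := by positivity
  exact hC _ ⟨by linarith, by nlinarith⟩

lemma sum_range_cost_centredStairs {g : ℝ → ℝ} (hg : g 0 = 0) (hm : 0 < m) (b : ℕ) :
    ∑ r ∈ Finset.range m,
      g (centredStairs c s m (b * m + r + 1) - centredStairs c s m (b * m + r)) = g (s * m) := by
  obtain ⟨l, rfl⟩ : ∃ l, m = l + 1 := ⟨m - 1, by omega⟩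
  have flat (r : ℕ) (hr : r ∈ Finset.range l) :
      g (centredStairs c s (l + 1) (b * (l + 1) + r + 1) -
        centredStairs c s (l + 1) (b * (l + 1) + r)) = 0 := by
    rw [Finset.mem_range] at hr
    rw [add_assoc, centredStairs_mul_add (by omega), centredStairs_mul_add (by omega), sub_self, hg]
  rw [Finset.sum_range_succ, Finset.sum_eq_zero flat, zero_add,
    show b * (l + 1) + l + 1 = (b + 1) * (l + 1) + 0 by ring,
    centredStairs_mul_add (by omega), centredStairs_mul_add (by omega)]
  push_cast
  ring_nf

lemma sum_range_sq_affine (x d : ℝ) (m : ℕ) :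
    ∑ r ∈ Finset.range m, (x + d * r) ^ 2 =
      m * (x + d * ((m : ℝ) - 1) / 2) ^ 2 + d ^ 2 * ((m : ℝ) * ((m : ℝ) ^ 2 - 1)) / 12 := by
  induction m with
  | zero => simp
  | succ m ih => rw [Finset.sum_range_succ, ih]; push_cast; ring

lemma sum_range_sq_centredStairs_sub_le {a : ℕ → ℝ} {b : ℕ} {η : ℝ}
    (ha : ∀ r < m, |a (b * m + r) - (c + s * (b * m + r : ℕ))| ≤ η) :
    ∑ r ∈ Finset.range m, (centredStairs c s m (b * m + r) - a (b * m + r)) ^ 2 ≤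
      m * (s ^ 2 * m ^ 2 / 12 + 2 * η * |s| * m + η ^ 2) := by
  have term_le (r : ℕ) (hr : r ∈ Finset.range m) :
      (centredStairs c s m (b * m + r) - a (b * m + r)) ^ 2 ≤
        (s * (((m : ℝ) - 1) / 2) + (-s) * r) ^ 2 + (2 * η * |s| * m + η ^ 2) := by
    rw [Finset.mem_range] at hr
    have hr' : (r : ℝ) + 1 ≤ m := by exact_mod_cast hr
    have : (0 : ℝ) ≤ r := r.cast_nonneg
    set e := a (b * m + r) - (c + s * (b * m + r : ℕ)) with he
    set X := s * (((m : ℝ) - 1) / 2) + (-s) * r with hX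
    have hXe : centredStairs c s m (b * m + r) - a (b * m + r) = X - e := by
      rw [centredStairs_mul_add hr, he, hX]
      push_cast
      ring
    have X_le : |X| ≤ |s| * m := by
      rw [show X = s * (((m : ℝ) - 1) / 2 - r) by rw [hX]; ring, abs_mul]
      refine mul_le_mul_of_nonneg_left (abs_le.mpr ⟨?_, ?_⟩) (abs_nonneg s) <;> linarith
    have cross : -(X * e) ≤ |s| * m * η := by
      refine (neg_le_abs _).trans ((abs_mul X e).trans_le ?_)
      exact mul_le_mul X_le (ha r hr) (abs_nonneg _) (by positivity)
    have e_sq : e ^ 2 ≤ η ^ 2 := sq_le_sq' (by linarith [(abs_le.mp (ha r hr)).1])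
      (abs_le.mp (ha r hr)).2
    rw [hXe]
    nlinarith
  refine (Finset.sum_le_sum term_le).trans ?_
  rw [Finset.sum_add_distrib, sum_range_sq_affine, Finset.sum_const, Finset.card_range,
    nsmul_eq_mul]
  have : 0 ≤ s ^ 2 * (m : ℝ) := by positivity
  nlinarith

lemma energy_centredStairs_le {g : ℝ → ℝ} (hg : g 0 = 0) {κ : ℝ} (hκ : 0 ≤ κ) {a : ℕ → ℝ} {η : ℝ}
    (hm : 0 < m) {P : ℕ} (ha : ∀ j < P * m, |a j - (c + s * j)| ≤ η) :
    energy g κ a (centredStairs c s m) 0 (P * m) ≤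
      P * (g (s * m) + κ * m * (s ^ 2 * m ^ 2 / 12 + 2 * η * |s| * m + η ^ 2)) := by
  induction P with
  | zero => simp [energy]
  | succ P ih =>
    rw [Nat.succ_mul] at ha ⊢
    have step : energy g κ a (centredStairs c s m) (P * m) (P * m + m) ≤
        g (s * m) + κ * (m * (s ^ 2 * m ^ 2 / 12 + 2 * η * |s| * m + η ^ 2)) := by
      rw [energy, Finset.sum_Ico_eq_sum_range, add_tsub_cancel_left, Finset.sum_add_distrib,
        ← Finset.mul_sum, sum_range_cost_centredStairs hg hm]
      gcongr
      exact sum_range_sq_centredStairs_sub_le fun r hr => ha _ (by omega)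
    rw [← energy_add g κ a _ (Nat.zero_le (P * m)) (Nat.le_add_right _ m)]
    have := ih fun j hj => ha j (by omega)
    push_cast
    linarith

lemma IsEnergyLocalMin.energy_le_of_near_affine {g : ℝ → ℝ} (hg : IsJumpCost g) {κ : ℝ}
    (hκ : 0 ≤ κ) {a W : ℕ → ℝ} {N : ℕ} (hW : IsEnergyLocalMin g κ a W N) {η C X : ℝ} {A P : ℕ}
    (hm : 0 < m) (hP : 0 < P) (hN : A + 1 + P * m ≤ N)
    (ha : ∀ j < P * m, |a (A + 1 + j) - (c + s * j)| ≤ η)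
    (hC : ∀ t ∈ Icc (0 : ℝ) (P * m), |c + s * t| ≤ C)
    (hA : ∀ x, |x| ≤ C → g (x - W A) ≤ X)
    (hB : ∀ x, |x| ≤ C → g (x - W (A + 1 + P * m)) ≤ X) :
    energy g κ a W A (A + 1 + P * m) ≤ κ * (W A - a A) ^ 2 + 2 * X +
      P * (g (s * m) + κ * m * (s ^ 2 * m ^ 2 / 12 + 2 * η * |s| * m + η ^ 2)) := by
  obtain ⟨L, hL⟩ : ∃ L, P * m = L + 1 := Nat.exists_eq_succ_of_ne_zero (Nat.mul_pos hP hm).ne'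
  have stairs := energy_centredStairs_le (a := fun j => a (A + 1 + j)) hg.map_zero hκ hm ha
  have left := hA _ (abs_centredStairs_le (m := m) (j := 0) (by omega) hC)
  have right := hB _ (abs_centredStairs_le (m := m) (j := L) (by omega) hC)
  rw [hL] at hN stairs right ⊢
  linarith [hW.energy_le_splice hg (centredStairs c s m) hN]

end CentredStairs

/-! ### Blow-up sequences -/

/-- A sequence of discrete problems: at stage `n` there are cells `0, …, N n` of length `δ n`,
centred at the cell `k n`, with values `W n i` and forcing terms `a n i`. The jump cost is `g n`,
and increments of modulus at least `θ n` are regarded as jumps. -/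
structure CellSequence where
  β : ℝ
  M : ℝ
  δ : ℕ → ℝ
  θ : ℕ → ℝ
  g : ℕ → ℝ → ℝ
  k : ℕ → ℕ
  N : ℕ → ℕ
  a : ℕ → ℕ → ℝ
  W : ℕ → ℕ → ℝ

namespace CellSequence

variable (D : CellSequence)

/-- Position of the left endpoint of the cell `i`, with the origin at the cell `k n`. -/
noncomputable def pos (n i : ℕ) : ℝ := ((i : ℝ) - D.k n) * D.δ n

/-- Index of the cell containing the position `x`; meaningful for `-k n * δ n ≤ x`. -/
noncomputable def cell (n : ℕ) (x : ℝ) : ℕ := ⌊(D.k n : ℝ) + x / D.δ n⌋₊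

/-- Increment of `W n` from the cell `i` to the next one. -/
def incr (n i : ℕ) : ℝ := D.W n (i + 1) - D.W n i

/-- The increment after the cell `i` is large enough to count as a jump. -/
def IsJump (n i : ℕ) : Prop := D.θ n ≤ |D.incr n i|

/-- The energy of `W n` on the cells `A, …, B - 1`. -/
noncomputable def E (n A B : ℕ) : ℝ := energy (D.g n) (D.β * D.δ n) (D.a n) (D.W n) A B

/-- Limit energy of one step of length `ℓ` of a staircase centred on the graph of `y ↦ M * y`. -/
noncomputable def stepEnergy (ℓ : ℝ) : ℝ := 4 / 3 + D.β * D.M ^ 2 * ℓ ^ 3 / 12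

/-- The energy of every bounded window is eventually at most `ρ` times its length, up to the
fidelity of its first cell and to an error `X` that is the same for all windows. -/
def EnergyBound (ρ X : ℝ) : Prop :=
  ∀ R, ∀ᶠ n in atTop, ∀ A B, A < B → |D.pos n A| ≤ R → |D.pos n B| ≤ R →
    D.E n A B ≤ D.β * D.δ n * (D.W n A - D.a n A) ^ 2 + ρ * (D.pos n B - D.pos n A) + X

lemma pos_sub_pos (n i j : ℕ) : D.pos n j - D.pos n i = ((j : ℝ) - i) * D.δ n := by
  unfold pos; ring

lemma pos_succ (n i : ℕ) : D.pos n (i + 1) = D.pos n i + D.δ n := by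
  unfold pos; push_cast; ring

lemma pos_k (n : ℕ) : D.pos n (D.k n) = 0 := by
  simp [pos]

variable {n : ℕ}

lemma strictMono_pos (hδ : 0 < D.δ n) : StrictMono (D.pos n) :=
  strictMono_nat_of_lt_succ fun i => by rw [pos_succ]; linarith

lemma abs_pos_le (hδ : 0 < D.δ n) {A i B : ℕ} {R : ℝ} (hAi : A ≤ i) (hiB : i ≤ B)
    (hA : |D.pos n A| ≤ R) (hB : |D.pos n B| ≤ R) : |D.pos n i| ≤ R :=
  abs_le.mpr ⟨(abs_le.mp hA).1.trans ((D.strictMono_pos hδ).monotone hAi),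
    ((D.strictMono_pos hδ).monotone hiB).trans (abs_le.mp hB).2⟩

lemma pos_cell_le_and_lt (hδ : 0 < D.δ n) {x : ℝ} (hx : -x ≤ D.k n * D.δ n) :
    D.pos n (D.cell n x) ≤ x ∧ x < D.pos n (D.cell n x) + D.δ n := by
  have nonneg : 0 ≤ (D.k n : ℝ) + x / D.δ n := by
    rw [← mul_nonneg_iff_of_pos_right hδ, add_mul, div_mul_cancel₀ _ hδ.ne']
    linarith
  have hx' : x = x / D.δ n * D.δ n := by field_simp
  have floor_le := Nat.floor_le nonneg
  have lt_floor := Nat.lt_floor_add_one ((D.k n : ℝ) + x / D.δ n)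
  constructor <;> unfold pos cell <;> nlinarith

lemma exists_subdivision (hδ : 0 < D.δ n) {x ℓ : ℝ} (hx : D.δ n ≤ x) (hxℓ : x ≤ ℓ) {A B : ℕ}
    (hAB : A ≤ B) :
    ∃ m q : ℕ, 0 < m ∧ D.δ n * m ≤ ℓ ∧ ℓ - x ≤ D.δ n * m ∧ q * m ≤ B - A ∧
      B ≤ A + 1 + (q + 1) * m ∧ D.pos n (A + 1 + (q + 1) * m) ≤ D.pos n B + 2 * ℓ := by
  have hδℓ := hx.trans hxℓ
  have m_le : D.δ n * (⌊ℓ / D.δ n⌋₊ : ℕ) ≤ ℓ := by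
    rw [mul_comm, ← le_div_iff₀ hδ]
    exact Nat.floor_le (div_nonneg (hδ.le.trans hδℓ) hδ.le)
  have lt_m := (div_lt_iff₀ hδ).mp (Nat.lt_floor_add_one (ℓ / D.δ n))
  have hm : 0 < ⌊ℓ / D.δ n⌋₊ := Nat.floor_pos.mpr ((one_le_div hδ).mpr hδℓ)
  set m := ⌊ℓ / D.δ n⌋₊
  have q_mul_le : (B - A) / m * m ≤ B - A := Nat.div_mul_le_self _ _
  have lt_q_mul : B - A < (B - A) / m * m + m := Nat.lt_div_mul_add hm
  set q := (B - A) / m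
  refine ⟨m, q, hm, m_le, by linarith, q_mul_le, by rw [add_mul]; omega, ?_⟩
  have hle : ((A + 1 + (q + 1) * m : ℕ) : ℝ) ≤ B + m + 1 := by
    exact_mod_cast (by rw [add_mul]; omega)
  have := D.pos_sub_pos n B (A + 1 + (q + 1) * m)
  nlinarith

end CellSequence

/-- A sequence of discrete local minimizers at vanishing scale, with the properties of the blow-ups
that the analysis needs: the cells exhaust the real line, the forcing term is asymptotic to the
linear function of slope `M`, a jump costs asymptotically at least `4 / 3` and a bounded one at most
`4 / 3`, a jump from any value of `W n` to a bounded one has bounded cost, and the total height of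
the increments that are not jumps is controlled by a vanishing multiple of their length and cost. -/
structure BlowupSequence extends CellSequence where
  β_pos : 0 < β
  eventually_δ_pos : ∀ᶠ n in atTop, 0 < δ n
  tendsto_δ : Tendsto δ atTop (nhds 0)
  isJumpCost : ∀ᶠ n in atTop, IsJumpCost (g n)
  isEnergyLocalMin : ∀ᶠ n in atTop, IsEnergyLocalMin (g n) (β * δ n) (a n) (W n) (N n)
  exhausting : ∀ R, ∀ᶠ n in atTop, R ≤ k n * δ n ∧ R ≤ toCellSequence.pos n (N n)
  forcing_near : ∀ R, ∀ ⦃η⦄, 0 < η → ∀ᶠ n in atTop, ∀ i, |toCellSequence.pos n i| ≤ R →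
    |a n i - M * toCellSequence.pos n i| ≤ η
  cost_sub_le : ∀ C, ∀ᶠ n in atTop, ∀ i ≤ N n, ∀ x, |x| ≤ C → g n (x - W n i) ≤ 5
  cost_le : ∀ C, ∀ ⦃η⦄, 0 < η → ∀ᶠ n in atTop, ∀ h, |h| ≤ C → g n h ≤ 4 / 3 + η
  le_cost : ∀ ⦃η⦄, 0 < η → ∀ᶠ n in atTop, ∀ h, θ n ≤ |h| → 4 / 3 - η ≤ g n h
  abs_le_of_small : ∀ ⦃η⦄, 0 < η → ∀ᶠ n in atTop, ∀ h, |h| < θ n → |h| ≤ η * δ n + η * g n h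

namespace BlowupSequence

variable (D : BlowupSequence)

lemma eventually_δ_lt {x : ℝ} (hx : 0 < x) : ∀ᶠ n in atTop, D.δ n < x :=
  D.tendsto_δ.eventually_lt_const hx

lemma eventually_regular (R : ℝ) : ∀ᶠ n in atTop, 0 < D.δ n ∧ IsJumpCost (D.g n) ∧
    IsEnergyLocalMin (D.g n) (D.β * D.δ n) (D.a n) (D.W n) (D.N n) ∧
    ∀ i, |D.pos n i| ≤ R → i + 1 ≤ D.N n := by
  filter_upwards [D.eventually_δ_pos, D.isJumpCost, D.isEnergyLocalMin, D.exhausting (R + 1),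
    D.eventually_δ_lt one_pos] with n hδ hg hW hR hδ1
  refine ⟨hδ, hg, hW, fun i hi => (D.strictMono_pos hδ).le_iff_le.mp ?_⟩
  rw [D.pos_succ]
  linarith [(abs_le.mp hi).2]

lemma stepEnergy_pos {ℓ : ℝ} (hℓ : 0 < ℓ) : 0 < D.stepEnergy ℓ := by
  have := D.β_pos
  unfold CellSequence.stepEnergy
  positivity

/-! ### Energy bounds -/

lemma exists_stepEnergy_perturbation {ℓ ρ : ℝ} (hℓ : 0 < ℓ) (hρ : D.stepEnergy ℓ / ℓ < ρ) :
    ∃ x, 0 < x ∧ x < ℓ ∧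
      4 / 3 + x + D.β * ℓ * (D.M ^ 2 * ℓ ^ 2 / 12 + 2 * x * |D.M| * ℓ + x ^ 2) <
        min (D.stepEnergy ℓ + 1) (ρ * (ℓ - x)) := by
  have hcont : Continuous fun x : ℝ => min (D.stepEnergy ℓ + 1) (ρ * (ℓ - x)) -
      (4 / 3 + x + D.β * ℓ * (D.M ^ 2 * ℓ ^ 2 / 12 + 2 * x * |D.M| * ℓ + x ^ 2)) := by
    fun_prop
  have pos_at_zero : 0 < min (D.stepEnergy ℓ + 1) (ρ * (ℓ - 0)) -
      (4 / 3 + 0 + D.β * ℓ * (D.M ^ 2 * ℓ ^ 2 / 12 + 2 * 0 * |D.M| * ℓ + 0 ^ 2)) := by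
    rw [div_lt_iff₀ hℓ] at hρ
    have : 4 / 3 + 0 + D.β * ℓ * (D.M ^ 2 * ℓ ^ 2 / 12 + 2 * 0 * |D.M| * ℓ + 0 ^ 2) =
        D.stepEnergy ℓ := by unfold CellSequence.stepEnergy; ring
    rw [this, sub_pos, sub_zero, lt_min_iff]
    exact ⟨lt_add_one _, hρ⟩
  have near : ∀ᶠ x : ℝ in nhdsWithin 0 (Ioi 0), x ∈ Ioo 0 ℓ := Ioo_mem_nhdsGT hℓ
  obtain ⟨x, hx, hxℓ⟩ := (((hcont.tendsto 0).mono_left nhdsWithin_le_nhds).eventually_const_lt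
    pos_at_zero |>.and near).exists
  exact ⟨x, hxℓ.1, hxℓ.2, sub_pos.mp hx⟩

lemma eventually_E_le_of_stairs {ℓ η : ℝ} (hη : 0 < η) (R : ℝ) :
    ∀ᶠ n in atTop, ∀ A m P : ℕ, 0 < m → 0 < P → D.δ n * m ≤ ℓ → |D.pos n A| ≤ R →
      |D.pos n (A + 1 + P * m)| ≤ R →
      D.E n A (A + 1 + P * m) ≤ D.β * D.δ n * (D.W n A - D.a n A) ^ 2 + 10 +
        P * (4 / 3 + η + D.β * ℓ * (D.M ^ 2 * ℓ ^ 2 / 12 + 2 * η * |D.M| * ℓ + η ^ 2)) := by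
  have hβ := D.β_pos
  filter_upwards [D.eventually_regular R, D.forcing_near R hη, D.cost_sub_le (|D.M| * R),
    D.cost_le (|D.M| * ℓ) hη] with n ⟨hδ, hg, hmin, hN⟩ ha hfive hcost A m P hm hP hmℓ hA hB
  have stairs_near (t : ℝ) (ht : t ∈ Icc (0 : ℝ) (P * m)) :
      |D.M * D.pos n (A + 1) + D.M * D.δ n * t| ≤ |D.M| * R := by
    rw [mul_assoc, ← mul_add, abs_mul]
    have left := (abs_le.mp hA).1
    have right := (abs_le.mp hB).2
    have hend : D.pos n (A + 1 + P * m) = D.pos n (A + 1) + D.δ n * (P * m) := by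
      rw [← sub_eq_iff_eq_add', D.pos_sub_pos]; push_cast; ring
    rw [hend] at right
    rw [D.pos_succ] at right ⊢
    refine mul_le_mul_of_nonneg_left (abs_le.mpr ⟨?_, ?_⟩) (abs_nonneg _)
    · linarith [mul_nonneg hδ.le ht.1]
    · linarith [mul_le_mul_of_nonneg_left ht.2 hδ.le]
  have forcing (j : ℕ) (hj : j < P * m) :
      |D.a n (A + 1 + j) - (D.M * D.pos n (A + 1) + D.M * D.δ n * j)| ≤ η := by
    have hpos : D.pos n (A + 1 + j) = D.pos n (A + 1) + D.δ n * j := by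
      rw [← sub_eq_iff_eq_add', D.pos_sub_pos]; push_cast; ring
    have := ha (A + 1 + j) (D.abs_pos_le hδ (by omega) (by omega) hA hB)
    rwa [hpos, mul_add, ← mul_assoc] at this
  have jump : D.g n (D.M * D.δ n * m) ≤ 4 / 3 + η := by
    apply hcost
    rw [mul_assoc, abs_mul, abs_of_nonneg (by positivity : 0 ≤ D.δ n * m)]
    gcongr
  have hℓ : 0 ≤ ℓ := (by positivity : 0 ≤ D.δ n * m).trans hmℓ
  have fidelity : D.β * D.δ n * m * ((D.M * D.δ n) ^ 2 * m ^ 2 / 12 +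
      2 * η * |D.M * D.δ n| * m + η ^ 2) ≤
      D.β * ℓ * (D.M ^ 2 * ℓ ^ 2 / 12 + 2 * η * |D.M| * ℓ + η ^ 2) := by
    rw [abs_mul, abs_of_pos hδ]
    calc _ = D.β * (D.δ n * m) * (D.M ^ 2 * (D.δ n * m) ^ 2 / 12 +
          2 * η * |D.M| * (D.δ n * m) + η ^ 2) := by ring
      _ ≤ _ := by gcongr
  have hle := hmin.energy_le_of_near_affine hg (by positivity) hm hP
    (by have := hN _ hB; omega) forcing stairs_near
    (hfive A (by have := hN _ hA; omega)) (hfive _ (by have := hN _ hB; omega))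
  refine hle.trans ?_
  rw [show (2 : ℝ) * 5 = 10 by norm_num]
  gcongr

lemma energyBound {ℓ ρ : ℝ} (hℓ : 0 < ℓ) (hρ : D.stepEnergy ℓ / ℓ < ρ) :
    D.EnergyBound ρ (D.stepEnergy ℓ + 11) := by
  intro R
  have hβ := D.β_pos
  have hρ0 : 0 < ρ := (div_pos (D.stepEnergy_pos hℓ) hℓ).trans hρ
  obtain ⟨x, hx0, hxℓ, hx⟩ := D.exists_stepEnergy_perturbation hℓ hρ
  rw [lt_min_iff] at hx
  set F := 4 / 3 + x + D.β * ℓ * (D.M ^ 2 * ℓ ^ 2 / 12 + 2 * x * |D.M| * ℓ + x ^ 2)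
  filter_upwards [D.eventually_regular R, D.eventually_δ_lt hx0,
    D.eventually_E_le_of_stairs hx0 (ℓ := ℓ) (R + 2 * ℓ)] with n ⟨hδ, hg, _⟩ hδx hE A B hAB hA hB
  obtain ⟨m, q, hm, m_le, le_m, q_mul_le, B_le, pos_end⟩ :=
    D.exists_subdivision hδ hδx.le hxℓ.le hAB.le
  have end_in : |D.pos n (A + 1 + (q + 1) * m)| ≤ R + 2 * ℓ := abs_le.mpr
    ⟨by linarith [(abs_le.mp hB).1, (D.strictMono_pos hδ).monotone B_le],
      by linarith [(abs_le.mp hB).2]⟩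
  have full_steps : (q : ℝ) * F ≤ ρ * (D.pos n B - D.pos n A) := by
    have : (q : ℝ) * m ≤ B - A := by
      rw [← Nat.cast_sub hAB.le]; exact_mod_cast q_mul_le
    calc (q : ℝ) * F ≤ q * (ρ * (D.δ n * m)) := by
          gcongr; exact hx.2.le.trans (by gcongr)
      _ = ρ * ((q * m) * D.δ n) := by ring
      _ ≤ _ := by rw [D.pos_sub_pos]; gcongr
  have hstairs : D.E n A (A + 1 + (q + 1) * m) ≤
      D.β * D.δ n * (D.W n A - D.a n A) ^ 2 + 10 + (q + 1 : ℕ) * F :=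
    hE A m (q + 1) hm q.succ_pos m_le (by linarith) end_in
  have hmono : D.E n A B ≤ D.E n A (A + 1 + (q + 1) * m) :=
    energy_mono hg (by positivity) _ _ le_rfl B_le
  push_cast at hstairs
  refine hmono.trans (hstairs.trans ?_)
  linarith [hx.1]

/-! ### Sup bounds -/

/-- An energy bound leaves in every interval of fixed length a cell where `W` is close to the
forcing term. -/
lemma exists_abs_sub_forcing_le {ρ X : ℝ} (hρ : 0 ≤ ρ) (hE : D.EnergyBound ρ X) {L T : ℝ}
    (hL : 0 < L) (hT : 0 ≤ T) (hLT : X + 2 * ρ * L < D.β * L * T ^ 2 / 2) (R : ℝ) :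
    ∀ᶠ n in atTop, ∀ x, |x| ≤ R → |x + L| ≤ R →
      ∃ j, x < D.pos n j ∧ D.pos n j ≤ x + L ∧ |D.W n j - D.a n j| ≤ T := by
  have hβ := D.β_pos
  filter_upwards [hE (R + 1), D.eventually_regular (R + 1), D.eventually_δ_lt one_pos,
    D.eventually_δ_lt (show 0 < L / 4 by positivity), D.exhausting R] with n hE ⟨hδ, hg, _⟩ hδ1 hδL
      hR x hx hxL
  have hx' := abs_le.mp hx
  have hxL' := abs_le.mp hxL
  obtain ⟨A_le, lt_A⟩ := D.pos_cell_le_and_lt hδ (x := x) (by linarith)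
  obtain ⟨B_le, lt_B⟩ := D.pos_cell_le_and_lt hδ (x := x + L) (by linarith)
  set A := D.cell n x
  set B := D.cell n (x + L)
  have hAB : A + 1 < B := by
    rw [← (D.strictMono_pos hδ).lt_iff_lt, D.pos_succ]
    linarith
  by_contra! far
  have fidelity_ge : (B - (A + 1 : ℕ) : ℝ) * (D.β * D.δ n * T ^ 2) ≤
      ∑ j ∈ Finset.Ico (A + 1) B, D.β * D.δ n * (D.W n j - D.a n j) ^ 2 := by
    rw [← Nat.cast_sub hAB.le, ← Nat.card_Ico, ← nsmul_eq_mul]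
    refine Finset.card_nsmul_le_sum _ _ _ fun j hj => ?_
    rw [Finset.mem_Ico] at hj
    have := (D.strictMono_pos hδ).monotone hj.1
    rw [D.pos_succ] at this
    rw [← sq_abs (D.W n j - D.a n j)]
    gcongr
    exact (far j (by linarith) (((D.strictMono_pos hδ).monotone hj.2.le).trans B_le)).le
  have fidelity_le : ∑ j ∈ Finset.Ico (A + 1) B, D.β * D.δ n * (D.W n j - D.a n j) ^ 2 ≤
      ρ * (D.pos n B - D.pos n A) + X := by
    have hsum := hE A B (by omega) (abs_le.mpr ⟨by linarith, by linarith⟩)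
      (abs_le.mpr ⟨by linarith, by linarith⟩)
    rw [CellSequence.E, energy, Finset.sum_eq_sum_Ico_succ_bot (by omega : A < B),
      Finset.sum_add_distrib] at hsum
    have := Finset.sum_nonneg fun j (_ : j ∈ Finset.Ico (A + 1) B) =>
      hg.nonneg (D.W n (j + 1) - D.W n j)
    linarith [hg.nonneg (D.W n (A + 1) - D.W n A)]
  have length_le : D.pos n B - D.pos n A ≤ 2 * L := by linarith
  have le_length : L / 2 ≤ (B - (A + 1 : ℕ) : ℝ) * D.δ n := by
    rw [← D.pos_sub_pos, D.pos_succ]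
    linarith
  have := mul_le_mul_of_nonneg_left length_le hρ
  have := mul_le_mul_of_nonneg_right le_length (by positivity : 0 ≤ D.β * T ^ 2)
  linarith

lemma eventually_abs_forcing_le (R : ℝ) {η : ℝ} (hη : 0 < η) :
    ∀ᶠ n in atTop, ∀ i, |D.pos n i| ≤ R → |D.a n i| ≤ |D.M| * R + η := by
  filter_upwards [D.forcing_near R hη] with n ha i hi
  have linear : |D.M * D.pos n i| ≤ |D.M| * R := by rw [abs_mul]; gcongr
  have := abs_add_le (D.a n i - D.M * D.pos n i) (D.M * D.pos n i)
  rw [sub_add_cancel] at this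
  linarith [ha i hi]

/-- On both sides of the window there is a cell where `W` is close to the forcing term, and the
maximum principle propagates the bound in between. -/
lemma eventually_abs_W_le {ρ X : ℝ} (hρ : 0 ≤ ρ) (hE : D.EnergyBound ρ X) {L T : ℝ} (hL : 0 < L)
    (hT : 0 ≤ T) (hLT : X + 2 * ρ * L < D.β * L * T ^ 2 / 2) {R η : ℝ} (hR : 0 ≤ R) (hη : 0 < η) :
    ∀ᶠ n in atTop, ∀ i, |D.pos n i| ≤ R → |D.W n i| ≤ T + (|D.M| * (R + L) + η) := by
  have hβ := D.β_pos
  filter_upwards [D.exists_abs_sub_forcing_le hρ hE hL hT hLT (R + L), D.eventually_regular (R + L),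
    D.eventually_abs_forcing_le (R + L) hη] with n near ⟨hδ, hg, hmin, hN⟩ ha i hi
  have W_le {j : ℕ} (hj : |D.pos n j| ≤ R + L) (hW : |D.W n j - D.a n j| ≤ T) :
      |D.W n j| ≤ T + (|D.M| * (R + L) + η) := by
    have := abs_add_le (D.W n j - D.a n j) (D.a n j)
    rw [sub_add_cancel] at this
    linarith [ha j hj]
  obtain ⟨A, lt_A, A_le, hWA⟩ := near (-R - L) (abs_le.mpr ⟨by linarith, by linarith⟩)
    (abs_le.mpr ⟨by linarith, by linarith⟩)
  obtain ⟨B, lt_B, B_le, hWB⟩ := near R (abs_le.mpr ⟨by linarith, by linarith⟩)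
    (abs_le.mpr ⟨by linarith, by linarith⟩)
  have hi' := abs_le.mp hi
  have hA : |D.pos n A| ≤ R + L := abs_le.mpr ⟨by linarith, by linarith⟩
  have hB : |D.pos n B| ≤ R + L := abs_le.mpr ⟨by linarith, by linarith⟩
  have hAi : A ≤ i := (D.strictMono_pos hδ).le_iff_le.mp (by linarith)
  have hiB : i ≤ B := (D.strictMono_pos hδ).le_iff_le.mp (by linarith)
  refine hmin.abs_le_of_boundary_le hg (by positivity) (by have := hN _ hB; omega) (W_le hA hWA)
    (W_le hB hWB) (fun j hAj hjB => ?_) i hAi hiB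
  linarith [ha j (D.abs_pos_le hδ hAj.le hjB.le hA hB)]

lemma exists_eventually_abs_W_le (R : ℝ) :
    ∃ C, 0 < C ∧ ∀ᶠ n in atTop, ∀ i, |D.pos n i| ≤ R → |D.W n i| ≤ C := by
  have hβ := D.β_pos
  have hY := D.stepEnergy_pos one_pos
  set ρ := D.stepEnergy 1 + 1
  set X := D.stepEnergy 1 + 11
  have hE : D.EnergyBound ρ X := D.energyBound one_pos (by rw [div_one]; exact lt_add_one _)
  have hT : X + 2 * ρ * 1 < D.β * 1 * Real.sqrt (2 * (X + 2 * ρ + 1) / D.β) ^ 2 / 2 := by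
    rw [Real.sq_sqrt (by positivity)]
    field_simp
    linarith
  refine ⟨_, ?_, (D.eventually_abs_W_le (by positivity) hE one_pos (Real.sqrt_nonneg _) hT
    (abs_nonneg R) one_pos).mono fun n hn i hi => hn i (hi.trans (le_abs_self R))⟩
  positivity

/-- For `M = 0` long steps cost nothing, so that the energy bound holds with every positive rate. -/
lemma eventually_abs_W_le_of_M_eq_zero (hM : D.M = 0) (R : ℝ) {ε : ℝ} (hε : 0 < ε) :
    ∀ᶠ n in atTop, ∀ i, |D.pos n i| ≤ R → |D.W n i| ≤ ε := by
  have hβ := D.β_pos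
  set ρ := D.β * ε ^ 2 / 32 with hρ
  have hY (ℓ : ℝ) : D.stepEnergy ℓ = 4 / 3 := by simp [CellSequence.stepEnergy, hM]
  have hE : D.EnergyBound ρ (4 / 3 + 11) := by
    have := D.energyBound (ℓ := 2 / ρ) (ρ := ρ) (by positivity) (by
      rw [hY, div_div_eq_mul_div, div_lt_iff₀ two_pos]
      nlinarith [show 0 < ρ by positivity])
    rwa [hY] at this
  have hLT : (4 / 3 + 11 : ℝ) + 2 * ρ * (224 / (D.β * ε ^ 2)) <
      D.β * (224 / (D.β * ε ^ 2)) * (ε / 2) ^ 2 / 2 := by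
    rw [hρ]
    field_simp
    norm_num
  refine (D.eventually_abs_W_le (by positivity) hE (by positivity) (by positivity) hLT
    (abs_nonneg R) (half_pos hε)).mono fun n hn i hi => (hn i (hi.trans (le_abs_self R))).trans ?_
  simp [hM]

lemma eventually_fidelity_le (R : ℝ) {η : ℝ} (hη : 0 < η) :
    ∀ᶠ n in atTop, ∀ i, |D.pos n i| ≤ R → D.β * D.δ n * (D.W n i - D.a n i) ^ 2 ≤ η := by
  have hβ := D.β_pos
  obtain ⟨C, hC, hW⟩ := D.exists_eventually_abs_W_le |R|
  set K := C + (|D.M| * |R| + 1)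
  filter_upwards [hW, D.eventually_abs_forcing_le |R| one_pos, D.eventually_δ_pos,
    D.eventually_δ_lt (show 0 < η / (D.β * K ^ 2) by positivity)] with n hW ha hδ hδη i hi
  have hWa : |D.W n i - D.a n i| ≤ K :=
    (abs_sub _ _).trans (add_le_add (hW i (hi.trans (le_abs_self R)))
      (ha i (hi.trans (le_abs_self R))))
  rw [lt_div_iff₀ (by positivity)] at hδη
  rw [← sq_abs]
  calc D.β * D.δ n * |D.W n i - D.a n i| ^ 2 ≤ D.β * D.δ n * K ^ 2 := by gcongr
    _ ≤ η := by linarith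

lemma eventually_E_le {ℓ ρ : ℝ} (hℓ : 0 < ℓ) (hρ : D.stepEnergy ℓ / ℓ < ρ) (R : ℝ) :
    ∀ᶠ n in atTop, ∀ A B, A ≤ B → |D.pos n A| ≤ R → |D.pos n B| ≤ R →
      D.E n A B ≤ ρ * (D.pos n B - D.pos n A) + (D.stepEnergy ℓ + 12) := by
  have hℓE := D.stepEnergy_pos hℓ
  filter_upwards [D.energyBound hℓ hρ R, D.eventually_fidelity_le R one_pos] with n hE hW
    A B hAB hA hB
  rcases hAB.eq_or_lt with rfl | hAB
  · simp only [CellSequence.E, energy, Finset.Ico_self, Finset.sum_empty, sub_self, mul_zero]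
    positivity
  · linarith [hE A B hAB hA hB, hW A hA]

lemma exists_eventually_E_le (R : ℝ) :
    ∃ X, 0 < X ∧ ∀ᶠ n in atTop, ∀ A B, A ≤ B → |D.pos n A| ≤ R → |D.pos n B| ≤ R →
      D.E n A B ≤ X := by
  have := D.stepEnergy_pos one_pos
  refine ⟨(D.stepEnergy 1 + 1) * (2 * |R|) + (D.stepEnergy 1 + 12), by positivity, ?_⟩
  filter_upwards [D.eventually_E_le one_pos (by rw [div_one]; exact lt_add_one _) R] with n hE
    A B hAB hA hB
  have length_le : D.pos n B - D.pos n A ≤ 2 * |R| := by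
    linarith [(abs_le.mp hA).1, (abs_le.mp hB).2, le_abs_self R]
  have := mul_le_mul_of_nonneg_left length_le (by positivity : 0 ≤ D.stepEnergy 1 + 1)
  linarith [hE A B hAB hA hB]

open Classical in
lemma eventually_sum_abs_incr_le (R : ℝ) {η : ℝ} (hη : 0 < η) :
    ∀ᶠ n in atTop, ∀ A B, A ≤ B → |D.pos n A| ≤ R → |D.pos n B| ≤ R →
      ∑ i ∈ Finset.Ico A B with ¬ D.IsJump n i, |D.incr n i| ≤ η := by
  obtain ⟨X, hX, hE⟩ := D.exists_eventually_E_le R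
  have hβ := D.β_pos
  set ζ := η / (2 * |R| + X) with hζ
  have hζ0 : 0 < ζ := by positivity
  filter_upwards [hE, D.abs_le_of_small hζ0, D.eventually_regular R] with n hE hsmall ⟨hδ, hg, _⟩
    A B hAB hA hB
  have length_le : D.pos n B - D.pos n A ≤ 2 * |R| := by
    linarith [(abs_le.mp hA).1, (abs_le.mp hB).2, le_abs_self R]
  calc ∑ i ∈ Finset.Ico A B with ¬ D.IsJump n i, |D.incr n i|
      ≤ ∑ i ∈ Finset.Ico A B, (ζ * D.δ n + ζ * (D.g n (D.incr n i) +
          D.β * D.δ n * (D.W n i - D.a n i) ^ 2)) := by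
        rw [Finset.sum_filter]
        refine Finset.sum_le_sum fun i _ => ?_
        have := hg.nonneg (D.incr n i)
        have : 0 ≤ ζ * (D.β * D.δ n * (D.W n i - D.a n i) ^ 2) := by positivity
        split_ifs with hJ
        · positivity
        · linarith [hsmall (D.incr n i) (not_le.mp hJ)]
    _ = ζ * (D.pos n B - D.pos n A) + ζ * D.E n A B := by
        rw [Finset.sum_add_distrib, Finset.sum_const, Nat.card_Ico, D.pos_sub_pos,
          nsmul_eq_mul, Nat.cast_sub hAB, ← Finset.mul_sum]
        simp only [CellSequence.E, energy, CellSequence.incr]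
        ring
    _ ≤ ζ * (2 * |R|) + ζ * X := by gcongr; exact hE A B hAB hA hB
    _ = η := by rw [hζ]; field_simp

lemma eventually_abs_W_sub_le (R : ℝ) {η : ℝ} (hη : 0 < η) :
    ∀ᶠ n in atTop, ∀ A B, A ≤ B → |D.pos n A| ≤ R → |D.pos n B| ≤ R →
      (∀ i, A ≤ i → i < B → ¬ D.IsJump n i) → |D.W n B - D.W n A| ≤ η := by
  classical
  filter_upwards [D.eventually_sum_abs_incr_le R hη] with n hsum A B hAB hA hB hJ
  refine le_trans ?_ (hsum A B hAB hA hB)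
  rw [← Finset.sum_Ico_sub (D.W n) hAB, Finset.filter_true_of_mem fun i hi => ?_]
  · exact Finset.abs_sum_le_sum_abs _ _
  · rw [Finset.mem_Ico] at hi
    exact hJ i hi.1 hi.2

lemma eventually_cost_le_cost_add (C : ℝ) {η : ℝ} (hη : 0 < η) :
    ∀ᶠ n in atTop, ∀ h h', |h| ≤ C → D.θ n ≤ |h'| → D.g n h ≤ D.g n h' + η := by
  filter_upwards [D.cost_le C (half_pos hη), D.le_cost (half_pos hη)] with n hle hge h h' hh hh'
  linarith [hle h hh, hge h' hh']

end BlowupSequence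

/-! ### A priori bounds on the spacing of the jumps -/

namespace CellSequence

variable (D : CellSequence)

/-- `p < q` are consecutive jump cells. -/
def ConsecutiveJumps (n p q : ℕ) : Prop :=
  p < q ∧ D.IsJump n p ∧ D.IsJump n q ∧ ∀ i, p < i → i < q → ¬ D.IsJump n i

variable {D} {n : ℕ}

lemma exists_consecutiveJumps {j i l : ℕ} (hji : j < i) (hil : i ≤ l) (hj : D.IsJump n j)
    (hl : D.IsJump n l) :
    ∃ p q, D.ConsecutiveJumps n p q ∧ j ≤ p ∧ p < i ∧ i ≤ q ∧ q ≤ l := by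
  classical
  have hjp : j ≤ Nat.findGreatest (D.IsJump n) (i - 1) := Nat.le_findGreatest (by omega) hj
  have hp : D.IsJump n _ := Nat.findGreatest_spec (by omega : j ≤ i - 1) hj
  have hpi : Nat.findGreatest (D.IsJump n) (i - 1) ≤ i - 1 := Nat.findGreatest_le _
  have last (m : ℕ) : Nat.findGreatest (D.IsJump n) (i - 1) < m → m ≤ i - 1 → ¬ D.IsJump n m :=
    fun h h' => Nat.findGreatest_is_greatest h h'
  set p := Nat.findGreatest (D.IsJump n) (i - 1)
  have hex : ∃ q, i ≤ q ∧ D.IsJump n q := ⟨l, hil, hl⟩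
  obtain ⟨hiq, hq⟩ := Nat.find_spec hex
  refine ⟨p, Nat.find hex, ⟨by omega, hp, hq, fun m hpm hmq hm => ?_⟩, hjp, by omega, hiq,
    Nat.find_min' hex ⟨hil, hl⟩⟩
  rcases lt_or_ge m i with h | h
  · exact last m hpm (by omega) hm
  · exact Nat.find_min hex hmq ⟨h, hm⟩

end CellSequence

namespace BlowupSequence

variable (D : BlowupSequence)

lemma exists_eventually_osc_le (R : ℝ) :
    ∃ C, 0 < C ∧ ∀ᶠ n in atTop, ∀ i, |D.pos n i| ≤ R →
      |D.W n i - D.M * D.pos n i| ≤ C ∧ |D.incr n i| ≤ C ∧ |D.W n i - D.a n i| ≤ C := by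
  obtain ⟨C, hC, hW⟩ := D.exists_eventually_abs_W_le (R + 1)
  refine ⟨2 * C + |D.M| * |R| + 1, by positivity, ?_⟩
  filter_upwards [hW, D.eventually_abs_forcing_le |R| one_pos, D.eventually_δ_pos,
    D.eventually_δ_lt one_pos] with n hW ha hδ hδ1 i hi
  have hiR := hi.trans (le_abs_self R)
  have hi' := abs_le.mp hi
  have Wi := hW i (by linarith)
  have Wi' := hW (i + 1) (by rw [D.pos_succ]; exact abs_le.mpr ⟨by linarith, by linarith⟩)
  have linear : |D.M * D.pos n i| ≤ |D.M| * |R| := by rw [abs_mul]; gcongr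
  have : 0 ≤ |D.M| * |R| := by positivity
  exact ⟨(abs_sub _ _).trans (by linarith), (abs_sub _ _).trans (by linarith),
    (abs_sub _ _).trans (by linarith [ha i hiR])⟩

/-- On a stretch without jumps the fidelity is almost that of a constant. -/
lemma eventually_sq_sub_le (R : ℝ) {η : ℝ} (hη : 0 < η) :
    ∀ᶠ n in atTop, ∀ A i, A ≤ i → |D.pos n A| ≤ R → |D.pos n i| ≤ R →
      (∀ j, A ≤ j → j < i → ¬ D.IsJump n j) →
      (D.W n A - D.M * D.pos n i) ^ 2 - η ≤ (D.W n i - D.a n i) ^ 2 := by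
  obtain ⟨C, hC, hosc⟩ := D.exists_eventually_osc_le R
  have hx : 0 < min C (η / (8 * C)) := by positivity
  filter_upwards [hosc, D.eventually_abs_W_sub_le R hx, D.forcing_near R hx]
    with n hosc hflat ha A i hAi hA hi hJ
  set x := min C (η / (8 * C))
  have xC : x ≤ C := min_le_left _ _
  have xη : x * (8 * C) ≤ η := (le_div_iff₀ (by positivity)).mp (min_le_right _ _)
  set v := D.W n i - D.a n i
  set z := D.W n A - D.M * D.pos n i
  have v_le : |v| ≤ C := (hosc i hi).2.2
  have sub_le : |z - v| ≤ 2 * x := by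
    rw [show z - v = (D.a n i - D.M * D.pos n i) - (D.W n i - D.W n A) by ring]
    exact (abs_sub _ _).trans (by linarith [ha i hi, hflat A i hAi hA hi hJ])
  have add_le : |z + v| ≤ 4 * C := by
    rw [show z + v = (z - v) + 2 * v by ring]
    exact (abs_add_le _ _).trans (by rw [abs_mul, abs_two]; linarith)
  have : (z - v) * (z + v) ≤ 2 * x * (4 * C) :=
    (le_abs_self _).trans (by rw [abs_mul]; gcongr)
  linarith

lemma le_sum_range_sq_affine (x d : ℝ) (m : ℕ) :
    d ^ 2 * ((m : ℝ) * ((m : ℝ) ^ 2 - 1)) / 12 ≤ ∑ r ∈ Finset.range m, (x + d * r) ^ 2 := by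
  rw [sum_range_sq_affine]
  exact le_add_of_nonneg_left (by positivity)

lemma cost_add_sum_le_E {n : ℕ} (hδ : 0 ≤ D.δ n) (hg : IsJumpCost (D.g n)) {A B : ℕ}
    (hAB : A < B) :
    D.g n (D.incr n A) + ∑ i ∈ Finset.Ico (A + 1) B, D.β * D.δ n * (D.W n i - D.a n i) ^ 2 ≤
      D.E n A B := by
  have hβ := D.β_pos
  rw [CellSequence.E, energy, Finset.sum_eq_sum_Ico_succ_bot hAB, CellSequence.incr]
  refine add_le_add (le_add_of_nonneg_right (by positivity)) (Finset.sum_le_sum fun i _ => ?_)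
  exact le_add_of_nonneg_left (hg.nonneg _)

/-- The best constant approximation of a linear function of slope `M` on an interval of length `L`
costs `M² L³ / 12`. -/
lemma le_sum_fidelity {n : ℕ} (hδ : 0 ≤ D.δ n) {A B : ℕ} (hAB : A ≤ B) {x η : ℝ}
    (h : ∀ i, A ≤ i → i < B → (x - D.M * D.pos n i) ^ 2 - η ≤ (D.W n i - D.a n i) ^ 2) :
    D.β * (D.M ^ 2 * ((D.pos n B - D.pos n A) ^ 3 - D.δ n ^ 2 * (D.pos n B - D.pos n A)) / 12 -
        (D.pos n B - D.pos n A) * η) ≤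
      ∑ i ∈ Finset.Ico A B, D.β * D.δ n * (D.W n i - D.a n i) ^ 2 := by
  have hβ := D.β_pos
  obtain ⟨m, rfl⟩ := Nat.exists_eq_add_of_le hAB
  have affine := le_sum_range_sq_affine (x - D.M * D.pos n A) (-(D.M * D.δ n)) m
  have le_sum : ∑ r ∈ Finset.range m, ((x - D.M * D.pos n A + -(D.M * D.δ n) * r) ^ 2 - η) ≤
      ∑ r ∈ Finset.range m, (D.W n (A + r) - D.a n (A + r)) ^ 2 := by
    refine Finset.sum_le_sum fun r hr => ?_
    rw [Finset.mem_range] at hr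
    have hpos : D.pos n (A + r) = D.pos n A + r * D.δ n := by
      unfold CellSequence.pos; push_cast; ring
    have := h (A + r) (by omega) (by omega)
    rw [hpos] at this
    linarith
  rw [Finset.sum_sub_distrib, Finset.sum_const, Finset.card_range, nsmul_eq_mul] at le_sum
  rw [← Finset.mul_sum, Finset.sum_Ico_eq_sum_range, add_tsub_cancel_left,
    show D.pos n (A + m) - D.pos n A = m * D.δ n by rw [D.pos_sub_pos]; push_cast; ring]
  calc _ = D.β * D.δ n * ((-(D.M * D.δ n)) ^ 2 * (m * ((m : ℝ) ^ 2 - 1)) / 12 - m * η) := by ring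
    _ ≤ _ := by gcongr; linarith

lemma eventually_cost_add_le_E (R : ℝ) {ε : ℝ} (hε : 0 < ε) :
    ∀ᶠ n in atTop, ∀ A B, A < B → |D.pos n A| ≤ R → |D.pos n B| ≤ R →
      (∀ i, A < i → i < B → ¬ D.IsJump n i) →
      D.g n (D.incr n A) + D.β * D.M ^ 2 * (D.pos n B - D.pos n A) ^ 3 / 12 - ε ≤ D.E n A B := by
  have hβ := D.β_pos
  set η := ε / (2 * (D.β * (2 * |R|) + 1)) with hη
  have hη0 : 0 < η := by positivity
  set K := D.β * D.M ^ 2 * (2 * |R|) ^ 2 / 4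
  filter_upwards [D.eventually_sq_sub_le R hη0, D.eventually_regular R,
    D.eventually_δ_lt (show 0 < ε / (2 * (K + 1)) by positivity)]
    with n hsq ⟨hδ, hg, _⟩ hδε A B hAB hA hB hJ
  refine le_trans ?_ (D.cost_add_sum_le_E hδ.le hg hAB)
  have inside {j : ℕ} (h : A ≤ j) (h' : j ≤ B) : |D.pos n j| ≤ R := D.abs_pos_le hδ h h' hA hB
  have fidelity := D.le_sum_fidelity hδ.le (A := A + 1) hAB fun i h h' =>
    hsq (A + 1) i h (inside (by omega) hAB) (inside (by omega) h'.le)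
      fun j hj hj' => hJ j (by omega) (by omega)
  have length : D.pos n B - D.pos n (A + 1) = D.pos n B - D.pos n A - D.δ n := by
    rw [D.pos_succ]; ring
  have hδT : D.pos n (A + 1) ≤ D.pos n B := (D.strictMono_pos hδ).monotone hAB
  rw [length] at fidelity
  rw [D.pos_succ] at hδT
  set T := D.pos n B - D.pos n A
  have hTR : T ≤ 2 * |R| := by
    linarith [(abs_le.mp hA).1, (abs_le.mp hB).2, le_abs_self R]
  have flat_error : D.β * ((T - D.δ n) * η) ≤ ε / 2 := by
    calc D.β * ((T - D.δ n) * η) ≤ D.β * ((2 * |R|) * η) :=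
          mul_le_mul_of_nonneg_left (mul_le_mul_of_nonneg_right (by linarith) hη0.le) hβ.le
      _ ≤ (D.β * (2 * |R|) + 1) * η := by linarith
      _ = ε / 2 := by rw [hη]; field_simp
  have end_error : D.β * D.M ^ 2 * T ^ 3 / 12 - ε / 2 ≤
      D.β * (D.M ^ 2 * ((T - D.δ n) ^ 3 - D.δ n ^ 2 * (T - D.δ n)) / 12) := by
    have hT : 0 ≤ T := by linarith
    rw [lt_div_iff₀ (by positivity)] at hδε
    have : D.β * D.M ^ 2 * T ^ 2 / 4 ≤ K := by
      change _ ≤ D.β * D.M ^ 2 * (2 * |R|) ^ 2 / 4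
      gcongr
    have := mul_le_mul_of_nonneg_right this hδ.le
    have : 0 ≤ D.β * D.M ^ 2 * (T * D.δ n ^ 2) := by positivity
    linarith
  linarith

/-- Flattening one of two nearby jumps, by translating the cells in between, saves the cost of this
jump. -/
lemma exists_le_jump_spacing (R : ℝ) :
    ∃ c, 0 < c ∧ ∀ᶠ n in atTop, ∀ p q, p < q → |D.pos n p| ≤ R → |D.pos n q| ≤ R →
      D.IsJump n p → D.IsJump n q → c ≤ D.pos n q - D.pos n p := by
  have hβ := D.β_pos
  obtain ⟨C, hC, hosc⟩ := D.exists_eventually_osc_le R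
  refine ⟨1 / (2 * (D.β * (3 * C ^ 2))), by positivity, ?_⟩
  filter_upwards [hosc, D.eventually_regular R, D.le_cost (show (0 : ℝ) < 1 / 3 by norm_num),
    D.eventually_cost_le_cost_add (2 * C) (show (0 : ℝ) < 1 / 2 by norm_num)]
    with n hosc ⟨hδ, hg, hmin, hN⟩ one_le hcost p q hpq hp hq hJp hJq
  have incr_le := (hosc p hp).2.1
  have stationary := hmin.le_add_shift hpq (hN q hq) (-D.incr n p)
  change D.g n (D.incr n p) + D.g n (D.incr n q) ≤ D.g n (D.incr n p + -D.incr n p) +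
    D.g n (D.incr n q - -D.incr n p) + _ at stationary
  rw [add_neg_cancel, hg.map_zero] at stationary
  have merged := hcost (D.incr n q - -D.incr n p) (D.incr n q)
    ((abs_sub _ _).trans (by rw [abs_neg]; linarith [(hosc q hq).2.1])) hJq
  have fidelity_le : ∑ i ∈ Finset.Ico (p + 1) (q + 1),
      (2 * -D.incr n p * (D.W n i - D.a n i) + (-D.incr n p) ^ 2) ≤
      ((q : ℝ) - p) * (3 * C ^ 2) := by
    have term_le (i : ℕ) (hi : i ∈ Finset.Ico (p + 1) (q + 1)) :
        2 * -D.incr n p * (D.W n i - D.a n i) + (-D.incr n p) ^ 2 ≤ 3 * C ^ 2 := by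
      rw [Finset.mem_Ico] at hi
      have osc_i := (hosc i (D.abs_pos_le hδ (by omega) (by omega) hp hq)).2.2
      have cross : |D.incr n p * (D.W n i - D.a n i)| ≤ C * C := by rw [abs_mul]; gcongr
      have sq_le : D.incr n p ^ 2 ≤ C ^ 2 := sq_le_sq' (abs_le.mp incr_le).1 (abs_le.mp incr_le).2
      nlinarith [(abs_le.mp cross).1]
    refine (Finset.sum_le_card_nsmul _ _ _ term_le).trans_eq ?_
    rw [Nat.card_Ico, nsmul_eq_mul, Nat.add_sub_add_right, Nat.cast_sub hpq.le]
  have := mul_le_mul_of_nonneg_left fidelity_le (by positivity : 0 ≤ D.β * D.δ n)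
  rw [div_le_iff₀ (by positivity), D.pos_sub_pos]
  linarith [one_le _ hJp]

lemma exists_jump_of_le_length (hM : D.M ≠ 0) :
    ∃ G, 0 < G ∧ ∀ R, ∀ᶠ n in atTop, ∀ A B, A < B → |D.pos n A| ≤ R → |D.pos n B| ≤ R →
      G ≤ D.pos n B - D.pos n A → ∃ i, A < i ∧ i < B ∧ D.IsJump n i := by
  have hβ := D.β_pos
  have hb : 0 < D.β * D.M ^ 2 / 12 := by positivity
  have hY := D.stepEnergy_pos one_pos
  refine ⟨1 + (2 * D.stepEnergy 1 + 15) / (D.β * D.M ^ 2 / 12), by positivity, fun R => ?_⟩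
  filter_upwards [D.eventually_E_le one_pos (by rw [div_one]; exact lt_add_one _) R,
    D.eventually_cost_add_le_E R one_pos, D.eventually_regular R]
    with n hle hge ⟨_, hg, _⟩ A B hAB hA hB hG
  by_contra! hJ
  have upper := hle A B hAB.le hA hB
  have lower := hge A B hAB hA hB hJ
  set T := D.pos n B - D.pos n A
  set b := D.β * D.M ^ 2 / 12
  set Y := D.stepEnergy 1
  have one_le_T : 1 ≤ T := le_trans (le_add_of_nonneg_right (by positivity)) hG
  have cubic : (2 * Y + 15) * T ^ 2 ≤ b * T * T ^ 2 := by
    gcongr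
    rw [← div_le_iff₀' hb]
    linarith
  have : T ≤ T ^ 2 := by nlinarith
  have : Y * T ≤ Y * T ^ 2 := by gcongr
  have : Y ≤ Y * T ^ 2 := le_mul_of_one_le_right hY.le (by nlinarith)
  linarith [hg.nonneg (D.incr n A), show b * T * T ^ 2 = D.β * D.M ^ 2 * T ^ 3 / 12 by ring]

lemma exists_consecutiveJumps_around (hM : D.M ≠ 0) :
    ∃ G, 0 < G ∧ ∀ R, ∀ᶠ n in atTop, ∀ i, |D.pos n i| ≤ R → ∃ p q, D.ConsecutiveJumps n p q ∧
      p < i ∧ i ≤ q ∧ D.pos n i - G ≤ D.pos n p ∧ D.pos n q ≤ D.pos n i + G := by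
  obtain ⟨G, hG, hJ⟩ := D.exists_jump_of_le_length hM
  refine ⟨G + 1, by positivity, fun R => ?_⟩
  filter_upwards [hJ (R + G + 1), D.eventually_δ_pos, D.eventually_δ_lt one_pos,
    D.exhausting (R + G + 1)] with n hJ hδ hδ1 ⟨hR, _⟩ i hi
  have mono := (D.strictMono_pos hδ).monotone
  have hi' := abs_le.mp hi
  obtain ⟨A_le, lt_A⟩ := D.pos_cell_le_and_lt hδ (x := D.pos n i - G) (by linarith)
  obtain ⟨B_le, lt_B⟩ := D.pos_cell_le_and_lt hδ (x := D.pos n i + G + 1) (by linarith)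
  set A := D.cell n (D.pos n i - G)
  set B := D.cell n (D.pos n i + G + 1)
  have hAi : A < i := (D.strictMono_pos hδ).lt_iff_lt.mp (by linarith)
  have hiB : i < B := (D.strictMono_pos hδ).lt_iff_lt.mp (by linarith)
  obtain ⟨j, hAj, hji, hj⟩ := hJ A i hAi (abs_le.mpr ⟨by linarith, by linarith⟩)
    (by linarith) (by linarith)
  obtain ⟨l, hil, hlB, hl⟩ := hJ i B hiB (by linarith)
    (abs_le.mpr ⟨by linarith, by linarith⟩) (by linarith)
  obtain ⟨p, q, hpq, hjp, hpi, hiq, hql⟩ := CellSequence.exists_consecutiveJumps hji hil.le hj hl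
  exact ⟨p, q, hpq, hpi, hiq, by linarith [mono (show A ≤ p by omega)],
    by linarith [mono (show q ≤ B by omega)]⟩

end BlowupSequence

/-! ### Stationarity of the plateaus and of the jumps -/

lemma abs_sum_Ico_succ_le {f : ℕ → ℝ} {C : ℝ} {p q : ℕ} (hpq : p ≤ q)
    (hf : ∀ j, p < j → j ≤ q → |f j| ≤ C) :
    |∑ j ∈ Finset.Ico (p + 1) (q + 1), f j| ≤ ((q : ℝ) - p) * C := by
  calc |∑ j ∈ Finset.Ico (p + 1) (q + 1), f j|
      ≤ (Finset.Ico (p + 1) (q + 1)).card • C :=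
        (Finset.abs_sum_le_sum_abs _ _).trans <| Finset.sum_le_card_nsmul _ _ _ fun j hj => by
          rw [Finset.mem_Ico] at hj
          exact hf j (by omega) (by omega)
    _ = ((q : ℝ) - p) * C := by
        rw [Nat.card_Ico, nsmul_eq_mul, Nat.add_sub_add_right, Nat.cast_sub hpq]

lemma CellSequence.sum_Ico_pos (D : CellSequence) {n p q : ℕ} (hpq : p ≤ q) :
    ∑ i ∈ Finset.Ico (p + 1) (q + 1), D.pos n i =
      ((q : ℝ) - p) * ((D.pos n p + D.pos n q + D.δ n) / 2) := by
  induction q, hpq using Nat.le_induction with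
  | base => simp
  | succ q hpq ih =>
    rw [Finset.sum_Ico_succ_top (by omega), ih]
    unfold CellSequence.pos
    push_cast
    ring

/-- A quantitative form of `0 ≤ t * (2 * ω + t - 2 * x)`: the residuals `W - a` on the `m` cells of
`F` are close to `ω - x`, and raising `W` by `t` on `F` costs at most `η`. -/
lemma neg_mul_le_of_residual_near {F : Finset ℕ} {v : ℕ → ℝ} {κ C η ζ ρ t ω x : ℝ} (hκ : 0 < κ)
    (hη : 0 ≤ η) (hρ : 0 < ρ) (ht : |t| ≤ C) (hF : ρ ≤ κ * F.card)
    (hv : ∀ i ∈ F, |v i - (ω - x)| ≤ ζ) (h : 0 ≤ η + κ * ∑ i ∈ F, (2 * t * v i + t ^ 2)) :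
    -(t * (2 * ω + t - 2 * x)) ≤ η / ρ + 2 * C * ζ := by
  have sum_le : ∑ i ∈ F, (2 * t * v i + t ^ 2) ≤
      F.card • (t * (2 * ω + t - 2 * x) + 2 * C * ζ) := by
    refine Finset.sum_le_card_nsmul _ _ _ fun i hi => ?_
    have : |t * (v i - (ω - x))| ≤ C * ζ := by
      rw [abs_mul]
      exact mul_le_mul ht (hv i hi) (abs_nonneg _) ((abs_nonneg t).trans ht)
    linarith [(abs_le.mp this).2]
  rw [nsmul_eq_mul] at sum_le
  set Z := t * (2 * ω + t - 2 * x) + 2 * C * ζ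
  have := mul_le_mul_of_nonneg_left sum_le hκ.le
  suffices -Z ≤ η / ρ by linarith
  rw [le_div_iff₀ hρ]
  rcases le_or_gt 0 Z with hZ0 | hZ0
  · nlinarith
  · nlinarith

namespace BlowupSequence

variable (D : BlowupSequence)

/-- Comparison with the vertical translation of the cells between the jumps by the mean of the
residual `W - a`. -/
lemma eventually_abs_sum_residual_le (R : ℝ) {ε : ℝ} (hε : 0 < ε) :
    ∀ᶠ n in atTop, ∀ p q, p < q → D.IsJump n p → D.IsJump n q → |D.pos n p| ≤ R →
      |D.pos n q| ≤ R →
      |∑ j ∈ Finset.Ico (p + 1) (q + 1), (D.W n j - D.a n j)| ≤ ((q : ℝ) - p) * ε := by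
  have hβ := D.β_pos
  obtain ⟨C, _, hosc⟩ := D.exists_eventually_osc_le R
  obtain ⟨c, hc, hgap⟩ := D.exists_le_jump_spacing R
  filter_upwards [hosc, hgap, D.eventually_regular R,
    D.eventually_cost_le_cost_add (2 * C) (show 0 < D.β * c * ε ^ 2 / 2 by positivity)]
    with n hosc hgap ⟨hδ, _, hmin, hN⟩ hcost p q hpq hJp hJq hp hq
  have hm : 0 < (q : ℝ) - p := sub_pos.mpr (Nat.cast_lt.mpr hpq)
  obtain ⟨d, hd⟩ : ∃ d, ∑ j ∈ Finset.Ico (p + 1) (q + 1), (D.W n j - D.a n j) =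
    ((q : ℝ) - p) * d := ⟨_, (mul_div_cancel₀ _ hm.ne').symm⟩
  have sum_le := abs_sum_Ico_succ_le (f := fun j => D.W n j - D.a n j) hpq.le fun j hj hj' =>
    (hosc j (D.abs_pos_le hδ hj.le hj' hp hq)).2.2
  rw [hd, abs_mul, abs_of_pos hm] at sum_le ⊢
  have d_le : |d| ≤ C := le_of_mul_le_mul_left sum_le hm
  refine mul_le_mul_of_nonneg_left (abs_le_of_sq_le_sq ?_ hε.le) hm.le
  have stationary := hmin.le_add_shift hpq (hN _ hq) (-d)
  have quadratic : ∑ j ∈ Finset.Ico (p + 1) (q + 1),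
      (2 * -d * (D.W n j - D.a n j) + (-d) ^ 2) = -(((q : ℝ) - p) * d ^ 2) := by
    rw [Finset.sum_add_distrib, ← Finset.mul_sum, hd, Finset.sum_const, Nat.card_Ico,
      nsmul_eq_mul, Nat.add_sub_add_right, Nat.cast_sub hpq.le]
    ring
  rw [quadratic] at stationary
  change D.g n (D.incr n p) + D.g n (D.incr n q) ≤ D.g n (D.incr n p + -d) +
    D.g n (D.incr n q - -d) + _ at stationary
  have left := hcost (D.incr n p + -d) _ ((abs_add_le _ _).trans (by
    rw [abs_neg]; linarith [(hosc p hp).2.1])) hJp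
  have right := hcost (D.incr n q - -d) _ ((abs_sub _ _).trans (by
    rw [abs_neg]; linarith [(hosc q hq).2.1])) hJq
  refine le_of_mul_le_mul_left ?_ (mul_pos hβ hc)
  calc D.β * c * d ^ 2 ≤ D.β * (D.pos n q - D.pos n p) * d ^ 2 := by
        gcongr; exact hgap p q hpq hp hq hJp hJq
    _ = D.β * D.δ n * (((q : ℝ) - p) * d ^ 2) := by rw [D.pos_sub_pos]; ring
    _ ≤ D.β * c * ε ^ 2 := by linarith

lemma eventually_abs_W_sub_mean_le (R : ℝ) {ε : ℝ} (hε : 0 < ε) :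
    ∀ᶠ n in atTop, ∀ p q, D.ConsecutiveJumps n p q → |D.pos n p| ≤ R → |D.pos n q| ≤ R →
      ∀ i, p < i → i ≤ q →
      |((q : ℝ) - p) * (D.W n i - D.M * ((D.pos n p + D.pos n q + D.δ n) / 2)) -
        ∑ j ∈ Finset.Ico (p + 1) (q + 1), (D.W n j - D.a n j)| ≤ ((q : ℝ) - p) * ε := by
  filter_upwards [D.eventually_δ_pos, D.eventually_abs_W_sub_le R (half_pos hε),
    D.forcing_near R (half_pos hε)] with n hδ hflat ha p q ⟨hpq, _, _, hno⟩ hp hq i hpi hiq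
  have inside {j : ℕ} (h : p ≤ j) (h' : j ≤ q) : |D.pos n j| ≤ R := D.abs_pos_le hδ h h' hp hq
  have W_near {j : ℕ} (hpj : p < j) (hjq : j ≤ q) : |D.W n i - D.W n j| ≤ ε / 2 := by
    rcases le_total j i with h | h
    · exact hflat j i h (inside hpj.le hjq) (inside hpi.le hiq)
        fun l h1 h2 => hno l (by omega) (by omega)
    · rw [abs_sub_comm]
      exact hflat i j h (inside hpi.le hiq) (inside hpj.le hjq)
        fun l h1 h2 => hno l (by omega) (by omega)
  have as_sum : ((q : ℝ) - p) * (D.W n i - D.M * ((D.pos n p + D.pos n q + D.δ n) / 2)) -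
      ∑ j ∈ Finset.Ico (p + 1) (q + 1), (D.W n j - D.a n j) =
      ∑ j ∈ Finset.Ico (p + 1) (q + 1),
        ((D.W n i - D.W n j) + (D.a n j - D.M * D.pos n j)) := by
    simp only [Finset.sum_add_distrib, Finset.sum_sub_distrib]
    rw [← Finset.mul_sum, D.sum_Ico_pos hpq.le, Finset.sum_const, Nat.card_Ico, nsmul_eq_mul,
      Nat.add_sub_add_right, Nat.cast_sub hpq.le]
    ring
  rw [as_sum]
  refine abs_sum_Ico_succ_le hpq.le fun j hpj hjq => (abs_add_le _ _).trans ?_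
  linarith [ha j (inside hpj.le hjq), W_near hpj hjq]

lemma eventually_abs_plateau_sub_le (R : ℝ) {ε : ℝ} (hε : 0 < ε) :
    ∀ᶠ n in atTop, ∀ p q, D.ConsecutiveJumps n p q → |D.pos n p| ≤ R → |D.pos n q| ≤ R →
      ∀ i, p < i → i ≤ q → |D.W n i - D.M * ((D.pos n p + D.pos n q) / 2)| ≤ ε := by
  filter_upwards [D.eventually_abs_sum_residual_le R (show 0 < ε / 4 by positivity),
    D.eventually_abs_W_sub_mean_le R (half_pos hε), D.eventually_δ_pos,
    D.eventually_δ_lt (show 0 < ε / (2 * (|D.M| + 1)) by positivity)]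
    with n hresidual hmean hδ hδε p q hpq hp hq i hpi hiq
  have residual := hresidual p q hpq.1 hpq.2.1 hpq.2.2.1 hp hq
  have mean := hmean p q hpq hp hq i hpi hiq
  have hm : 0 < (q : ℝ) - p := sub_pos.mpr (Nat.cast_lt.mpr hpq.1)
  have half_cell : |D.M * (D.δ n / 2)| ≤ ε / 4 := by
    rw [abs_mul, abs_of_pos (half_pos hδ)]
    rw [lt_div_iff₀ (by positivity)] at hδε
    nlinarith [abs_nonneg D.M]
  have near : |D.W n i - D.M * ((D.pos n p + D.pos n q + D.δ n) / 2)| ≤ 3 / 4 * ε := by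
    refine le_of_mul_le_mul_left ?_ hm
    rw [← abs_of_pos hm, ← abs_mul, abs_of_pos hm]
    have := abs_sub_abs_le_abs_sub
      (((q : ℝ) - p) * (D.W n i - D.M * ((D.pos n p + D.pos n q + D.δ n) / 2)))
      (∑ j ∈ Finset.Ico (p + 1) (q + 1), (D.W n j - D.a n j))
    linarith
  rw [show D.W n i - D.M * ((D.pos n p + D.pos n q) / 2) =
    (D.W n i - D.M * ((D.pos n p + D.pos n q + D.δ n) / 2)) + D.M * (D.δ n / 2) by ring]
  exact (abs_add_le _ _).trans (by linarith)

lemma neg_mul_le_of_shift {n A m q : ℕ} {C η r t ω : ℝ} (hδ : 0 < D.δ n) (hη : 0 ≤ η) (hr : 0 < r)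
    (ht : |t| ≤ C) (le_m : r / 2 ≤ D.δ n * m) (m_le : D.δ n * m ≤ r) (hAq : A ≤ q)
    (hqA : q ≤ A + m)
    (ha : ∀ i, A < i → i ≤ A + m → |D.a n i - D.M * D.pos n i| ≤ η)
    (hW : ∀ i, A < i → i ≤ A + m → |D.W n i - ω| ≤ η)
    (h : 0 ≤ η + D.β * D.δ n *
      ∑ i ∈ Finset.Ico (A + 1) (A + m + 1), (2 * t * (D.W n i - D.a n i) + t ^ 2)) :
    -(t * (2 * ω + t - 2 * (D.M * D.pos n q))) ≤
      η / (D.β * (r / 2)) + 2 * C * (2 * η + |D.M| * r) := by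
  have hβ := D.β_pos
  refine neg_mul_le_of_residual_near (by positivity) hη (by positivity) ht ?_ (fun i hi => ?_) h
  · rw [Nat.card_Ico, show A + m + 1 - (A + 1) = m by omega, mul_assoc]
    gcongr
  · rw [Finset.mem_Ico] at hi
    have near_q : |D.pos n i - D.pos n q| ≤ r := by
      rw [D.pos_sub_pos, abs_mul, abs_of_pos hδ, mul_comm]
      refine le_trans ?_ m_le
      gcongr
      have hi' : (i : ℝ) ≤ q + m := by exact_mod_cast (by omega : i ≤ q + m)
      have hq' : (q : ℝ) ≤ i + m := by exact_mod_cast (by omega : q ≤ i + m)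
      exact abs_le.mpr ⟨by linarith, by linarith⟩
    have linear : |D.M * (D.pos n i - D.pos n q)| ≤ |D.M| * r := by rw [abs_mul]; gcongr
    rw [show D.W n i - D.a n i - (ω - D.M * D.pos n q) = (D.W n i - ω) -
      (D.a n i - D.M * D.pos n i) - D.M * (D.pos n i - D.pos n q) by ring]
    have := abs_sub (D.W n i - ω) (D.a n i - D.M * D.pos n i)
    exact (abs_sub _ _).trans (by
      linarith [ha i (by omega) (by omega), hW i (by omega) (by omega)])

/-- Comparison with the translation of the jump at `q` to the left, to the cell `p`. -/
lemma eventually_nonneg_shift_left (R : ℝ) {η : ℝ} (hη : 0 < η) :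
    ∀ᶠ n in atTop, ∀ p q, p < q → |D.pos n p| ≤ R → |D.pos n q| ≤ R → D.IsJump n q →
      0 ≤ η + D.β * D.δ n * ∑ i ∈ Finset.Ico (p + 1) (q + 1),
        (2 * D.incr n q * (D.W n i - D.a n i) + D.incr n q ^ 2) := by
  obtain ⟨C, _, hosc⟩ := D.exists_eventually_osc_le R
  filter_upwards [hosc, D.eventually_regular R, D.eventually_cost_le_cost_add (2 * C) hη]
    with n hosc ⟨_, hg, hmin, hN⟩ hcost p q hpq hp hq hJ
  have stationary := hmin.le_add_shift hpq (hN q hq) (D.incr n q)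
  change D.g n (D.incr n p) + D.g n (D.incr n q) ≤ D.g n (D.incr n p + D.incr n q) +
    D.g n (D.incr n q - D.incr n q) + _ at stationary
  rw [sub_self, hg.map_zero] at stationary
  linarith [hg.nonneg (D.incr n p), hcost (D.incr n p + D.incr n q) _
    ((abs_add_le _ _).trans (by linarith [(hosc p hp).2.1, (hosc q hq).2.1])) hJ]

/-- Comparison with the translation of the jump at `p` to the right, to the cell `q`. -/
lemma eventually_nonneg_shift_right (R : ℝ) {η : ℝ} (hη : 0 < η) :
    ∀ᶠ n in atTop, ∀ p q, p < q → |D.pos n p| ≤ R → |D.pos n q| ≤ R → D.IsJump n p →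
      0 ≤ η + D.β * D.δ n * ∑ i ∈ Finset.Ico (p + 1) (q + 1),
        (2 * -D.incr n p * (D.W n i - D.a n i) + (-D.incr n p) ^ 2) := by
  obtain ⟨C, _, hosc⟩ := D.exists_eventually_osc_le R
  filter_upwards [hosc, D.eventually_regular R, D.eventually_cost_le_cost_add (2 * C) hη]
    with n hosc ⟨_, hg, hmin, hN⟩ hcost p q hpq hp hq hJ
  have stationary := hmin.le_add_shift hpq (hN q hq) (-D.incr n p)
  change D.g n (D.incr n p) + D.g n (D.incr n q) ≤ D.g n (D.incr n p + -D.incr n p) +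
    D.g n (D.incr n q - -D.incr n p) + _ at stationary
  rw [add_neg_cancel, hg.map_zero, sub_neg_eq_add] at stationary
  linarith [hg.nonneg (D.incr n q), hcost (D.incr n q + D.incr n p) _
    ((abs_add_le _ _).trans (by linarith [(hosc p hp).2.1, (hosc q hq).2.1])) hJ]

lemma exists_shift_parameters {C c σ : ℝ} (hC : 0 < C) (hc : 0 < c) (hσ : 0 < σ) :
    ∃ r η, 0 < r ∧ 0 < η ∧ r < c ∧
      η / (D.β * (r / 2)) + 2 * C * (2 * η + |D.M| * r) ≤ σ := by
  have hβ := D.β_pos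
  have hr : 0 < min (c / 2) (σ / (4 * C * (|D.M| + 1))) := by positivity
  have hr' : 2 * C * (|D.M| * min (c / 2) (σ / (4 * C * (|D.M| + 1)))) ≤ σ / 2 := by
    calc _ ≤ 2 * C * ((|D.M| + 1) * (σ / (4 * C * (|D.M| + 1)))) := by
          gcongr
          · linarith
          · exact min_le_right _ _
      _ = σ / 2 := by field_simp; norm_num
  have hrc : min (c / 2) (σ / (4 * C * (|D.M| + 1))) < c := (min_le_left _ _).trans_lt (by linarith)
  set r := min (c / 2) (σ / (4 * C * (|D.M| + 1)))
  set η := σ / (2 * (1 / (D.β * (r / 2)) + 4 * C)) with hη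
  have : η * (1 / (D.β * (r / 2)) + 4 * C) = σ / 2 := by
    have : 0 < 1 / (D.β * (r / 2)) + 4 * C := by positivity
    rw [hη]
    field_simp
  refine ⟨r, η, hr, by positivity, hrc, ?_⟩
  rw [div_eq_mul_one_div η]
  linarith

lemma eventually_abs_incr_mul_le (R : ℝ) {σ : ℝ} (hσ : 0 < σ) :
    ∀ᶠ n in atTop, ∀ p q r, D.ConsecutiveJumps n p q → D.ConsecutiveJumps n q r →
      |D.pos n p| ≤ R → |D.pos n r| ≤ R →
      |D.incr n q * (D.W n q + D.W n (q + 1) - 2 * (D.M * D.pos n q))| ≤ σ := by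
  obtain ⟨C, hC, hosc⟩ := D.exists_eventually_osc_le R
  obtain ⟨c, hc, hgap⟩ := D.exists_le_jump_spacing R
  obtain ⟨x, η, hx, hη, hxc, hσ'⟩ := D.exists_shift_parameters hC hc hσ
  filter_upwards [hosc, hgap, D.eventually_δ_pos, D.eventually_abs_W_sub_le R hη,
    D.forcing_near R hη, D.eventually_nonneg_shift_left R hη, D.eventually_nonneg_shift_right R hη,
    D.eventually_δ_lt (half_pos hx)] with n hosc hgap hδ hflat ha hleft hright hδx
      p q r ⟨hpq, hJp, hJq, hno⟩ ⟨hqr, _, hJr, hno'⟩ hp hr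
  have inside {j : ℕ} (h : p ≤ j) (h' : j ≤ r) : |D.pos n j| ≤ R := D.abs_pos_le hδ h h' hp hr
  have hq := inside hpq.le hqr.le
  obtain ⟨m, _, hm, m_le, le_m, _⟩ := D.exists_subdivision hδ hδx.le (half_le_self hx.le) le_rfl
    (A := 0)
  have lt_of_spacing {i j : ℕ} (h : c ≤ D.pos n j - D.pos n i) : i + m < j := by
    rw [← (D.strictMono_pos hδ).lt_iff_lt, ← sub_pos]
    have := D.pos_sub_pos n i (i + m)
    push_cast at this
    linarith
  have hpm : p + m < q := lt_of_spacing (hgap p q hpq hp hq hJp hJq)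
  have hmr : q + m < r := lt_of_spacing (hgap q r hqr hq hr hJq hJr)
  have incr_le := (hosc q hq).2.1
  have W_succ : D.W n (q + 1) = D.W n q + D.incr n q := by unfold CellSequence.incr; ring
  rw [abs_le]
  constructor
  · have hmq : q - m + m = q := by omega
    have := D.neg_mul_le_of_shift hδ hη.le hx incr_le (by linarith) m_le (Nat.sub_le q m) hmq.ge
      (fun i _ _ => ha i (inside (by omega) (by omega)))
      (fun i hi hi' => abs_sub_comm (D.W n q) _ ▸ hflat i q (by omega)
        (inside (by omega) (by omega)) hq fun l _ _ => hno l (by omega) (by omega))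
      (by rw [hmq]; exact hleft _ q (by omega) (inside (by omega) (by omega)) hq hJq)
    rw [W_succ]
    linarith
  · have := D.neg_mul_le_of_shift hδ hη.le hx ((abs_neg _).trans_le incr_le) (by linarith) m_le
      le_rfl (Nat.le_add_right q m) (fun i _ _ => ha i (inside (by omega) (by omega)))
      (fun i hi hi' => hflat (q + 1) i (by omega) (inside (by omega) (by omega))
        (inside (by omega) (by omega)) fun l _ _ => hno' l (by omega) (by omega))
      (hright q (q + m) (by omega) hq (inside (by omega) hmr.le) hJq)
    rw [W_succ] at this ⊢
    linarith

/-- Between consecutive jumps the plateaus lie at the mean height of the linear forcing term, so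
that the increment at a jump is half `M` times the sum of the adjacent gaps. -/
lemma eventually_abs_incr_sub_le (R : ℝ) {η : ℝ} (hη : 0 < η) :
    ∀ᶠ n in atTop, ∀ p q r, D.ConsecutiveJumps n p q → D.ConsecutiveJumps n q r →
      |D.pos n p| ≤ R → |D.pos n r| ≤ R →
      |D.incr n q - D.M * ((D.pos n r - D.pos n p) / 2)| ≤ η ∧
      |D.W n q + D.W n (q + 1) - 2 * (D.M * D.pos n q) -
        D.M * ((D.pos n r - D.pos n q - (D.pos n q - D.pos n p)) / 2)| ≤ η := by
  filter_upwards [D.eventually_abs_plateau_sub_le R (half_pos hη), D.eventually_δ_pos]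
    with n hplateau hδ p q r hpq hqr hp hr
  have hq := D.abs_pos_le hδ hpq.1.le hqr.1.le hp hr
  have left := hplateau p q hpq hp hq q hpq.1 le_rfl
  have right := hplateau q r hqr hq hr (q + 1) (Nat.lt_succ_self q) hqr.1
  set x := D.W n q - D.M * ((D.pos n p + D.pos n q) / 2) with hx
  set y := D.W n (q + 1) - D.M * ((D.pos n q + D.pos n r) / 2) with hy
  rw [show D.incr n q - D.M * ((D.pos n r - D.pos n p) / 2) = y - x by
      rw [hx, hy, CellSequence.incr]; ring,
    show D.W n q + D.W n (q + 1) - 2 * (D.M * D.pos n q) -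
      D.M * ((D.pos n r - D.pos n q - (D.pos n q - D.pos n p)) / 2) = x + y by rw [hx, hy]; ring]
  exact ⟨(abs_sub _ _).trans (by linarith), (abs_add_le _ _).trans (by linarith)⟩

lemma eventually_incr_mul_M_ge (hM : D.M ≠ 0) (R : ℝ) :
    ∃ c, 0 < c ∧ ∀ᶠ n in atTop, ∀ p q r, D.ConsecutiveJumps n p q → D.ConsecutiveJumps n q r →
      |D.pos n p| ≤ R → |D.pos n r| ≤ R → c ≤ D.incr n q * D.M := by
  obtain ⟨c, hc, hgap⟩ := D.exists_le_jump_spacing R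
  have hM' : 0 < |D.M| := abs_pos.mpr hM
  refine ⟨D.M ^ 2 * c / 2, by positivity, ?_⟩
  filter_upwards [hgap, D.eventually_δ_pos,
    D.eventually_abs_incr_sub_le R (show 0 < |D.M| * c / 2 by positivity)]
    with n hgap hδ hincr p q r hpq hqr hp hr
  have hq := D.abs_pos_le hδ hpq.1.le hqr.1.le hp hr
  have left := hgap p q hpq.1 hp hq hpq.2.1 hpq.2.2.1
  have right := hgap q r hqr.1 hq hr hqr.2.1 hqr.2.2.1
  have error : |(D.incr n q - D.M * ((D.pos n r - D.pos n p) / 2)) * D.M| ≤ D.M ^ 2 * c / 2 := by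
    rw [abs_mul, ← sq_abs D.M]
    have := mul_le_mul_of_nonneg_right (hincr p q r hpq hqr hp hr).1 hM'.le
    linarith
  have main : D.M ^ 2 * c ≤ D.M ^ 2 * ((D.pos n r - D.pos n p) / 2) := by gcongr; linarith
  linarith [(abs_le.mp error).1]

/-- Consecutive gaps are asymptotically equal, because the jump between them sits where the linear
forcing term is the mean of the adjacent plateaus. -/
lemma eventually_abs_gap_sub_gap_le (hM : D.M ≠ 0) (R : ℝ) {ε : ℝ} (hε : 0 < ε) :
    ∀ᶠ n in atTop, ∀ p q r, D.ConsecutiveJumps n p q → D.ConsecutiveJumps n q r →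
      |D.pos n p| ≤ R → |D.pos n r| ≤ R →
      |(D.pos n r - D.pos n q) - (D.pos n q - D.pos n p)| ≤ ε := by
  obtain ⟨c, hc, hincr⟩ := D.eventually_incr_mul_M_ge hM R
  have hM' : 0 < |D.M| := abs_pos.mpr hM
  filter_upwards [hincr, D.eventually_abs_incr_sub_le R (show 0 < |D.M| * ε / 4 by positivity),
    D.eventually_abs_incr_mul_le R (show 0 < c * ε / 4 by positivity)]
    with n hincr hplateau hjump p q r hpq hqr hp hr
  have incr_ge := hincr p q r hpq hqr hp hr
  have mean := (hplateau p q r hpq hqr hp hr).2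
  have jump := hjump p q r hpq hqr hp hr
  set x := D.W n q + D.W n (q + 1) - 2 * (D.M * D.pos n q)
  set z := D.pos n r - D.pos n q - (D.pos n q - D.pos n p)
  have x_le : |x| ≤ |D.M| * ε / 4 := by
    refine le_of_mul_le_mul_left ?_ hc
    calc c * |x| ≤ |D.incr n q * D.M| * |x| := by gcongr; exact incr_ge.trans (le_abs_self _)
      _ = |D.M| * |D.incr n q * x| := by rw [abs_mul, abs_mul]; ring
      _ ≤ |D.M| * (c * ε / 4) := by gcongr
      _ = c * (|D.M| * ε / 4) := by ring
  have : |D.M * (z / 2)| ≤ |D.M| * (ε / 2) := by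
    rw [show D.M * (z / 2) = x - (x - D.M * (z / 2)) by ring]
    exact (abs_sub _ _).trans (by linarith)
  rw [abs_mul, abs_div, abs_two] at this
  linarith [le_of_mul_le_mul_left this hM']

end BlowupSequence

/-! ### Convergence to the staircase -/

namespace CellSequence

variable (D : CellSequence) {n : ℕ}

lemma stepEnergy_eq_of_optimal {ℓ : ℝ} (hℓ : 0 < ℓ) (hopt : D.β * D.M ^ 2 * ℓ ^ 3 = 8) (T : ℝ) :
    D.stepEnergy T = 2 / ℓ * T + D.β * D.M ^ 2 / 12 * ((T - ℓ) ^ 2 * (T + 2 * ℓ)) := by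
  have : D.β * D.M ^ 2 = 8 / ℓ ^ 3 := by rw [← hopt]; field_simp
  unfold stepEnergy
  rw [this]
  field_simp
  ring

variable {D}

lemma exists_nat_abs_sub_le {H ζ R : ℝ} (hδ : 0 < D.δ n) (hζ : ζ ≤ H)
    (hgap : ∀ p q, D.ConsecutiveJumps n p q → |D.pos n p| ≤ R → |D.pos n q| ≤ R →
      |D.pos n q - D.pos n p - 2 * H| ≤ ζ) {p : ℕ} (hJp : D.IsJump n p) (hp : |D.pos n p| ≤ R)
    (q : ℕ) (hJq : D.IsJump n q) (hpq : p ≤ q) (hq : |D.pos n q| ≤ R) :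
    ∃ m : ℕ, |D.pos n q - D.pos n p - 2 * H * m| ≤ m * ζ ∧ H * m ≤ D.pos n q - D.pos n p := by
  induction q using Nat.strong_induction_on with
  | _ q ih =>
    rcases hpq.eq_or_lt with rfl | hpq
    · exact ⟨0, by simp⟩
    obtain ⟨p', q', hc, hpp', hp'q, hqq', hq'q⟩ := exists_consecutiveJumps hpq le_rfl hJp hJq
    obtain rfl : q = q' := le_antisymm hqq' hq'q
    have hp' := D.abs_pos_le hδ hpp' hp'q.le hp hq
    obtain ⟨m, near, le_gap⟩ := ih p' hp'q hc.2.1 hpp' hp'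
    have last := hgap p' q hc hp' hq
    refine ⟨m + 1, ?_, ?_⟩
    · rw [show D.pos n q - D.pos n p - 2 * H * ((m + 1 : ℕ) : ℝ) =
        (D.pos n q - D.pos n p' - 2 * H) + (D.pos n p' - D.pos n p - 2 * H * m) by
          push_cast; ring]
      push_cast
      exact (abs_add_le _ _).trans (by linarith)
    · push_cast
      linarith [(abs_le.mp last).1]

/-- Almost equal gaps `T` give a chain of `K + 1` gaps, and each but the last contributes the
excess `ν` to the energy. -/
lemma exists_chain_of_gaps {G R ε ζ ℓ ν : ℝ} (hδ : 0 < D.δ n) (hG : 0 ≤ G) (hζ : 0 ≤ ζ) (K : ℕ)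
    (next : ∀ q, |D.pos n q| ≤ R → D.IsJump n q →
      ∃ r, D.ConsecutiveJumps n q r ∧ D.pos n r ≤ D.pos n q + G)
    (equal : ∀ p q r, D.ConsecutiveJumps n p q → D.ConsecutiveJumps n q r → |D.pos n p| ≤ R →
      |D.pos n r| ≤ R → |(D.pos n r - D.pos n q) - (D.pos n q - D.pos n p)| ≤ ζ)
    (excess : ∀ p q, D.ConsecutiveJumps n p q → |D.pos n p| ≤ R → |D.pos n q| ≤ R →
      ε ≤ |D.pos n q - D.pos n p - ℓ| → 2 / ℓ * (D.pos n q - D.pos n p) + ν ≤ D.E n p q)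
    {p q : ℕ} (hpq : D.ConsecutiveJumps n p q) (hp : -R ≤ D.pos n p)
    (hq : D.pos n q + K * G ≤ R) (far : ε + K * ζ ≤ |D.pos n q - D.pos n p - ℓ|) (j : ℕ)
    (hj : j ≤ K) :
    ∃ p' q', D.ConsecutiveJumps n p' q' ∧ p ≤ p' ∧ D.pos n q' ≤ D.pos n q + j * G ∧
      |(D.pos n q' - D.pos n p') - (D.pos n q - D.pos n p)| ≤ j * ζ ∧
      2 / ℓ * (D.pos n p' - D.pos n p) + j * ν ≤ D.E n p p' := by
  have mono := (D.strictMono_pos hδ).monotone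
  induction j with
  | zero => exact ⟨p, q, hpq, le_rfl, by simp, by simp, by simp [E, energy]⟩
  | succ j ih =>
    obtain ⟨p', q', hc, hpp', hq', near, hE⟩ := ih (by omega)
    have hjK : (j : ℝ) + 1 ≤ K := by exact_mod_cast hj
    have := mul_le_mul_of_nonneg_right hjK hG
    have := mul_le_mul_of_nonneg_right hjK hζ
    have := mono hpp'
    have := mono hc.1.le
    have hp'R : |D.pos n p'| ≤ R := abs_le.mpr ⟨by linarith, by linarith⟩
    have hq'R : |D.pos n q'| ≤ R := abs_le.mpr ⟨by linarith, by linarith⟩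
    obtain ⟨r, hr, hrG⟩ := next q' hq'R hc.2.2.1
    have := mono hr.1.le
    have hrR : |D.pos n r| ≤ R := abs_le.mpr ⟨by linarith, by linarith⟩
    push_cast
    refine ⟨q', r, hr, hpp'.trans hc.1.le, by linarith, ?_, ?_⟩
    · exact (abs_sub_le _ (D.pos n q' - D.pos n p') _).trans (by
        linarith [equal p' q' r hc hr hp'R hrR])
    · have gap_far : ε ≤ |D.pos n q' - D.pos n p' - ℓ| := by
        have := abs_sub_le (D.pos n q - D.pos n p) (D.pos n q' - D.pos n p') ℓ
        rw [abs_sub_comm (D.pos n q - D.pos n p) (D.pos n q' - D.pos n p')] at this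
        linarith
      have := excess p' q' hc hp'R hq'R gap_far
      rw [show D.E n p q' = D.E n p p' + D.E n p' q' from (energy_add _ _ _ _ hpp' hc.1.le).symm]
      linarith

end CellSequence

namespace BlowupSequence

variable (D : BlowupSequence)

lemma exists_prev_next_jump (hM : D.M ≠ 0) :
    ∃ G, 0 < G ∧ ∀ R, ∀ᶠ n in atTop, ∀ q, |D.pos n q| ≤ R → D.IsJump n q →
      ∃ p r, D.ConsecutiveJumps n p q ∧ D.ConsecutiveJumps n q r ∧
        D.pos n q - G ≤ D.pos n p ∧ D.pos n r ≤ D.pos n q + G := by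
  obtain ⟨G, hG, hsurround⟩ := D.exists_consecutiveJumps_around hM
  refine ⟨G + 1, by positivity, fun R => ?_⟩
  filter_upwards [hsurround (R + 1), D.eventually_δ_pos, D.eventually_δ_lt one_pos]
    with n hsurround hδ hδ1 q hq hJ
  have hq' := abs_le.mp hq
  obtain ⟨p, q', hpq, hp, hqq', le_p, -⟩ := hsurround q (by linarith)
  obtain rfl : q = q' := by
    by_contra h
    exact hpq.2.2.2 q hp (by omega) hJ
  obtain ⟨q', r, hqr, hq'q, hr, -, r_le⟩ := hsurround (q + 1) (by
    rw [D.pos_succ]; exact abs_le.mpr ⟨by linarith, by linarith⟩)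
  obtain rfl : q = q' := by
    by_contra h
    exact hqr.2.2.2 q (by omega) (by omega) hJ
  rw [D.pos_succ] at r_le
  exact ⟨p, r, hpq, hqr, by linarith, by linarith⟩

lemma eventually_excess_le_E {ℓ : ℝ} (hM : D.M ≠ 0) (hℓ : 0 < ℓ)
    (hopt : D.β * D.M ^ 2 * ℓ ^ 3 = 8) (R : ℝ) {ε : ℝ} (hε : 0 < ε) :
    ∀ᶠ n in atTop, ∀ p q, D.ConsecutiveJumps n p q → |D.pos n p| ≤ R → |D.pos n q| ≤ R →
      ε ≤ |D.pos n q - D.pos n p - ℓ| →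
      2 / ℓ * (D.pos n q - D.pos n p) + D.β * D.M ^ 2 * (ε ^ 2 * ℓ) / 12 ≤ D.E n p q := by
  have hβ := D.β_pos
  have hν : 0 < D.β * D.M ^ 2 * (ε ^ 2 * ℓ) / 24 := by positivity
  filter_upwards [D.eventually_cost_add_le_E R hν, D.le_cost hν, D.eventually_δ_pos]
    with n hE hcost hδ p q hpq hp hq far
  have lower := hE p q hpq.1 hp hq hpq.2.2.2
  have cost := hcost _ hpq.2.1
  have hT : 0 ≤ D.pos n q - D.pos n p :=
    sub_nonneg.mpr ((D.strictMono_pos hδ).monotone hpq.1.le)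
  have optimal := D.stepEnergy_eq_of_optimal hℓ hopt (D.pos n q - D.pos n p)
  unfold CellSequence.stepEnergy at optimal
  set T := D.pos n q - D.pos n p
  have : D.β * D.M ^ 2 / 12 * (ε ^ 2 * (0 + 2 * ℓ)) ≤
      D.β * D.M ^ 2 / 12 * ((T - ℓ) ^ 2 * (T + 2 * ℓ)) := by
    rw [← sq_abs (T - ℓ)]
    gcongr
  linarith

lemma eventually_E_le_of_optimal {ℓ : ℝ} (hℓ : 0 < ℓ) (hopt : D.β * D.M ^ 2 * ℓ ^ 3 = 8) (R : ℝ) :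
    ∀ᶠ n in atTop, ∀ A B, A ≤ B → |D.pos n A| ≤ R → |D.pos n B| ≤ R →
      D.E n A B ≤ 2 / ℓ * (D.pos n B - D.pos n A) + 15 := by
  have energy_ℓ : D.stepEnergy ℓ = 2 := by
    rw [D.stepEnergy_eq_of_optimal hℓ hopt, sub_self]
    field_simp
    ring
  obtain ⟨x, hx, hxR⟩ : ∃ x > 0, x * (2 * |R|) ≤ 1 := by
    refine ⟨(2 * |R| + 1)⁻¹, by positivity, ?_⟩
    rw [inv_mul_le_iff₀ (by positivity)]
    linarith
  have lt_ρ : D.stepEnergy ℓ / ℓ < 2 / ℓ + x := by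
    rw [energy_ℓ]
    exact lt_add_of_pos_right _ hx
  filter_upwards [D.eventually_E_le hℓ lt_ρ R] with n hE A B hAB hA hB
  have : x * (D.pos n B - D.pos n A) ≤ x * (2 * |R|) := by
    gcongr
    linarith [(abs_le.mp hA).1, (abs_le.mp hB).2, le_abs_self R]
  linarith [hE A B hAB hA hB]

/-- All gaps have asymptotically the optimal length `ℓ`: otherwise a long chain of equal,
suboptimal gaps would have too much energy compared with the optimal staircase. -/
lemma eventually_abs_gap_sub_le {ℓ : ℝ} (hM : D.M ≠ 0) (hℓ : 0 < ℓ)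
    (hopt : D.β * D.M ^ 2 * ℓ ^ 3 = 8) (R : ℝ) {ε : ℝ} (hε : 0 < ε) :
    ∀ᶠ n in atTop, ∀ p q, D.ConsecutiveJumps n p q → |D.pos n p| ≤ R → |D.pos n q| ≤ R →
      |D.pos n q - D.pos n p - ℓ| ≤ ε := by
  have hβ := D.β_pos
  obtain ⟨G, hG, hnext⟩ := D.exists_prev_next_jump hM
  set ν := D.β * D.M ^ 2 * ((ε / 2) ^ 2 * ℓ) / 12
  have hν : 0 < ν := by positivity
  obtain ⟨K, hK⟩ := exists_nat_gt (15 / ν)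
  rw [div_lt_iff₀ hν] at hK
  set R' := |R| + K * G
  have hζ : 0 < ε / (2 * (K + 1)) := by positivity
  have hζK : ε / 2 + K * (ε / (2 * (K + 1))) ≤ ε := by
    field_simp
    linarith
  filter_upwards [hnext R', D.eventually_abs_gap_sub_gap_le hM R' hζ,
    D.eventually_excess_le_E hM hℓ hopt R' (half_pos hε), D.eventually_δ_pos,
    D.eventually_E_le_of_optimal hℓ hopt R'] with n hnext equal excess hδ hE p q hpq hp hq
  by_contra! far
  have hR := le_abs_self R
  have : 0 ≤ K * G := by positivity
  have hp' := abs_le.mp hp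
  have next (q : ℕ) (hq : |D.pos n q| ≤ R') (hJ : D.IsJump n q) :
      ∃ r, D.ConsecutiveJumps n q r ∧ D.pos n r ≤ D.pos n q + G := by
    obtain ⟨_, r, _, hr, _, hrG⟩ := hnext q hq hJ
    exact ⟨r, hr, hrG⟩
  obtain ⟨p', q', hc, hpp', hq', -, lower⟩ := CellSequence.exists_chain_of_gaps hδ hG.le hζ.le K
    next equal excess hpq (by linarith) (by linarith [(abs_le.mp hq).2]) (by linarith) K le_rfl
  have le_p' := (D.strictMono_pos hδ).monotone hpp'
  have p'_le := (D.strictMono_pos hδ).monotone hc.1.le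
  have p'_le_R : D.pos n p' ≤ R' := by linarith [(abs_le.mp hq).2]
  have upper := hE p p' hpp' (hp.trans (by linarith)) (abs_le.mpr ⟨by linarith, p'_le_R⟩)
  change _ + K * ν ≤ _ at lower
  linarith

lemma eventually_exists_int_abs_sub_le {H : ℝ} (hM : D.M ≠ 0) (hH : 0 < H)
    (hopt : D.β * D.M ^ 2 * H ^ 3 = 1) (R : ℝ) {ε : ℝ} (hε : 0 < ε) :
    ∀ᶠ n in atTop, ∀ p q, D.IsJump n p → D.IsJump n q → |D.pos n p| ≤ R → |D.pos n q| ≤ R →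
      ∃ z : ℤ, |D.pos n q - D.pos n p - 2 * H * z| ≤ ε := by
  have hζ : 0 < min H (ε / (2 * |R| / H + 1)) := by positivity
  have hζε : (2 * |R| / H + 1) * min H (ε / (2 * |R| / H + 1)) ≤ ε := by
    rw [← le_div_iff₀' (by positivity)]
    exact min_le_right _ _
  filter_upwards [D.eventually_abs_gap_sub_le (ℓ := 2 * H) hM (by positivity)
    (by rw [mul_pow]; linarith) R hζ, D.eventually_δ_pos] with n hgap hδ p q hJp hJq hp hq
  set ζ := min H (ε / (2 * |R| / H + 1))
  have ordered {p q : ℕ} (hpq : p ≤ q) (hJp : D.IsJump n p) (hJq : D.IsJump n q)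
      (hp : |D.pos n p| ≤ R) (hq : |D.pos n q| ≤ R) :
      ∃ m : ℕ, |D.pos n q - D.pos n p - 2 * H * m| ≤ ε := by
    obtain ⟨m, near, le_sub⟩ := CellSequence.exists_nat_abs_sub_le hδ (min_le_left _ _) hgap hJp hp
      q hJq hpq hq
    have hm : (m : ℝ) ≤ 2 * |R| / H := by
      rw [le_div_iff₀ hH]
      linarith [(abs_le.mp hp).1, (abs_le.mp hq).2, le_abs_self R]
    refine ⟨m, near.trans (le_trans ?_ hζε)⟩
    gcongr
    linarith
  rcases le_total p q with h | h
  · obtain ⟨m, hm⟩ := ordered h hJp hJq hp hq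
    exact ⟨m, by exact_mod_cast hm⟩
  · obtain ⟨m, hm⟩ := ordered h hJq hJp hq hp
    refine ⟨-m, ?_⟩
    rw [← abs_neg]
    convert hm using 2
    push_cast
    ring

lemma exists_eventually_jump_near {H : ℝ} (hM : D.M ≠ 0) (hH : 0 < H)
    (hopt : D.β * D.M ^ 2 * H ^ 3 = 1) (R : ℝ) :
    ∃ R', ∀ ε > 0, ∀ᶠ n in atTop, ∀ i, |D.pos n i| ≤ R → ∃ p, D.IsJump n p ∧ |D.pos n p| ≤ R' ∧
      |D.pos n i - (D.pos n p + H)| ≤ H + ε ∧ |D.W n i - D.M * (D.pos n p + H)| ≤ |D.M| * ε := by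
  have : 0 < |D.M| := abs_pos.mpr hM
  obtain ⟨G, hG, hsurround⟩ := D.exists_consecutiveJumps_around hM
  refine ⟨R + G, fun ε hε => ?_⟩
  filter_upwards [hsurround R, D.eventually_δ_pos,
    D.eventually_abs_gap_sub_le (ℓ := 2 * H) hM (by positivity) (by rw [mul_pow]; linarith)
      (R + G) hε,
    D.eventually_abs_plateau_sub_le (R + G) (show 0 < |D.M| * (ε / 2) by positivity)]
    with n hsurround hδ hgap hplateau i hi
  obtain ⟨p, q, hpq, hpi, hiq, le_p, q_le⟩ := hsurround i hi
  have hi' := abs_le.mp hi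
  have := (D.strictMono_pos hδ).monotone hpi.le
  have := (D.strictMono_pos hδ).monotone hiq
  have hp : |D.pos n p| ≤ R + G := abs_le.mpr ⟨by linarith, by linarith⟩
  have hq : |D.pos n q| ≤ R + G := abs_le.mpr ⟨by linarith, by linarith⟩
  have gap := hgap p q hpq hp hq
  have gap' := abs_le.mp gap
  refine ⟨p, hpq.2.1, hp, abs_le.mpr ⟨by linarith, by linarith⟩, ?_⟩
  have mid : |D.M * ((D.pos n q - D.pos n p - 2 * H) / 2)| ≤ |D.M| * (ε / 2) := by
    rw [abs_mul, abs_div, abs_two]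
    gcongr
  rw [show D.W n i - D.M * (D.pos n p + H) = (D.W n i - D.M * ((D.pos n p + D.pos n q) / 2)) +
    D.M * ((D.pos n q - D.pos n p - 2 * H) / 2) by ring]
  exact (abs_add_le _ _).trans (by linarith [hplateau p q hpq hp hq i hpi hiq])

/-- The staircase is determined by the value of `W` at the origin. -/
lemma eventually_exists_step {H : ℝ} (hM : D.M ≠ 0) (hH : 0 < H)
    (hopt : D.β * D.M ^ 2 * H ^ 3 = 1) (R : ℝ) {ε : ℝ} (hε : 0 < ε) :
    ∀ᶠ n in atTop, ∀ i, |D.pos n i| ≤ R → ∃ z : ℤ,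
      |D.W n i - D.M * (D.W n (D.k n) / D.M + 2 * H * z)| ≤ |D.M| * ε ∧
      |D.pos n i - D.W n (D.k n) / D.M - 2 * H * z| ≤ H + ε := by
  have hM' : 0 < |D.M| := abs_pos.mpr hM
  obtain ⟨R', hjump⟩ := D.exists_eventually_jump_near hM hH hopt |R|
  have hε3 : 0 < ε / 3 := by positivity
  filter_upwards [hjump _ hε3, D.eventually_exists_int_abs_sub_le hM hH hopt R' hε3]
    with n hjump hint i hi
  obtain ⟨p, hJp, hp, pos_near, W_near⟩ := hjump i (hi.trans (le_abs_self R))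
  obtain ⟨p₀, hJp₀, hp₀, -, W₀_near⟩ := hjump (D.k n) (by rw [D.pos_k, abs_zero]; positivity)
  obtain ⟨z, hz⟩ := hint p₀ p hJp₀ hJp hp₀ hp
  set ξ := D.W n (D.k n) / D.M
  have hξ : D.W n (D.k n) = D.M * ξ := by simp only [ξ]; field_simp
  have ξ_near : |ξ - (D.pos n p₀ + H)| ≤ ε / 3 := by
    rw [hξ, ← mul_sub, abs_mul] at W₀_near
    exact le_of_mul_le_mul_left W₀_near hM'
  have centre_near : |D.pos n p + H - (ξ + 2 * H * z)| ≤ 2 * (ε / 3) := by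
    rw [show D.pos n p + H - (ξ + 2 * H * z) =
      (D.pos n p - D.pos n p₀ - 2 * H * z) - (ξ - (D.pos n p₀ + H)) by ring]
    exact (abs_sub _ _).trans (by linarith)
  refine ⟨z, ?_, ?_⟩
  · have : |D.M * (D.pos n p + H) - D.M * (ξ + 2 * H * z)| ≤ |D.M| * (2 * (ε / 3)) := by
      rw [← mul_sub, abs_mul]
      gcongr
    exact (abs_sub_le _ (D.M * (D.pos n p + H)) _).trans (by linarith)
  · rw [sub_sub]
    exact (abs_sub_le _ (D.pos n p + H) _).trans (by linarith)

open Classical in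
lemma eventually_sum_abs_incr_le_of_M_eq_zero (hM : D.M = 0) (R : ℝ) {η : ℝ} (hη : 0 < η) :
    ∀ᶠ n in atTop, ∀ A B, A ≤ B → |D.pos n A| ≤ R → |D.pos n B| ≤ R →
      ∑ i ∈ Finset.Ico A B with D.IsJump n i, |D.incr n i| ≤ η := by
  have hβ := D.β_pos
  obtain ⟨X, hX, hE⟩ := D.exists_eventually_E_le R
  set ε := η / (2 * X) with hε
  have hε0 : 0 < ε := by positivity
  filter_upwards [hE, D.eventually_abs_W_le_of_M_eq_zero hM (R + 1) hε0, D.eventually_regular R,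
    D.le_cost (show (0 : ℝ) < 1 / 3 by norm_num), D.eventually_δ_lt one_pos]
    with n hE hW ⟨hδ, hg, _⟩ one_le hδ1 A B hAB hA hB
  calc ∑ i ∈ Finset.Ico A B with D.IsJump n i, |D.incr n i|
      ≤ ∑ i ∈ Finset.Ico A B, 2 * ε * (D.g n (D.incr n i) +
          D.β * D.δ n * (D.W n i - D.a n i) ^ 2) := by
        rw [Finset.sum_filter]
        refine Finset.sum_le_sum fun i hi => ?_
        have cost_nonneg := hg.nonneg (D.incr n i)
        have fidelity_nonneg : 0 ≤ D.β * D.δ n * (D.W n i - D.a n i) ^ 2 := by positivity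
        split_ifs with hJ
        · rw [Finset.mem_Ico] at hi
          have hi' := abs_le.mp (D.abs_pos_le hδ hi.1 hi.2.le hA hB)
          have Wi := hW i (abs_le.mpr ⟨by linarith, by linarith⟩)
          have Wi' := hW (i + 1) (by rw [D.pos_succ]; exact abs_le.mpr ⟨by linarith, by linarith⟩)
          calc |D.incr n i| ≤ 2 * ε * 1 := (abs_sub _ _).trans (by linarith)
            _ ≤ _ := by gcongr; linarith [one_le _ hJ]
        · positivity
    _ = 2 * ε * D.E n A B := by rw [← Finset.mul_sum]; rfl
    _ ≤ 2 * ε * X := by gcongr; exact hE A B hAB hA hB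
    _ = η := by rw [hε]; field_simp

open Classical in
/-- The increments at the jumps have the sign of `M`. -/
lemma eventually_sum_jumps_le_of_M_ne_zero (hM : D.M ≠ 0) (R : ℝ) {η : ℝ} (hη : 0 < η) :
    ∀ᶠ n in atTop, ∀ A B, A ≤ B → |D.pos n A| ≤ R → |D.pos n B| ≤ R →
      ∑ i ∈ Finset.Ico A B with D.IsJump n i, |D.incr n i| ≤ |D.W n B - D.W n A| + η := by
  obtain ⟨G, hG, hnext⟩ := D.exists_prev_next_jump hM
  obtain ⟨c, hc, hincr⟩ := D.eventually_incr_mul_M_ge hM (R + G)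
  filter_upwards [D.eventually_sum_abs_incr_le R hη, hnext R, hincr, D.eventually_δ_pos]
    with n hsmall hnext hincr hδ A B hAB hA hB
  have mono := (D.strictMono_pos hδ).monotone
  have incr_mul_pos {i : ℕ} (hi : |D.pos n i| ≤ R) (hJ : D.IsJump n i) :
      0 < D.incr n i * D.M := by
    obtain ⟨p, r, hp, hr, le_p, r_le⟩ := hnext i hi hJ
    have hi' := abs_le.mp hi
    have := mono hp.1.le
    have := mono hr.1.le
    exact hc.trans_le (hincr p i r hp hr (abs_le.mpr ⟨by linarith, by linarith⟩)
      (abs_le.mpr ⟨by linarith, by linarith⟩))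
  have abs_incr {i : ℕ} (hi : i ∈ Finset.Ico A B) (hJ : D.IsJump n i) :
      |D.incr n i| = SignType.sign D.M * D.incr n i := by
    rw [Finset.mem_Ico] at hi
    have := incr_mul_pos (D.abs_pos_le hδ hi.1 hi.2.le hA hB) hJ
    rcases lt_or_gt_of_ne hM with h | h
    · rw [sign_neg h, abs_of_neg (by nlinarith)]; simp
    · rw [sign_pos h, abs_of_pos (by nlinarith)]; simp
  have abs_sign : |(SignType.sign D.M : ℝ)| = 1 := by
    rcases lt_or_gt_of_ne hM with h | h
    · simp [sign_neg h]
    · simp [sign_pos h]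
  have split := Finset.sum_filter_add_sum_filter_not (Finset.Ico A B) (D.IsJump n) (D.incr n)
  rw [show ∑ i ∈ Finset.Ico A B, D.incr n i = D.W n B - D.W n A from
    Finset.sum_Ico_sub _ hAB] at split
  calc ∑ i ∈ Finset.Ico A B with D.IsJump n i, |D.incr n i|
      = SignType.sign D.M * ∑ i ∈ Finset.Ico A B with D.IsJump n i, D.incr n i := by
        rw [Finset.mul_sum]
        refine Finset.sum_congr rfl fun i hi => ?_
        rw [Finset.mem_filter] at hi
        exact abs_incr hi.1 hi.2
    _ ≤ |∑ i ∈ Finset.Ico A B with D.IsJump n i, D.incr n i| := by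
        refine (le_abs_self _).trans_eq ?_
        rw [abs_mul, abs_sign, one_mul]
    _ = |(D.W n B - D.W n A) - ∑ i ∈ Finset.Ico A B with ¬ D.IsJump n i, D.incr n i| := by
        rw [← split, add_sub_cancel_right]
    _ ≤ |D.W n B - D.W n A| + ∑ i ∈ Finset.Ico A B with ¬ D.IsJump n i, |D.incr n i| :=
        (abs_sub _ _).trans (by gcongr; exact Finset.abs_sum_le_sum_abs _ _)
    _ ≤ |D.W n B - D.W n A| + η := by gcongr; exact hsmall A B hAB hA hB

lemma eventually_sum_abs_incr_le_abs_sub (R : ℝ) {η : ℝ} (hη : 0 < η) :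
    ∀ᶠ n in atTop, ∀ A B, A ≤ B → |D.pos n A| ≤ R → |D.pos n B| ≤ R →
      ∑ i ∈ Finset.Ico A B, |D.incr n i| ≤ |D.W n B - D.W n A| + η := by
  classical
  have hη2 := half_pos hη
  have jumps : ∀ᶠ n in atTop, ∀ A B, A ≤ B → |D.pos n A| ≤ R → |D.pos n B| ≤ R →
      ∑ i ∈ Finset.Ico A B with D.IsJump n i, |D.incr n i| ≤ |D.W n B - D.W n A| + η / 2 := by
    by_cases hM : D.M = 0
    · filter_upwards [D.eventually_sum_abs_incr_le_of_M_eq_zero hM R hη2] with n h A B hAB hA hB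
      linarith [h A B hAB hA hB, abs_nonneg (D.W n B - D.W n A)]
    · exact D.eventually_sum_jumps_le_of_M_ne_zero hM R hη2
  filter_upwards [jumps, D.eventually_sum_abs_incr_le R hη2] with n hjumps hsmall A B hAB hA hB
  rw [← Finset.sum_filter_add_sum_filter_not (Finset.Ico A B) (D.IsJump n)]
  linarith [hjumps A B hAB hA hB, hsmall A B hAB hA hB]

end BlowupSequence

/-! ### Strict convergence of functions of bounded variation -/

lemma eVariationOn_Icc_le_of_abs_sub_le {f T : ℝ → ℝ} {a b : ℝ} (hab : a ≤ b)
    (h : ∀ x y, a ≤ x → x ≤ y → y ≤ b → |f y - f x| ≤ T y - T x) :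
    eVariationOn f (Icc a b) ≤ ENNReal.ofReal (T b - T a) := by
  have hT : MonotoneOn T (Icc a b) := fun x hx y hy hxy =>
    sub_nonneg.mp ((abs_nonneg _).trans (h x y hx.1 hxy hy.2))
  refine le_trans (iSup_le fun ⟨n, u, hu, hus⟩ => ?_)
    (inter_self (Icc a b) ▸
      hT.eVariationOn_eq (left_mem_Icc.mpr hab) (right_mem_Icc.mpr hab)).le
  refine le_trans (Finset.sum_le_sum fun i _ => ?_) (eVariationOn.sum_le hu hus)
  rw [edist_dist, edist_dist, Real.dist_eq, Real.dist_eq]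
  exact ENNReal.ofReal_le_ofReal
    ((h _ _ (hus i).1 (hu i.le_succ) (hus (i + 1)).2).trans (le_abs_self _))

lemma edist_le_eVariationOn_of_mem_closure {f : ℝ → ℝ} {s : Set ℝ} {a b : ℝ} (ha : a ∈ closure s)
    (hb : b ∈ closure s) (hfa : ContinuousWithinAt f s a) (hfb : ContinuousWithinAt f s b) :
    edist (f a) (f b) ≤ eVariationOn f s := by
  have := mem_closure_iff_nhdsWithin_neBot.mp ha
  have := mem_closure_iff_nhdsWithin_neBot.mp hb
  have lim : Tendsto (fun p : ℝ × ℝ => edist (f p.1) (f p.2))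
      (nhdsWithin a s ×ˢ nhdsWithin b s) (nhds (edist (f a) (f b))) :=
    (Tendsto.comp hfa tendsto_fst).edist (Tendsto.comp hfb tendsto_snd)
  refine le_of_tendsto lim ?_
  filter_upwards [prod_mem_prod self_mem_nhdsWithin self_mem_nhdsWithin] with p hp
  exact eVariationOn.edist_le f hp.1 hp.2

lemma abs_sub_le_of_eVariationOn_le {f : ℝ → ℝ} {a b x ε : ℝ} (hε : 0 ≤ ε) (hx : x ∈ Icc a b)
    (h : eVariationOn f (Icc a b) ≤ edist (f a) (f b) + ENNReal.ofReal ε) :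
    |f x - f a| ≤ |f b - f a| + ε := by
  have := (eVariationOn.edist_le f hx (left_mem_Icc.mpr (hx.1.trans hx.2))).trans h
  rw [edist_comm (f a), edist_dist, edist_dist, ← ENNReal.ofReal_add dist_nonneg hε,
    ENNReal.ofReal_le_ofReal_iff (by positivity)] at this
  exact this

lemma aestronglyMeasurable_restrict_of_eVariationOn_ne_top {f : ℝ → ℝ} {s : Set ℝ}
    (hs : MeasurableSet s) (h : eVariationOn f s ≠ ⊤) :
    AEStronglyMeasurable f (volume.restrict s) := by
  obtain ⟨p, q, hp, hq, rfl⟩ :=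
    (show BoundedVariationOn f s from h).locallyBoundedVariationOn.exists_monotoneOn_sub_monotoneOn
  exact ((aemeasurable_restrict_of_monotoneOn hs hp).sub
    (aemeasurable_restrict_of_monotoneOn hs hq)).aestronglyMeasurable

section StrictConvergence

variable {w : ℕ → ℝ → ℝ} {v : ℝ → ℝ} {a b : ℝ}

lemma tendsto_integral_abs_sub_of_eVariationOn_le (hab : a ≤ b)
    (hcount : {x | ¬ContinuousAt v x}.Countable) (ha : ContinuousAt v a) (hb : ContinuousAt v b)
    (hv : eVariationOn v (Icc a b) ≤ edist (v a) (v b))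
    (hwv : ∀ x ∈ Icc a b, ContinuousAt v x → Tendsto (fun k => w k x) atTop (nhds (v x)))
    (hvar : ∀ ε : ℝ, 0 < ε → ∀ᶠ k in atTop,
      eVariationOn (w k) (Icc a b) ≤ edist (w k a) (w k b) + ENNReal.ofReal ε) :
    Tendsto (fun k => ∫ x in Ioo a b, |w k x - v x|) atTop (nhds 0) := by
  have wa := hwv a (left_mem_Icc.mpr hab) ha
  have wb := hwv b (right_mem_Icc.mpr hab) hb
  have near_a := wa.abs.eventually_le_const (lt_add_one |v a|)
  have near_ab := (wb.sub wa).abs.eventually_le_const (lt_add_one |v b - v a|)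
  have lim := tendsto_integral_filter_of_dominated_convergence
    (μ := volume.restrict (Ioo a b)) (l := atTop) (F := fun k x => |w k x - v x|)
    (f := fun _ => (0 : ℝ)) (fun _ => 2 * |v a| + 2 * |v b - v a| + 3) ?_ ?_ (integrable_const _) ?_
  · simpa using lim
  · filter_upwards [hvar 1 one_pos] with k hk
    have : AEStronglyMeasurable (w k) (volume.restrict (Ioo a b)) :=
      aestronglyMeasurable_restrict_of_eVariationOn_ne_top measurableSet_Ioo (ne_top_of_le_ne_top
        (ENNReal.add_ne_top.mpr ⟨edist_ne_top _ _, ENNReal.ofReal_ne_top⟩)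
        ((eVariationOn.mono _ Ioo_subset_Icc_self).trans hk))
    exact (this.sub (measurable_of_countable_not_continuousAt hcount).aestronglyMeasurable).norm
  · filter_upwards [hvar 1 one_pos, near_a, near_ab] with k hk hka hkab
    filter_upwards [ae_restrict_mem measurableSet_Ioo] with x hx
    rw [Real.norm_eq_abs, abs_abs]
    have hx' := Ioo_subset_Icc_self hx
    have w_near := abs_sub_le_of_eVariationOn_le zero_le_one hx' hk
    have v_near := abs_sub_le_of_eVariationOn_le le_rfl hx' (by simpa using hv)
    grind
  · filter_upwards [ae_restrict_of_ae (hcount.ae_notMem volume), ae_restrict_mem measurableSet_Ioo]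
      with x hx hxab
    simpa using ((hwv x (Ioo_subset_Icc_self hxab) (not_not.mp hx)).sub_const (v x)).abs

lemma tendsto_eVariationOn_of_eVariationOn_le (hab : a < b)
    (hcount : {x | ¬ContinuousAt v x}.Countable) (ha : ContinuousAt v a) (hb : ContinuousAt v b)
    (hv : eVariationOn v (Icc a b) ≤ edist (v a) (v b))
    (hwv : ∀ x ∈ Icc a b, ContinuousAt v x → Tendsto (fun k => w k x) atTop (nhds (v x)))
    (hvar : ∀ ε : ℝ, 0 < ε → ∀ᶠ k in atTop,
      eVariationOn (w k) (Icc a b) ≤ edist (w k a) (w k b) + ENNReal.ofReal ε) :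
    Tendsto (fun k => eVariationOn (w k) (Ioo a b)) atTop (nhds (eVariationOn v (Ioo a b))) := by
  have Icc_subset : Icc a b ⊆ closure (Ioo a b ∩ {x | ContinuousAt v x}) := by
    rw [← closure_Ioo hab.ne]
    refine closure_minimal ?_ isClosed_closure
    exact Dense.open_subset_closure_inter (by simpa [compl_ofPred] using hcount.dense_compl ℝ)
      isOpen_Ioo
  have le_dense : edist (v a) (v b) ≤ eVariationOn v (Ioo a b ∩ {x | ContinuousAt v x}) :=
    edist_le_eVariationOn_of_mem_closure (Icc_subset (left_mem_Icc.mpr hab.le))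
      (Icc_subset (right_mem_Icc.mpr hab.le)) ha.continuousWithinAt hb.continuousWithinAt
  have le_edist := (eVariationOn.mono v Ioo_subset_Icc_self).trans hv
  refine tendsto_order.mpr ⟨fun c hc => ?_, fun c hc => ?_⟩
  · have lower := eVariationOn.lowerSemicontinuous_aux
      (fun x hx => hwv x (Ioo_subset_Icc_self hx.1) hx.2) (hc.trans_le (le_edist.trans le_dense))
    filter_upwards [lower] with k hk
    exact hk.trans_le (eVariationOn.mono _ inter_subset_left)
  · have hc : edist (v a) (v b) < c :=
      (le_dense.trans (eVariationOn.mono _ inter_subset_left)).trans_lt hc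
    obtain ⟨ε, hε, hεc⟩ := ENNReal.lt_iff_exists_add_pos_lt.mp hc
    have lim := ((hwv a (left_mem_Icc.mpr hab.le) ha).edist
      (hwv b (right_mem_Icc.mpr hab.le) hb)).add_const (ε : ENNReal)
    filter_upwards [hvar ε hε, lim.eventually_lt_const hεc] with k hk hkc
    rw [ENNReal.ofReal_coe_nnreal] at hk
    exact ((eVariationOn.mono _ Ioo_subset_Icc_self).trans hk).trans_lt hkc

end StrictConvergence

namespace CellSequence

variable (D : CellSequence) {n : ℕ}

lemma cell_mono (hδ : 0 < D.δ n) : Monotone (D.cell n) := fun x y h => by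
  unfold cell
  gcongr

lemma abs_pos_cell_le {R x : ℝ} (hδ : 0 < D.δ n) (hk : R ≤ D.k n * D.δ n) (hx : |x| ≤ R) :
    |D.pos n (D.cell n x)| ≤ R + D.δ n := by
  have hx' := abs_le.mp hx
  have := D.pos_cell_le_and_lt hδ (x := x) (by linarith)
  exact abs_le.mpr ⟨by linarith, by linarith⟩

end CellSequence

namespace BlowupSequence

variable (D : BlowupSequence) {w : ℕ → ℝ → ℝ}

lemma eventually_cell (R : ℝ) : ∀ᶠ n in atTop, ∀ x, |x| ≤ R →
    |D.pos n (D.cell n x)| ≤ R + 1 ∧ D.pos n (D.cell n x) ≤ x ∧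
      x < D.pos n (D.cell n x) + D.δ n := by
  filter_upwards [D.eventually_δ_pos, D.eventually_δ_lt one_pos, D.exhausting R]
    with n hδ hδ1 hk x hx
  exact ⟨(D.abs_pos_cell_le hδ hk.1 hx).trans (by linarith),
    D.pos_cell_le_and_lt hδ (by linarith [(abs_le.mp hx).1])⟩

lemma eventually_eVariationOn_le
    (hw : ∀ R, ∀ᶠ n in atTop, ∀ x, |x| ≤ R → w n x = D.W n (D.cell n x)) {a b : ℝ} (hab : a ≤ b)
    {ε : ℝ} (hε : 0 < ε) :
    ∀ᶠ n in atTop,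
      eVariationOn (w n) (Icc a b) ≤ edist (w n a) (w n b) + ENNReal.ofReal ε := by
  set R := max |a| |b|
  have abs_le_R (x : ℝ) (hax : a ≤ x) (hxb : x ≤ b) : |x| ≤ R :=
    abs_le_max_abs_abs hax hxb
  filter_upwards [hw R, D.eventually_δ_pos, D.eventually_cell R,
    D.eventually_sum_abs_incr_le_abs_sub (R + 1) hε] with n hw hδ hcell hvar
  set T : ℝ → ℝ := fun x => ∑ i ∈ Finset.range (D.cell n x), |D.incr n i|
  have T_sub (x y : ℝ) (hxy : x ≤ y) :
      T y - T x = ∑ i ∈ Finset.Ico (D.cell n x) (D.cell n y), |D.incr n i| :=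
    (Finset.sum_Ico_eq_sub _ (D.cell_mono hδ hxy)).symm
  have le_T := eVariationOn_Icc_le_of_abs_sub_le (f := w n) (T := T) hab fun x y hx hxy hy => by
    rw [T_sub x y hxy, hw x (abs_le_R x hx (hxy.trans hy)), hw y (abs_le_R y (hx.trans hxy) hy),
      ← Finset.sum_Ico_sub _ (D.cell_mono hδ hxy)]
    exact Finset.abs_sum_le_sum_abs _ _
  refine le_T.trans ?_
  have ha := abs_le_R a le_rfl hab
  have hb := abs_le_R b hab le_rfl
  rw [edist_comm, edist_dist, ← ENNReal.ofReal_add dist_nonneg hε.le, T_sub a b hab, hw a ha,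
    hw b hb]
  exact ENNReal.ofReal_le_ofReal (hvar _ _ (D.cell_mono hδ hab) (hcell a ha).1 (hcell b hb).1)

lemma locStrictBV_of_tendsto
    (hw : ∀ R, ∀ᶠ n in atTop, ∀ x, |x| ≤ R → w n x = D.W n (D.cell n x))
    {nk : ℕ → ℕ} (hnk : Tendsto nk atTop atTop) {v : ℝ → ℝ}
    (hcount : {x | ¬ContinuousAt v x}.Countable)
    (hv : ∀ a b, a ≤ b → eVariationOn v (Icc a b) ≤ edist (v a) (v b))
    (hwv : ∀ x, ContinuousAt v x → Tendsto (fun h => w (nk h) x) atTop (nhds (v x))) :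
    LocStrictBV (fun h => w (nk h)) v := fun a b hab ha hb =>
  have hvar (ε : ℝ) (hε : 0 < ε) := hnk.eventually (D.eventually_eVariationOn_le hw hab.le hε)
  ⟨tendsto_integral_abs_sub_of_eVariationOn_le hab.le hcount ha hb (hv a b hab.le)
    (fun x _ => hwv x) hvar, tendsto_eVariationOn_of_eVariationOn_le hab hcount ha hb
    (hv a b hab.le) (fun x _ => hwv x) hvar⟩

end BlowupSequence

/-! ### Oblique translations of the staircase -/

lemma stairS_le (s : ℝ) : stairS s ≤ s + 1 := by
  linarith [Int.floor_le ((s + 1) / 2), show stairS s = 2 * (⌊(s + 1) / 2⌋ : ℤ) from rfl]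

lemma lt_stairS_add_one (s : ℝ) : s < stairS s + 1 := by
  linarith [Int.lt_floor_add_one ((s + 1) / 2), show stairS s = 2 * (⌊(s + 1) / 2⌋ : ℤ) from rfl]

lemma stairS_mono : Monotone stairS := fun s t h => by
  have : ⌊(s + 1) / 2⌋ ≤ ⌊(t + 1) / 2⌋ := Int.floor_le_floor (by linarith)
  unfold stairS
  exact_mod_cast (by omega : 2 * ⌊(s + 1) / 2⌋ ≤ 2 * ⌊(t + 1) / 2⌋)

lemma stairS_eq_or_add_two_le (s : ℝ) (z : ℤ) :
    stairS s = 2 * z ∨ stairS s + 2 ≤ 2 * z ∨ 2 * z + 2 ≤ stairS s := by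
  unfold stairS
  exact_mod_cast (by omega : 2 * ⌊(s + 1) / 2⌋ = 2 * z ∨ 2 * ⌊(s + 1) / 2⌋ + 2 ≤ 2 * z ∨
    2 * z + 2 ≤ 2 * ⌊(s + 1) / 2⌋)

lemma stairS_lt_of_continuousAt {s : ℝ} (hs : ContinuousAt stairS s) : stairS s < s + 1 := by
  refine (stairS_le s).lt_of_ne fun heq => ?_
  have near : ∀ᶠ t in nhdsWithin s (Iio s), stairS s - 2 < stairS t :=
    (hs.eventually_const_lt (by linarith)).filter_mono nhdsWithin_le_nhds
  obtain ⟨t, ht, hts⟩ := (near.and self_mem_nhdsWithin).exists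
  have := stairS_le t
  have : t < s := hts
  rcases stairS_eq_or_add_two_le t ⌊(s + 1) / 2⌋ with h | h | h <;>
    linarith [show stairS s = 2 * (⌊(s + 1) / 2⌋ : ℤ) from rfl]

lemma exists_stairS_eq_of_continuousAt {s : ℝ} (hs : ContinuousAt stairS s) :
    ∃ γ > 0, ∀ z : ℤ, |s - 2 * z| < 1 + γ → stairS s = 2 * z := by
  have h₁ := stairS_lt_of_continuousAt hs
  have h₂ := lt_stairS_add_one s
  refine ⟨min (s + 1 - stairS s) (stairS s + 1 - s), lt_min (by linarith) (by linarith),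
    fun z hz => ?_⟩
  have := min_le_left (s + 1 - stairS s) (stairS s + 1 - s)
  have := min_le_right (s + 1 - stairS s) (stairS s + 1 - s)
  have hz' := abs_lt.mp hz
  rcases stairS_eq_or_add_two_le s z with h | h | h <;> linarith

/-- The translation of the canonical `(H, V)`-staircase along its diagonal by the fraction `τ` of
the vector `(H, V)`. -/
noncomputable def obliqueStair (H V τ x : ℝ) : ℝ := canStair H V (x - H * τ) + V * τ

lemma obl_obliqueStair (H V : ℝ) {τ : ℝ} (hτ : |τ| ≤ 1) : Obl H V (obliqueStair H V τ) :=
  ⟨τ, abs_le.mp hτ, fun _ => rfl⟩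

lemma obliqueStair_sub (H V τ x y : ℝ) : obliqueStair H V τ y - obliqueStair H V τ x =
    V * (stairS ((y - H * τ) / H) - stairS ((x - H * τ) / H)) := by
  unfold obliqueStair canStair; ring

lemma eVariationOn_obliqueStair_le {H : ℝ} (hH : 0 ≤ H) (V τ : ℝ) {a b : ℝ} (hab : a ≤ b) :
    eVariationOn (obliqueStair H V τ) (Icc a b) ≤
      edist (obliqueStair H V τ a) (obliqueStair H V τ b) := by
  have abs_sub (x y : ℝ) (hxy : x ≤ y) : |obliqueStair H V τ y - obliqueStair H V τ x| =
      |V| * stairS ((y - H * τ) / H) - |V| * stairS ((x - H * τ) / H) := by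
    rw [obliqueStair_sub, abs_mul, abs_of_nonneg (sub_nonneg.mpr (stairS_mono (by gcongr))),
      mul_sub]
  rw [edist_comm, edist_dist, Real.dist_eq, abs_sub a b hab]
  exact eVariationOn_Icc_le_of_abs_sub_le (T := fun x => |V| * stairS ((x - H * τ) / H)) hab
    fun x y _ hxy _ => (abs_sub x y hxy).le

lemma countable_not_continuousAt_obliqueStair {H : ℝ} (hH : 0 ≤ H) (V τ : ℝ) :
    {x | ¬ContinuousAt (obliqueStair H V τ) x}.Countable := by
  have mono : Monotone fun x => stairS ((x - H * τ) / H) := fun x y h => stairS_mono (by gcongr)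
  exact mono.countable_not_continuousAt.mono fun x => mt fun h =>
    (h.const_mul V).add_const (V * τ)

lemma continuousAt_stairS_of_obliqueStair {H V τ x : ℝ} (hH : H ≠ 0) (hV : V ≠ 0)
    (hx : ContinuousAt (obliqueStair H V τ) x) : ContinuousAt stairS ((x - H * τ) / H) := by
  have eq : stairS = fun s => (obliqueStair H V τ (H * s + H * τ) - V * τ) / V := by
    funext s
    unfold obliqueStair canStair
    field_simp
    simp
  have hx' : H * ((x - H * τ) / H) + H * τ = x := by field_simp; ring
  rw [← hx'] at hx
  rw [eq]
  exact ((hx.comp (f := fun s => H * s + H * τ) (by fun_prop)).sub_const _).div_const _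

namespace BlowupSequence

variable (D : BlowupSequence) {w : ℕ → ℝ → ℝ} {nk : ℕ → ℕ} {H : ℝ}

lemma tendsto_zero_of_M_eq_zero (hM : D.M = 0)
    (hw : ∀ R, ∀ᶠ n in atTop, ∀ x, |x| ≤ R → w n x = D.W n (D.cell n x)) (x : ℝ) :
    Tendsto (fun n => w n x) atTop (nhds 0) := by
  rw [Metric.tendsto_nhds]
  intro ε hε
  filter_upwards [D.eventually_abs_W_le_of_M_eq_zero hM (|x| + 1) (half_pos hε), hw |x|,
    D.eventually_cell |x|] with n hW hw hcell
  rw [hw x le_rfl, Real.dist_eq, sub_zero]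
  exact (hW _ (hcell x le_rfl).1).trans_lt (half_lt_self hε)

lemma eventually_abs_W_k_div_le (hM : D.M ≠ 0) (hH : 0 < H)
    (hopt : D.β * D.M ^ 2 * H ^ 3 = 1) {ε : ℝ} (hε : 0 < ε) :
    ∀ᶠ n in atTop, |D.W n (D.k n) / D.M| ≤ H + ε := by
  have hε' : 0 < min ε H := lt_min hε hH
  filter_upwards [D.eventually_exists_step hM hH hopt 0 hε'] with n hn
  obtain ⟨z, level, near⟩ := hn (D.k n) (by simp [D.pos_k])
  have : D.W n (D.k n) - D.M * (D.W n (D.k n) / D.M + 2 * H * z) = D.M * -(2 * H * z) := by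
    field_simp; ring
  rw [this, abs_mul, mul_le_mul_iff_right₀ (abs_pos.mpr hM), abs_neg, abs_mul,
    abs_of_pos (by positivity : 0 < 2 * H)] at level
  have abs_z_lt : |(z : ℝ)| < 1 := by
    have := min_le_right ε H
    by_contra! h
    nlinarith
  obtain rfl : z = 0 := Int.abs_lt_one_iff.mp (by exact_mod_cast abs_z_lt)
  rw [D.pos_k, Int.cast_zero, mul_zero, sub_zero, zero_sub, abs_neg] at near
  exact near.trans (by linarith [min_le_left ε H])

lemma tendsto_obliqueStair (hM : D.M ≠ 0) (hH : 0 < H) (hopt : D.β * D.M ^ 2 * H ^ 3 = 1)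
    (hw : ∀ R, ∀ᶠ n in atTop, ∀ x, |x| ≤ R → w n x = D.W n (D.cell n x))
    (hnk : Tendsto nk atTop atTop) {τ : ℝ}
    (hτ : Tendsto (fun h => D.W (nk h) (D.k (nk h)) / D.M) atTop (nhds (H * τ))) {x : ℝ}
    (hx : ContinuousAt (obliqueStair H (D.M * H) τ) x) :
    Tendsto (fun h => w (nk h) x) atTop (nhds (obliqueStair H (D.M * H) τ x)) := by
  obtain ⟨γ, hγ, stair_eq⟩ := exists_stairS_eq_of_continuousAt
    (continuousAt_stairS_of_obliqueStair hH.ne' (mul_ne_zero hM hH.ne') hx)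
  rw [Metric.tendsto_nhds]
  intro η hη
  have hM' : 0 < |D.M| := abs_pos.mpr hM
  obtain ⟨ε, hε, hεγ, hεη⟩ : ∃ ε > 0, 3 * ε ≤ H * γ ∧ 3 * (|D.M| * ε) ≤ η := by
    refine ⟨min (H * γ) (η / |D.M|) / 3, by positivity, ?_, ?_⟩
    · linarith [min_le_left (H * γ) (η / |D.M|)]
    · have := mul_le_mul_of_nonneg_left (min_le_right (H * γ) (η / |D.M|)) hM'.le
      rw [mul_div_cancel₀ _ hM'.ne'] at this
      linarith
  filter_upwards [hnk.eventually (D.eventually_exists_step hM hH hopt (|x| + 1) hε),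
    hnk.eventually (hw |x|), hnk.eventually (D.eventually_δ_lt hε),
    hnk.eventually (D.eventually_cell |x|), Metric.tendsto_nhds.mp hτ ε hε]
    with m hstep hw hδ hcell hντ
  set n := nk m
  set ν := D.W n (D.k n) / D.M
  rw [Real.dist_eq] at hντ
  obtain ⟨hcellx, cell_le, lt_cell⟩ := hcell x le_rfl
  obtain ⟨z, level, near⟩ := hstep _ hcellx
  have near' := abs_le.mp near
  have hντ' := abs_lt.mp hντ
  have scaled : H * |(x - H * τ) / H - 2 * z| < H * (1 + γ) := by
    rw [← abs_of_pos hH, ← abs_mul, abs_of_pos hH, mul_sub, mul_div_cancel₀ _ hH.ne']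
    exact abs_lt.mpr ⟨by linarith, by linarith⟩
  have value : obliqueStair H (D.M * H) τ x = D.M * (H * τ + 2 * H * z) := by
    unfold obliqueStair canStair
    rw [stair_eq z (lt_of_mul_lt_mul_left scaled hH.le)]
    ring
  rw [hw x le_rfl, Real.dist_eq, value]
  calc |D.W n (D.cell n x) - D.M * (H * τ + 2 * H * z)|
      = |(D.W n (D.cell n x) - D.M * (ν + 2 * H * z)) + D.M * (ν - H * τ)| := by ring_nf
    _ ≤ |D.M| * ε + |D.M| * ε := by
        refine (abs_add_le _ _).trans (add_le_add level ?_)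
        rw [abs_mul]
        gcongr
    _ < η := by linarith [mul_pos hM' hε]

lemma exists_subseq_tendsto_W_k_div (hM : D.M ≠ 0) (hH : 0 < H)
    (hopt : D.β * D.M ^ 2 * H ^ 3 = 1) (hnk : Tendsto nk atTop atTop) :
    ∃ φ : ℕ → ℕ, StrictMono φ ∧ ∃ τ, |τ| ≤ 1 ∧
      Tendsto (fun h => D.W (nk (φ h)) (D.k (nk (φ h))) / D.M) atTop (nhds (H * τ)) := by
  have bound (ε : ℝ) (hε : 0 < ε) := hnk.eventually (D.eventually_abs_W_k_div_le hM hH hopt hε)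
  obtain ⟨μ, -, φ, hφ, hμ⟩ := (isCompact_Icc (a := -(H + 1)) (b := H + 1)).tendsto_subseq'
    ((bound 1 one_pos).mono fun _ => abs_le.mp).frequently
  have abs_μ_le : |μ| ≤ H := le_of_forall_pos_le_add fun ε hε =>
    le_of_tendsto hμ.abs (hφ.tendsto_atTop.eventually (bound ε hε))
  refine ⟨φ, hφ, μ / H, ?_, ?_⟩
  · rwa [abs_div, abs_of_pos hH, div_le_one hH]
  · rwa [mul_div_cancel₀ _ hH.ne']

/-- Blow-ups are compact because the only free parameter of the limit staircase is the level of its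
central plateau, and this level is bounded. -/
theorem exists_subseq_locStrictBV (hH : D.M ≠ 0 → 0 < H ∧ D.β * D.M ^ 2 * H ^ 3 = 1) (hH0 : 0 ≤ H)
    (hw : ∀ R, ∀ᶠ n in atTop, ∀ x, |x| ≤ R → w n x = D.W n (D.cell n x))
    (hnk : Tendsto nk atTop atTop) :
    ∃ φ : ℕ → ℕ, StrictMono φ ∧ ∃ v : ℝ → ℝ, Obl H (D.M * H) v ∧
      LocStrictBV (fun h => w (nk (φ h))) v := by
  obtain ⟨φ, hφ, τ, hτ, hwv⟩ : ∃ φ : ℕ → ℕ, StrictMono φ ∧ ∃ τ, |τ| ≤ 1 ∧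
      ∀ x, ContinuousAt (obliqueStair H (D.M * H) τ) x →
        Tendsto (fun h => w (nk (φ h)) x) atTop (nhds (obliqueStair H (D.M * H) τ x)) := by
    by_cases hM : D.M = 0
    · refine ⟨id, strictMono_id, 0, by simp, fun x _ => ?_⟩
      simpa [obliqueStair, canStair, hM, Function.comp_def] using
        (D.tendsto_zero_of_M_eq_zero hM hw x).comp hnk
    · obtain ⟨hH, hopt⟩ := hH hM
      obtain ⟨φ, hφ, τ, hτ, hlim⟩ := D.exists_subseq_tendsto_W_k_div hM hH hopt hnk
      exact ⟨φ, hφ, τ, hτ, fun x =>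
        D.tendsto_obliqueStair hM hH hopt hw (hnk.comp hφ.tendsto_atTop) hlim⟩
  exact ⟨φ, hφ, obliqueStair H (D.M * H) τ, obl_obliqueStair _ _ hτ,
    D.locStrictBV_of_tendsto hw (hnk.comp hφ.tendsto_atTop)
      (countable_not_continuousAt_obliqueStair hH0 _ _)
      (fun _ _ => eVariationOn_obliqueStair_le hH0 _ _) hwv⟩

end BlowupSequence

/-! ### The scales `ω(n)`, `δ(n)` and the logarithmic jump cost -/

section Scales

lemma log_natCast_pos {n : ℕ} (hn : 2 ≤ n) : 0 < Real.log n :=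
  Real.log_pos (by exact_mod_cast (show 1 < n by omega))

lemma omg_pos {n : ℕ} (hn : 2 ≤ n) : 0 < omg n := by
  have := log_natCast_pos hn
  unfold omg
  positivity

lemma omg_pow_three {n : ℕ} (hn : 2 ≤ n) : omg n ^ 3 = Real.log n / n := by
  have := log_natCast_pos hn
  unfold omg
  rw [← Real.rpow_natCast, ← Real.rpow_mul (by positivity)]
  norm_num

lemma dlt_pos {n : ℕ} (hn : 2 ≤ n) : 0 < dlt n := by
  have := omg_pos hn
  unfold dlt
  positivity

lemma natCast_mul_omg_mul_dlt {n : ℕ} (hn : 2 ≤ n) : (n : ℝ) * omg n * dlt n = 1 := by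
  have := omg_pos hn
  unfold dlt
  field_simp

lemma dlt_mul_log {n : ℕ} (hn : 2 ≤ n) : dlt n * Real.log n = omg n ^ 2 := by
  have hω := omg_pos hn
  have : (0 : ℝ) < n := by positivity
  have hlog : Real.log n = omg n ^ 3 * n := by rw [omg_pow_three hn]; field_simp
  rw [dlt, hlog]
  field_simp

lemma neg_log_dlt {n : ℕ} (hn : 2 ≤ n) :
    -Real.log (dlt n) = (2 * Real.log n + Real.log (Real.log n)) / 3 := by
  have hω := omg_pos hn
  have hn0 : (0 : ℝ) < n := by positivity
  have hcube := congrArg Real.log (omg_pow_three hn)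
  rw [Real.log_pow, Real.log_div (log_natCast_pos hn).ne' hn0.ne'] at hcube
  rw [dlt, one_div, Real.log_inv, Real.log_mul hn0.ne' hω.ne']
  push_cast at hcube
  linarith

lemma tendsto_log_natCast_atTop : Tendsto (fun n : ℕ => Real.log n) atTop atTop :=
  Real.tendsto_log_atTop.comp tendsto_natCast_atTop_atTop

lemma tendsto_log_div_self : Tendsto (fun x : ℝ => Real.log x / x) atTop (nhds 0) :=
  Real.isLittleO_log_id_atTop.tendsto_div_nhds_zero

lemma tendsto_log_log_div_log :
    Tendsto (fun n : ℕ => Real.log (Real.log n) / Real.log n) atTop (nhds 0) :=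
  tendsto_log_div_self.comp tendsto_log_natCast_atTop

lemma tendsto_omg : Tendsto omg atTop (nhds 0) := by
  have h := (tendsto_log_div_self.comp tendsto_natCast_atTop_atTop).rpow_const
    (p := (1 : ℝ) / 3) (Or.inr (by norm_num))
  rwa [Real.zero_rpow (by norm_num)] at h

lemma tendsto_dlt : Tendsto dlt atTop (nhds 0) := by
  have hsq : Tendsto (fun n => omg n ^ 2) atTop (nhds 0) := by simpa using tendsto_omg.pow 2
  refine tendsto_of_tendsto_of_tendsto_of_le_of_le' tendsto_const_nhds hsq ?_ ?_
  · filter_upwards [eventually_ge_atTop 2] with n hn using (dlt_pos hn).le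
  · filter_upwards [eventually_ge_atTop 2, tendsto_log_natCast_atTop.eventually_ge_atTop 1]
      with n hn hl
    rw [← dlt_mul_log hn]
    exact le_mul_of_one_le_right (dlt_pos hn).le hl

/-- The price `log (1 + (h / δ(n))²) / log n` of a rescaled jump of height `h` between
neighbouring cells. It tends to `4/3` for fixed `h ≠ 0`, since `δ(n) ≈ n^{-2/3}` up to
logarithms. -/
noncomputable def jumpCost (n : ℕ) (h : ℝ) : ℝ := Real.log (1 + (h / dlt n) ^ 2) / Real.log n

lemma isJumpCost_jumpCost {n : ℕ} (hn : 2 ≤ n) : IsJumpCost (jumpCost n) := by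
  have hlog := log_natCast_pos hn
  refine ⟨fun h => ?_, by simp [jumpCost], fun h h' hh => ?_⟩
  · exact div_nonneg (Real.log_nonneg (by nlinarith [sq_nonneg (h / dlt n)])) hlog.le
  · have : (h / dlt n) ^ 2 ≤ (h' / dlt n) ^ 2 := by
      rw [div_pow, div_pow]
      gcongr ?_ / _
      exact sq_le_sq.mpr hh
    unfold jumpCost
    gcongr

lemma eventually_jumpCost_le (C : ℝ) {η : ℝ} (hη : 0 < η) :
    ∀ᶠ n : ℕ in atTop, ∀ h, |h| ≤ C → jumpCost n h ≤ 4 / 3 + η := by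
  have hrem : Tendsto (fun n : ℕ => Real.log (1 + C ^ 2) / Real.log n +
      2 / 3 * (Real.log (Real.log n) / Real.log n)) atTop (nhds 0) := by
    simpa using (tendsto_log_natCast_atTop.const_div_atTop (Real.log (1 + C ^ 2))).add
      (tendsto_log_log_div_log.const_mul (2 / 3))
  filter_upwards [eventually_ge_atTop 2, hrem.eventually (gt_mem_nhds hη),
    tendsto_dlt.eventually (gt_mem_nhds one_pos)] with n hn hsmall hδ1 h hh
  have hlog := log_natCast_pos hn
  have hδ := dlt_pos hn
  have harg : 1 + (h / dlt n) ^ 2 ≤ (1 + C ^ 2) * (dlt n ^ 2)⁻¹ := by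
    have hC : h ^ 2 ≤ C ^ 2 := sq_le_sq.mpr (hh.trans (le_abs_self C))
    have hδsq : dlt n ^ 2 ≤ 1 := by nlinarith
    rw [← div_eq_mul_inv, le_div_iff₀ (by positivity)]
    have : (1 + (h / dlt n) ^ 2) * dlt n ^ 2 = dlt n ^ 2 + h ^ 2 := by field_simp
    linarith
  calc jumpCost n h
      ≤ Real.log ((1 + C ^ 2) * (dlt n ^ 2)⁻¹) / Real.log n := by unfold jumpCost; gcongr
    _ = (Real.log (1 + C ^ 2) + 2 * -Real.log (dlt n)) / Real.log n := by
        rw [Real.log_mul (by positivity) (by positivity), Real.log_inv, Real.log_pow]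
        push_cast
        ring
    _ = 4 / 3 + (Real.log (1 + C ^ 2) / Real.log n +
          2 / 3 * (Real.log (Real.log n) / Real.log n)) := by
        rw [neg_log_dlt hn]
        field_simp
        ring
    _ ≤ 4 / 3 + η := by gcongr

lemma eventually_le_jumpCost {η : ℝ} (hη : 0 < η) :
    ∀ᶠ n : ℕ in atTop, ∀ h, 1 / Real.log n ^ 2 ≤ |h| → 4 / 3 - η ≤ jumpCost n h := by
  have hrem : Tendsto (fun n : ℕ => 10 / 3 * (Real.log (Real.log n) / Real.log n)) atTop
      (nhds 0) := by
    simpa using tendsto_log_log_div_log.const_mul (10 / 3)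
  filter_upwards [eventually_ge_atTop 2, hrem.eventually (gt_mem_nhds hη)] with n hn hsmall h hh
  have hlog := log_natCast_pos hn
  have hδ := dlt_pos hn
  have harg : (1 / Real.log n ^ 2 / dlt n) ^ 2 ≤ 1 + (h / dlt n) ^ 2 := by
    have : (1 / Real.log n ^ 2 / dlt n) ^ 2 ≤ (h / dlt n) ^ 2 := by
      rw [div_pow _ (dlt n), div_pow h, ← sq_abs h]
      gcongr
    linarith
  calc 4 / 3 - η ≤ 4 / 3 - 10 / 3 * (Real.log (Real.log n) / Real.log n) := by gcongr
    _ = 2 * (-Real.log (dlt n) - 2 * Real.log (Real.log n)) / Real.log n := by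
        rw [neg_log_dlt hn]
        field_simp
        ring
    _ = Real.log ((1 / Real.log n ^ 2 / dlt n) ^ 2) / Real.log n := by
        rw [Real.log_pow, Real.log_div (by positivity) hδ.ne', one_div, Real.log_inv,
          Real.log_pow]
        push_cast
        ring
    _ ≤ jumpCost n h := by unfold jumpCost; gcongr

lemma log_mul_jumpCost {n : ℕ} (hn : 2 ≤ n) (h : ℝ) :
    Real.log n * jumpCost n h = Real.log (1 + (|h| / dlt n) ^ 2) := by
  have := log_natCast_pos hn
  rw [jumpCost, div_pow, div_pow, sq_abs]
  field_simp

lemma abs_le_omg_mul_of_abs_le_dlt {n : ℕ} (hn : 2 ≤ n) {h : ℝ} (hh : |h| ≤ dlt n) :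
    |h| ≤ omg n * dlt n + omg n * jumpCost n h := by
  have hδ := dlt_pos hn
  have hω := omg_pos hn
  obtain ⟨s, hs⟩ : ∃ s, s = |h| / dlt n := ⟨_, rfl⟩
  have hs0 : 0 ≤ s := by rw [hs]; positivity
  have hs1 : s ≤ 1 := by rwa [hs, div_le_one hδ]
  have hlog : s ^ 2 / 2 ≤ Real.log n * jumpCost n h := by
    rw [log_mul_jumpCost hn, ← hs]
    refine le_trans ?_ (Real.le_log_one_add_of_nonneg (sq_nonneg s))
    rw [le_div_iff₀ (by positivity)]
    nlinarith [sq_nonneg s, mul_le_one₀ hs1 hs0 hs1]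
  -- the weight `ω(n)` in this AM-GM inequality is matched to `δ(n) log n = ω(n)²`
  have hamgm : s * omg n ≤ omg n ^ 2 + s ^ 2 / 2 := by nlinarith [sq_nonneg (s - omg n)]
  refine le_of_mul_le_mul_left (a := omg n) ?_ hω
  calc omg n * |h| = s * omg n * dlt n := by rw [hs]; field_simp
    _ ≤ (omg n ^ 2 + Real.log n * jumpCost n h) * dlt n := by gcongr; linarith
    _ = omg n ^ 2 * dlt n + (dlt n * Real.log n) * jumpCost n h := by ring
    _ = omg n * (omg n * dlt n + omg n * jumpCost n h) := by rw [dlt_mul_log hn]; ring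

lemma one_half_le_log_mul_jumpCost {n : ℕ} (hn : 2 ≤ n) {h : ℝ} (hh : dlt n ≤ |h|) :
    1 / 2 ≤ Real.log n * jumpCost n h := by
  have hs : 1 ≤ |h| / dlt n := by rwa [one_le_div (dlt_pos hn)]
  calc (1 / 2 : ℝ) ≤ Real.log 2 := by linarith [Real.log_two_gt_d9]
    _ ≤ Real.log (1 + (|h| / dlt n) ^ 2) := Real.log_le_log (by norm_num) (by nlinarith)
    _ = _ := (log_mul_jumpCost hn h).symm

lemma eventually_abs_le_of_abs_lt {η : ℝ} (hη : 0 < η) :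
    ∀ᶠ n : ℕ in atTop, ∀ h, |h| < 1 / Real.log n ^ 2 →
      |h| ≤ η * dlt n + η * jumpCost n h := by
  filter_upwards [eventually_ge_atTop 2, tendsto_omg.eventually (gt_mem_nhds hη),
    tendsto_log_natCast_atTop.eventually_ge_atTop (2 / η)] with n hn hω hlogη h hh
  have hlog := log_natCast_pos hn
  have hδ := dlt_pos hn
  have hcost := (isJumpCost_jumpCost hn).nonneg h
  rcases le_total |h| (dlt n) with hhδ | hhδ
  · refine (abs_le_omg_mul_of_abs_le_dlt hn hhδ).trans ?_
    gcongr
  · have hlarge := one_half_le_log_mul_jumpCost hn hhδ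
    rw [div_le_iff₀ hη] at hlogη
    rw [lt_div_iff₀ (by positivity)] at hh
    have : |h| ≤ η * jumpCost n h := by
      refine le_of_mul_le_mul_right (a := Real.log n ^ 2) ?_ (by positivity)
      nlinarith
    have : 0 ≤ η * dlt n := by positivity
    linarith

lemma eventually_jumpCost_le_five (K : ℝ) :
    ∀ᶠ n : ℕ in atTop, ∀ h, |h| ≤ K * n ^ 2 * dlt n → jumpCost n h ≤ 5 := by
  filter_upwards [eventually_ge_atTop 2,
    tendsto_log_natCast_atTop.eventually_ge_atTop (Real.log (1 + K ^ 2))] with n hn hK h hh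
  have hδ := dlt_pos hn
  have hn1 : (1 : ℝ) ≤ (n : ℝ) ^ 4 := one_le_pow₀ (by exact_mod_cast (show 1 ≤ n by omega))
  have hratio : (h / dlt n) ^ 2 ≤ (K * n ^ 2) ^ 2 := by
    refine sq_le_sq.mpr ?_
    rw [abs_div, abs_of_pos hδ, div_le_iff₀ hδ]
    exact hh.trans (by gcongr; exact le_abs_self _)
  have harg : Real.log (1 + (h / dlt n) ^ 2) ≤ Real.log ((1 + K ^ 2) * (n : ℝ) ^ 4) :=
    Real.log_le_log (by positivity) (by nlinarith)
  rw [Real.log_mul (by positivity) (by positivity), Real.log_pow] at harg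
  rw [jumpCost, div_le_iff₀ (log_natCast_pos hn)]
  push_cast at harg
  linarith

end Scales

/-! ### The functional as a finite sum over the cells -/

section FiniteSum

lemma div_le_succ_div (n i : ℕ) : (i / n : ℝ) ≤ ((i + 1 : ℕ) / n : ℝ) := by
  gcongr
  exact i.le_succ

lemma succ_div_sub_div (n i : ℕ) : ((i + 1 : ℕ) / n : ℝ) - (i / n : ℝ) = 1 / n := by
  push_cast
  ring

lemma Ioc_div_subset {n i : ℕ} (hi : i < n) : Ioc (i / n : ℝ) ((i + 1 : ℕ) / n) ⊆ Ioc 0 1 := by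
  refine Ioc_subset_Ioc (by positivity) ?_
  rw [div_le_one (by exact_mod_cast i.zero_le.trans_lt hi)]
  exact_mod_cast hi

/-- Mean value of `f` over the cell `[i / n, (i + 1) / n]`. -/
noncomputable def cellMean (f : ℝ → ℝ) (n i : ℕ) : ℝ :=
  n * ∫ x in (i / n : ℝ)..((i + 1 : ℕ) / n : ℝ), f x

lemma abs_cellMean_sub_le {f : ℝ → ℝ} {n i : ℕ} (hn : 0 < n) {c C : ℝ}
    (hf : IntervalIntegrable f volume (i / n : ℝ) ((i + 1 : ℕ) / n : ℝ))
    (h : ∀ x ∈ Icc (i / n : ℝ) ((i + 1 : ℕ) / n : ℝ), |f x - c| ≤ C) :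
    |cellMean f n i - c| ≤ C := by
  have hn0 : (0 : ℝ) < n := by exact_mod_cast hn
  have hmean : cellMean f n i - c =
      n * ∫ x in (i / n : ℝ)..((i + 1 : ℕ) / n : ℝ), (f x - c) := by
    rw [intervalIntegral.integral_sub hf intervalIntegrable_const, intervalIntegral.integral_const,
      succ_div_sub_div, smul_eq_mul, cellMean]
    field_simp
  have hint := intervalIntegral.norm_integral_le_of_norm_le_const (a := (i / n : ℝ))
    (b := ((i + 1 : ℕ) / n : ℝ)) (C := C) (f := fun x => f x - c) fun x hx => by
      rw [uIoc_of_le (div_le_succ_div n i)] at hx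
      exact h x (Ioc_subset_Icc_self hx)
  rw [succ_div_sub_div, Real.norm_eq_abs, abs_of_pos (one_div_pos.mpr hn0)] at hint
  calc |cellMean f n i - c|
      = n * |∫ x in (i / n : ℝ)..((i + 1 : ℕ) / n : ℝ), (f x - c)| := by
        rw [hmean, abs_mul, abs_of_pos hn0]
    _ ≤ n * (C * (1 / n)) := by gcongr
    _ = C := by field_simp

lemma integral_eq_sum_cells {F : ℝ → ℝ} {n m : ℕ} (G : ℕ → ℝ → ℝ)
    (hG : ∀ i < m, IntervalIntegrable (G i) volume (i / n : ℝ) ((i + 1 : ℕ) / n : ℝ))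
    (hFG : ∀ i < m, ∀ x ∈ Ioo (i / n : ℝ) ((i + 1 : ℕ) / n : ℝ), F x = G i x) :
    ∫ x in (0 : ℝ)..(m / n : ℝ), F x =
      ∑ i ∈ Finset.range m, ∫ x in (i / n : ℝ)..((i + 1 : ℕ) / n : ℝ), G i x := by
  have heq (i : ℕ) (hi : i < m) :
      EqOn (G i) F (uIoo (i / n : ℝ) ((i + 1 : ℕ) / n : ℝ)) := fun x hx => by
    rw [uIoo_of_le (div_le_succ_div n i)] at hx
    exact (hFG i hi x hx).symm
  have hsum := intervalIntegral.sum_integral_adjacent_intervals (f := F) (μ := volume)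
    (a := fun i : ℕ => (i / n : ℝ)) (n := m) fun i hi => (hG i hi).congr_uIoo (heq i hi)
  rw [Nat.cast_zero, zero_div] at hsum
  rw [← hsum]
  exact Finset.sum_congr rfl fun i hi =>
    (intervalIntegral.integral_congr_uIoo (heq i (Finset.mem_range.mp hi))).symm

lemma IsPC.eq_of_mem_Ico {n : ℕ} {v : ℝ → ℝ} (hv : IsPC (1 / (n : ℝ)) v) (i : ℕ) {x : ℝ}
    (hx : x ∈ Ico (i / n : ℝ) ((i + 1 : ℕ) / n : ℝ)) : v x = v (i / n) := by
  push_cast at hx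
  simpa [mul_one_div, ← div_eq_mul_inv] using hv i x (by simpa [← div_eq_mul_inv] using hx)

lemma isPC_comp_floor {n : ℕ} (hn : 0 < n) (V : ℕ → ℝ) :
    IsPC (1 / (n : ℝ)) fun x => V ⌊(n : ℝ) * x⌋₊ := by
  intro z x hx
  have hn0 : (0 : ℝ) < n := by exact_mod_cast hn
  rw [mul_one_div, mul_one_div, mem_Ico, div_le_iff₀ hn0, lt_div_iff₀ hn0] at hx
  have hx_floor : ⌊(n : ℝ) * x⌋ = z := Int.floor_eq_iff.mpr ⟨by linarith, by linarith⟩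
  have hz_floor : ⌊(n : ℝ) * (z * (1 / n))⌋ = z := by
    rw [show (n : ℝ) * (z * (1 / n)) = z by field_simp, Int.floor_intCast]
  simp only [← Int.floor_toNat, hx_floor, hz_floor]

section Cells

variable {f : ℝ → ℝ} {n i : ℕ}

lemma memLp_two_cell (hf : MemLp f 2 (volume.restrict (Ioo 0 1))) (hi : i < n) :
    MemLp f 2 (volume.restrict (Ioc (i / n : ℝ) ((i + 1 : ℕ) / n))) := by
  rw [restrict_Ioo_eq_restrict_Ioc] at hf
  exact hf.mono_measure (Measure.restrict_mono_set _ (Ioc_div_subset hi))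

lemma intervalIntegrable_cell (hf : MemLp f 2 (volume.restrict (Ioo 0 1))) (hi : i < n) :
    IntervalIntegrable f volume (i / n : ℝ) ((i + 1 : ℕ) / n : ℝ) :=
  (intervalIntegrable_iff_integrableOn_Ioc_of_le (div_le_succ_div n i)).mpr
    ((memLp_two_cell hf hi).integrable one_le_two)

lemma intervalIntegrable_sq_sub_cell (hf : MemLp f 2 (volume.restrict (Ioo 0 1)))
    (hi : i < n) (c : ℝ) :
    IntervalIntegrable (fun x => (c - f x) ^ 2) volume (i / n : ℝ) ((i + 1 : ℕ) / n : ℝ) :=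
  (intervalIntegrable_iff_integrableOn_Ioc_of_le (div_le_succ_div n i)).mpr
    ((memLp_const c).sub (memLp_two_cell hf hi)).integrable_sq

lemma integral_sq_sub_cell (hf : MemLp f 2 (volume.restrict (Ioo 0 1))) (hi : i < n) (c : ℝ) :
    ∫ x in (i / n : ℝ)..((i + 1 : ℕ) / n : ℝ), (c - f x) ^ 2 =
      1 / n * (c - cellMean f n i) ^ 2 +
        ((∫ x in (i / n : ℝ)..((i + 1 : ℕ) / n : ℝ), f x ^ 2) - 1 / n * cellMean f n i ^ 2) := by
  have hn0 : (n : ℝ) ≠ 0 := by exact_mod_cast (i.zero_le.trans_lt hi).ne'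
  have hint := intervalIntegrable_cell hf hi
  have hsq : IntervalIntegrable (fun x => f x ^ 2) volume (i / n : ℝ) ((i + 1 : ℕ) / n : ℝ) := by
    simpa using intervalIntegrable_sq_sub_cell hf hi 0
  have hexpand (x : ℝ) : (c - f x) ^ 2 = c ^ 2 - 2 * c * f x + f x ^ 2 := by ring
  simp only [hexpand]
  rw [intervalIntegral.integral_add (intervalIntegrable_const.sub (hint.const_mul _)) hsq,
    intervalIntegral.integral_sub intervalIntegrable_const (hint.const_mul _),
    intervalIntegral.integral_const, intervalIntegral.integral_const_mul, succ_div_sub_div,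
    smul_eq_mul, cellMean]
  field_simp
  ring

end Cells

namespace IsPC

variable {n : ℕ} {v : ℝ → ℝ}

lemma integral_log_Dd (hv : IsPC (1 / (n : ℝ)) v) (hn : 0 < n) :
    ∫ x in (0 : ℝ)..((n - 1 : ℕ) / n : ℝ), Real.log (1 + Dd (1 / (n : ℝ)) v x ^ 2) =
      ∑ i ∈ Finset.range (n - 1),
        1 / n * Real.log (1 + (n * (v ((i + 1 : ℕ) / n) - v (i / n))) ^ 2) := by
  have : (0 : ℝ) < n := by exact_mod_cast hn
  rw [integral_eq_sum_cells
    (G := fun i _ => Real.log (1 + (n * (v ((i + 1 : ℕ) / n) - v (i / n))) ^ 2))]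
  · refine Finset.sum_congr rfl fun i _ => ?_
    rw [intervalIntegral.integral_const, succ_div_sub_div, smul_eq_mul]
  · exact fun i _ => intervalIntegrable_const
  · intro i _ x hx
    have hi := succ_div_sub_div n i
    have hi' := succ_div_sub_div n (i + 1)
    rw [Dd, hv.eq_of_mem_Ico i (Ioo_subset_Ico_self hx),
      hv.eq_of_mem_Ico (i + 1) ⟨by linarith [hx.1], by linarith [hx.2]⟩]
    congr 3
    field_simp

lemma integral_sq_sub {f : ℝ → ℝ} (hf : MemLp f 2 (volume.restrict (Ioo 0 1)))
    (hv : IsPC (1 / (n : ℝ)) v) (hn : 0 < n) :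
    ∫ x in (0 : ℝ)..1, (v x - f x) ^ 2 =
      ∑ i ∈ Finset.range n, ∫ x in (i / n : ℝ)..((i + 1 : ℕ) / n : ℝ), (v (i / n) - f x) ^ 2 := by
  have hone : (1 : ℝ) = n / n := by field_simp
  rw [hone]
  refine integral_eq_sum_cells _ (fun i hi => intervalIntegrable_sq_sub_cell hf hi _) ?_
  intro i _ x hx
  rw [hv.eq_of_mem_Ico i (Ioo_subset_Ico_self hx)]

lemma integral_sq_sub_cell_le {f : ℝ → ℝ} (hf : MemLp f 2 (volume.restrict (Ioo 0 1)))
    (hv : IsPC (1 / (n : ℝ)) v) {i : ℕ} (hi : i < n) :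
    ∫ x in (i / n : ℝ)..((i + 1 : ℕ) / n : ℝ), (v (i / n) - f x) ^ 2 ≤
      ∫ x in (0 : ℝ)..1, (v x - f x) ^ 2 := by
  rw [hv.integral_sq_sub hf (i.zero_le.trans_lt hi)]
  exact Finset.single_le_sum
    (f := fun j : ℕ => ∫ x in (j / n : ℝ)..((j + 1 : ℕ) / n : ℝ), (v (j / n) - f x) ^ 2)
    (fun j _ => intervalIntegral.integral_nonneg (div_le_succ_div n j) fun _ _ => sq_nonneg _)
    (Finset.mem_range.mpr hi)

lemma dpmf_eq_sum {f : ℝ → ℝ} (hf : MemLp f 2 (volume.restrict (Ioo 0 1)))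
    (hv : IsPC (1 / (n : ℝ)) v) (hn : 0 < n) (β : ℝ) :
    DPMF n β f 0 1 v =
      (∑ i ∈ Finset.range (n - 1),
        1 / n * Real.log (1 + (n * (v ((i + 1 : ℕ) / n) - v (i / n))) ^ 2)) +
      β * ∑ i ∈ Finset.range n,
        ∫ x in (i / n : ℝ)..((i + 1 : ℕ) / n : ℝ), (v (i / n) - f x) ^ 2 := by
  have hn0 : (0 : ℝ) < n := by exact_mod_cast hn
  have hlow : lowGrid (1 / (n : ℝ)) 0 = 0 := by simp [lowGrid]
  have hhigh : highGrid (1 / (n : ℝ)) 1 - 1 / (n : ℝ) = ((n - 1 : ℕ) / n : ℝ) := by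
    have : highGrid (1 / (n : ℝ)) 1 = 1 := by simp [highGrid, hn0.ne']
    rw [this, Nat.cast_sub hn]
    field_simp
    simp
  rw [DPMF, hlow, hhigh, hv.integral_log_Dd hn, hv.integral_sq_sub hf hn]

end IsPC

/-- The change of variables `v = x₀ + ω(n) V` turns the functional into the discrete energy. Since
`energy … 0 (n - 1)` leaves out the fidelity of the last cell, this term is added separately. -/
lemma exists_dpmf_eq_energy {f : ℝ → ℝ} (hf : MemLp f 2 (volume.restrict (Ioo 0 1))) {n : ℕ}
    (hn : 2 ≤ n) (β x₀ : ℝ) :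
    ∃ c : ℝ, ∀ v, IsPC (1 / (n : ℝ)) v → ∀ V : ℕ → ℝ,
      (∀ i < n, v (i / n) = x₀ + omg n * V i) → DPMF n β f 0 1 v =
        omg n ^ 3 * (energy (jumpCost n) (β * dlt n) (fun i => (cellMean f n i - x₀) / omg n) V
            0 (n - 1) +
          β * dlt n * (V (n - 1) - (cellMean f n (n - 1) - x₀) / omg n) ^ 2) + c := by
  refine ⟨β * ∑ i ∈ Finset.range n, ((∫ x in (i / n : ℝ)..((i + 1 : ℕ) / n : ℝ), f x ^ 2) -
    1 / n * cellMean f n i ^ 2), fun v hv V hV => ?_⟩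
  have hω := omg_pos hn
  have hlog := log_natCast_pos hn
  have hδ := dlt_pos hn
  have hscale := natCast_mul_omg_mul_dlt hn
  have hjump : ∀ i ∈ Finset.range (n - 1),
      1 / n * Real.log (1 + (n * (v ((i + 1 : ℕ) / n) - v (i / n))) ^ 2) =
        omg n ^ 3 * jumpCost n (V (i + 1) - V i) := fun i hi => by
    rw [Finset.mem_range] at hi
    have : (n : ℝ) * (v ((i + 1 : ℕ) / n) - v (i / n)) = (V (i + 1) - V i) / dlt n := by
      rw [hV i (by omega), hV (i + 1) (by omega), eq_div_iff hδ.ne']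
      linear_combination (V (i + 1) - V i) * hscale
    rw [this, omg_pow_three hn, jumpCost]
    field_simp
  have hfidelity : ∀ i ∈ Finset.range n,
      ∫ x in (i / n : ℝ)..((i + 1 : ℕ) / n : ℝ), (v (i / n) - f x) ^ 2 =
        omg n ^ 3 * (dlt n * (V i - (cellMean f n i - x₀) / omg n) ^ 2) +
          ((∫ x in (i / n : ℝ)..((i + 1 : ℕ) / n : ℝ), f x ^ 2) -
            1 / n * cellMean f n i ^ 2) := fun i hi => by
    rw [Finset.mem_range] at hi
    have hinv : (1 / n : ℝ) = omg n * dlt n := by field_simp; linarith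
    rw [integral_sq_sub_cell hf hi, hV i hi, hinv]
    field_simp
    ring
  rw [hv.dpmf_eq_sum hf (by omega), Finset.sum_congr rfl hjump, Finset.sum_congr rfl hfidelity,
    Finset.sum_add_distrib, show Finset.range n = Finset.range (n - 1 + 1) by congr 1; omega,
    Finset.sum_range_succ (fun i => omg n ^ 3 * _), energy, ← Finset.range_eq_Ico,
    Finset.sum_add_distrib, ← Finset.mul_sum, ← Finset.mul_sum, ← Finset.mul_sum]
  simp only [mul_assoc, ← Finset.mul_sum]
  ring

end FiniteSum

namespace IsMinimizer

variable {β : ℝ} {f u : ℝ → ℝ} {n : ℕ}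

lemma isEnergyLocalMin (hf : MemLp f 2 (volume.restrict (Ioo 0 1))) (hu : IsMinimizer n β f u)
    (hn : 2 ≤ n) (x₀ : ℝ) :
    IsEnergyLocalMin (jumpCost n) (β * dlt n) (fun i => (cellMean f n i - x₀) / omg n)
      (fun i => (u (i / n) - x₀) / omg n) (n - 1) := by
  intro A B hAB hBN V hVA hVB
  obtain ⟨W, hW⟩ : ∃ W : ℕ → ℝ, W = fun i : ℕ => (u (i / n) - x₀) / omg n := ⟨_, rfl⟩
  rw [← hW] at hVA hVB ⊢
  have hω := omg_pos hn
  obtain ⟨c, hc⟩ := exists_dpmf_eq_energy hf hn β x₀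
  let U : ℕ → ℝ := fun i => if A ≤ i ∧ i ≤ B then V i else W i
  have U_left : ∀ i ≤ A, U i = W i := fun i hi => by
    rcases hi.eq_or_lt with rfl | hi
    · simp [U, hAB.le, hVA]
    · simp [U, hi.not_ge]
  have U_right : ∀ i ≥ B, U i = W i := fun i hi => by
    rcases hi.eq_or_lt with rfl | hi
    · simp [U, hAB.le, hVB]
    · simp [U, hi.not_ge]
  have hU : IsPC (1 / (n : ℝ)) fun x => x₀ + omg n * U ⌊(n : ℝ) * x⌋₊ :=
    isPC_comp_floor (by omega) fun i => x₀ + omg n * U i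
  have hmin := hu.2 _ hU
  rw [hc u hu.1 W fun i _ => by rw [hW]; field_simp; ring,
    hc _ hU U fun i _ => by
      rw [show (n : ℝ) * (i / n) = i by field_simp, Nat.floor_natCast]] at hmin
  replace hmin := le_of_mul_le_mul_left (le_of_add_le_add_right hmin) (pow_pos hω 3)
  rw [U_right _ hBN] at hmin
  replace hmin := le_of_add_le_add_right hmin
  have split (X : ℕ → ℝ) := energy_add (jumpCost n) (β * dlt n)
    (fun i => (cellMean f n i - x₀) / omg n) X A.zero_le (hAB.le.trans hBN)
  have split' (X : ℕ → ℝ) := energy_add (jumpCost n) (β * dlt n)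
    (fun i => (cellMean f n i - x₀) / omg n) X hAB.le hBN
  rw [← split, ← split, ← split', ← split', energy_congr fun i _ hi => U_left i hi,
    energy_congr (V := U) (A := A) (W := V) fun i hi hi' => by simp [U, hi, hi'],
    energy_congr (A := B) fun i hi _ => U_right i hi] at hmin
  linarith

lemma integral_sq_sub_le (hβ : 0 < β) (hf : MemLp f 2 (volume.restrict (Ioo 0 1)))
    (hu : IsMinimizer n β f u) (hn : 0 < n) :
    ∫ x in (0 : ℝ)..1, (u x - f x) ^ 2 ≤ ∫ x in (0 : ℝ)..1, f x ^ 2 := by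
  have hzero : IsPC (1 / (n : ℝ)) fun _ => 0 := fun _ _ _ => rfl
  have hmin := hu.2 _ hzero
  rw [hu.1.dpmf_eq_sum hf hn, hzero.dpmf_eq_sum hf hn, ← hu.1.integral_sq_sub hf hn,
    ← hzero.integral_sq_sub hf hn] at hmin
  have : 0 ≤ ∑ j ∈ Finset.range (n - 1),
      1 / (n : ℝ) * Real.log (1 + (n * (u ((j + 1 : ℕ) / n) - u (j / n))) ^ 2) :=
    Finset.sum_nonneg fun j _ => mul_nonneg (by positivity)
      (Real.log_nonneg (le_add_of_nonneg_right (sq_nonneg _)))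
  refine le_of_mul_le_mul_left (a := β) ?_ hβ
  simp only [sub_self, mul_zero, ne_eq, OfNat.ofNat_ne_zero, not_false_eq_true, zero_pow,
    add_zero, Real.log_one, Finset.sum_const_zero, zero_add, zero_sub, neg_sq] at hmin
  linarith

lemma sq_apply_le (hβ : 0 < β) (hf : MemLp f 2 (volume.restrict (Ioo 0 1)))
    (hu : IsMinimizer n β f u) {i : ℕ} (hi : i < n) :
    u (i / n) ^ 2 ≤ 4 * n * ∫ x in (0 : ℝ)..1, f x ^ 2 := by
  have hn : 0 < n := i.zero_le.trans_lt hi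
  have u_cell := (hu.1.integral_sq_sub_cell_le hf hi).trans (hu.integral_sq_sub_le hβ hf hn)
  have f_cell := IsPC.integral_sq_sub_cell_le (v := fun _ => 0) hf (fun _ _ _ => rfl) hi
  have hint (c : ℝ) := (intervalIntegrable_sq_sub_cell hf hi c).const_mul 2
  have hmono : ∫ x in (i / n : ℝ)..((i + 1 : ℕ) / n : ℝ), u (i / n) ^ 2 ≤
      ∫ x in (i / n : ℝ)..((i + 1 : ℕ) / n : ℝ),
        (2 * (u (i / n) - f x) ^ 2 + 2 * (0 - f x) ^ 2) :=
    intervalIntegral.integral_mono (div_le_succ_div n i) intervalIntegrable_const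
      ((hint _).add (hint _)) fun x => by nlinarith [sq_nonneg (u (i / n) - 2 * f x)]
  rw [intervalIntegral.integral_add (hint _) (hint _), intervalIntegral.integral_const_mul,
    intervalIntegral.integral_const_mul, intervalIntegral.integral_const, succ_div_sub_div,
    smul_eq_mul, one_div, inv_mul_le_iff₀ (by exact_mod_cast hn)] at hmono
  simp only [zero_sub, neg_sq] at f_cell hmono
  calc u (i / n) ^ 2 ≤ n * (4 * ∫ x in (0 : ℝ)..1, f x ^ 2) := by
        refine hmono.trans ?_
        gcongr
        linarith
    _ = 4 * n * ∫ x in (0 : ℝ)..1, f x ^ 2 := by ring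

end IsMinimizer

/-! ### Blow-ups of minimizers -/

section Blowup

variable {β : ℝ} {f : ℝ → ℝ} {u : ℕ → ℝ → ℝ} {k : ℕ → ℕ} {xinf M : ℝ}

lemma div_eq_add_omg_mul {n : ℕ} (hn : 2 ≤ n) (k i : ℕ) :
    (i / n : ℝ) = k / n + omg n * ((i - k) * dlt n) := by
  have : (0 : ℝ) < n := by positivity
  field_simp
  linear_combination ((k : ℝ) - i) * natCast_mul_omg_mul_dlt hn

lemma eventually_le_mul_dlt (hxinf : xinf ∈ Ioo (0 : ℝ) 1)
    (hx : Tendsto (fun n => (k n : ℝ) / n) atTop (nhds xinf)) (R : ℝ) :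
    ∀ᶠ n in atTop, R ≤ k n * dlt n ∧ R ≤ (((n - 1 : ℕ) : ℝ) - k n) * dlt n := by
  have hleft : Tendsto (fun n => R * omg n - k n / n) atTop (nhds (0 - xinf)) := by
    simpa using (tendsto_omg.const_mul R).sub hx
  have hright : Tendsto (fun n => R * omg n + k n / n + omg n * dlt n) atTop (nhds xinf) := by
    simpa using ((tendsto_omg.const_mul R).add hx).add (tendsto_omg.mul tendsto_dlt)
  filter_upwards [eventually_ge_atTop 2, hleft.eventually_lt_const (sub_neg.mpr hxinf.1),
    hright.eventually_lt_const hxinf.2] with n hn hl hr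
  have hω := omg_pos hn
  have hscale := natCast_mul_omg_mul_dlt hn
  have hk : (k n : ℝ) * dlt n * omg n = k n / n := by
    field_simp
    linear_combination (k n : ℝ) * hscale
  rw [Nat.cast_sub (by omega), Nat.cast_one]
  constructor <;> refine le_of_mul_le_mul_right (a := omg n) ?_ hω
  · linarith
  · linear_combination hr.le + hk - hscale

lemma abs_cellMean_sub_affine_le {n : ℕ} (hn : 2 ≤ n) (hδ1 : dlt n ≤ 1) {k i : ℕ} {ε R : ℝ}
    (hε : 0 ≤ ε) (hi : |((i : ℝ) - k) * dlt n| ≤ R)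
    (hint : IntervalIntegrable f volume (i / n : ℝ) ((i + 1 : ℕ) / n : ℝ))
    (h : ∀ p : ℝ, |p - k / n| ≤ omg n * (R + 1) →
      |f p - f (k / n) - (p - k / n) * M| ≤ ε * |p - k / n|) :
    |(cellMean f n i - f (k / n)) / omg n - M * ((i - k) * dlt n)| ≤
      ε * (R + 1) + |M| * dlt n := by
  have hω := omg_pos hn
  have := dlt_pos hn
  obtain ⟨y, hy⟩ : ∃ y, y = ((i : ℝ) - k) * dlt n := ⟨_, rfl⟩
  have hleft : (i / n : ℝ) = k / n + omg n * y := hy ▸ div_eq_add_omg_mul hn k i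
  have hright : ((i + 1 : ℕ) / n : ℝ) = k / n + omg n * y + omg n * dlt n := by
    rw [div_eq_add_omg_mul hn k, hy]
    push_cast
    ring
  rw [← hy] at hi ⊢
  have hmean : |cellMean f n i - (f (k / n) + M * (omg n * y))| ≤
      ε * (omg n * (R + 1)) + |M| * (omg n * dlt n) := by
    refine abs_cellMean_sub_le (by omega) hint fun p hp => ?_
    rw [hleft, hright] at hp
    have hpk : |p - k / n| ≤ omg n * (R + 1) := by
      rw [abs_le] at hi ⊢
      constructor <;> nlinarith [hp.1, hp.2, hi.1, hi.2]
    have hcell : |M * (p - k / n - omg n * y)| ≤ |M| * (omg n * dlt n) := by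
      rw [abs_mul, abs_of_nonneg (by linarith [hp.1] : 0 ≤ p - k / n - omg n * y)]
      gcongr
      linarith [hp.2]
    calc |f p - (f (k / n) + M * (omg n * y))|
        = |(f p - f (k / n) - (p - k / n) * M) + M * (p - k / n - omg n * y)| := by
          congr 1; ring
      _ ≤ ε * |p - k / n| + |M| * (omg n * dlt n) :=
          (abs_add_le _ _).trans (add_le_add (h p hpk) hcell)
      _ ≤ _ := by gcongr
  calc |(cellMean f n i - f (k / n)) / omg n - M * y|
      = |cellMean f n i - (f (k / n) + M * (omg n * y))| / omg n := by
        rw [← abs_of_pos hω, ← abs_div, abs_of_pos hω]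
        congr 1
        field_simp
        ring
    _ ≤ ε * (R + 1) + |M| * dlt n := by
        rw [div_le_iff₀ hω]
        linarith

lemma eventually_abs_cellMean_sub_affine_le (hf : MemLp f 2 (volume.restrict (Ioo 0 1)))
    (hM : HasStrictDerivAt f M xinf) (hxinf : xinf ∈ Ioo (0 : ℝ) 1)
    (hx : Tendsto (fun n => (k n : ℝ) / n) atTop (nhds xinf)) (R : ℝ) {η : ℝ} (hη : 0 < η) :
    ∀ᶠ n in atTop, ∀ i : ℕ, |((i : ℝ) - k n) * dlt n| ≤ R →
      |(cellMean f n i - f (k n / n)) / omg n - M * ((i - k n) * dlt n)| ≤ η := by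
  obtain ⟨ε, hε, hεη⟩ : ∃ ε > 0, ε * (|R| + 1) = η / 2 :=
    ⟨η / 2 / (|R| + 1), by positivity, by field_simp⟩
  obtain ⟨r, hr, hlin⟩ := Metric.eventually_nhds_iff.mp
    (hM.hasStrictFDerivAt.isLittleO.def hε)
  have hω : Tendsto (fun n => omg n * (|R| + 1)) atTop (nhds 0) := by
    simpa using tendsto_omg.mul_const (|R| + 1)
  have hMδ : Tendsto (fun n => |M| * dlt n) atTop (nhds 0) := by
    simpa using tendsto_dlt.const_mul |M|
  filter_upwards [eventually_ge_atTop 2, Metric.tendsto_nhds.mp hx (r / 2) (half_pos hr),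
    hω.eventually_lt_const (half_pos hr), hMδ.eventually_lt_const (half_pos hη),
    tendsto_dlt.eventually_lt_const one_pos, eventually_le_mul_dlt hxinf hx (|R| + 1)]
    with n hn hxn hωr hMη hδ1 hdom i hi
  have hδ := dlt_pos hn
  have hi' : |((i : ℝ) - k n) * dlt n| ≤ |R| := hi.trans (le_abs_self R)
  have hin : i < n := by
    have : ((i : ℝ) - k n) * dlt n < (((n - 1 : ℕ) : ℝ) - k n) * dlt n := by
      linarith [(abs_le.mp hi').2]
    have : i < n - 1 :=
      Nat.cast_lt.mp ((sub_lt_sub_iff_right _).mp (lt_of_mul_lt_mul_right this hδ.le))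
    omega
  refine (abs_cellMean_sub_affine_le hn hδ1.le hε.le hi' (intervalIntegrable_cell hf hin)
    fun p hp => ?_).trans (by linarith)
  have hpx : dist p xinf < r := by
    have := dist_triangle p (k n / n) xinf
    rw [Real.dist_eq p (k n / n)] at this
    linarith
  simpa using hlin (y := (p, k n / n)) (by
    rw [Prod.dist_eq, max_lt_iff]
    exact ⟨hpx, hxn.trans (half_lt_self hr)⟩)

lemma eventually_jumpCost_sub_le (hβ : 0 < β) (hf : MemLp f 2 (volume.restrict (Ioo 0 1)))
    (hcont : ContinuousAt f xinf) (hu : ∀ᶠ n in atTop, IsMinimizer n β f (u n))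
    (hx : Tendsto (fun n => (k n : ℝ) / n) atTop (nhds xinf)) (C : ℝ) :
    ∀ᶠ n in atTop, ∀ i : ℕ, i ≤ n - 1 → ∀ c : ℝ, |c| ≤ C →
      jumpCost n (c - (u n (i / n) - f (k n / n)) / omg n) ≤ 5 := by
  obtain ⟨Q, hQ⟩ : ∃ Q, Q = ∫ x in (0 : ℝ)..1, f x ^ 2 := ⟨_, rfl⟩
  have hQ0 : 0 ≤ Q := hQ ▸ intervalIntegral.integral_nonneg zero_le_one fun _ _ => sq_nonneg _
  obtain ⟨F, hF⟩ : ∃ F, ∀ᶠ n in atTop, |f (k n / n)| ≤ F :=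
    ⟨|f xinf| + 1, (hcont.tendsto.comp hx).abs.eventually_le_const (lt_add_one _)⟩
  filter_upwards [eventually_ge_atTop 2, eventually_jumpCost_le_five (C + (1 + Q) + F),
    tendsto_omg.eventually_lt_const one_pos, hu, hF] with n hn hcost hω1 hun hFn i hi c hc
  have hω := omg_pos hn
  have hn1 : (1 : ℝ) ≤ n := by exact_mod_cast (show 1 ≤ n by omega)
  have hui : |u n (i / n)| ≤ (1 + Q) * n := by
    refine abs_le_of_sq_le_sq ?_ (by positivity)
    have := hun.sq_apply_le hβ hf (show i < n by omega)
    rw [← hQ] at this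
    nlinarith [sq_nonneg (1 - Q), mul_le_mul hn1 hn1 zero_le_one (by positivity)]
  refine hcost _ ?_
  have hscale : (n : ℝ) ^ 2 * dlt n = n / omg n := by
    rw [eq_div_iff hω.ne']
    linear_combination (n : ℝ) * natCast_mul_omg_mul_dlt hn
  calc |c - (u n (i / n) - f (k n / n)) / omg n|
      ≤ |c| + (|u n (i / n)| + |f (k n / n)|) / omg n := by
        refine (abs_sub _ _).trans ?_
        rw [abs_div, abs_of_pos hω]
        gcongr
        exact abs_sub _ _
    _ ≤ C * (n / omg n) + ((1 + Q) * n + F * n) / omg n := by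
        have : 1 ≤ n / omg n := by rw [one_le_div hω]; linarith
        have hC0 : 0 ≤ C := (abs_nonneg _).trans hc
        have hF0 : 0 ≤ F := (abs_nonneg _).trans hFn
        gcongr
        · exact hc.trans (le_mul_of_one_le_right hC0 this)
        · exact hFn.trans (le_mul_of_one_le_right hF0 hn1)
    _ = (C + (1 + Q) + F) * n ^ 2 * dlt n := by
        rw [mul_assoc, hscale]
        ring

/-- The cell values of the blow-ups, at scale `ω(n)` around `k n / n`, of a sequence of minimizers.
Increments below `1 / (log n)²` are not counted as jumps. -/
noncomputable def BlowupSequence.ofMinimizers (hβ : 0 < β)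
    (hf : MemLp f 2 (volume.restrict (Ioo 0 1))) (hM : HasStrictDerivAt f M xinf)
    (hxinf : xinf ∈ Ioo (0 : ℝ) 1) (hu : ∀ᶠ n in atTop, IsMinimizer n β f (u n))
    (hx : Tendsto (fun n => (k n : ℝ) / n) atTop (nhds xinf)) : BlowupSequence where
  β := β
  M := M
  δ := dlt
  θ n := 1 / Real.log n ^ 2
  g := jumpCost
  k := k
  N n := n - 1
  a n i := (cellMean f n i - f (k n / n)) / omg n
  W n i := (u n (i / n) - f (k n / n)) / omg n
  β_pos := hβ
  eventually_δ_pos := (eventually_ge_atTop 2).mono fun _ => dlt_pos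
  tendsto_δ := tendsto_dlt
  isJumpCost := (eventually_ge_atTop 2).mono fun _ => isJumpCost_jumpCost
  isEnergyLocalMin := by
    filter_upwards [eventually_ge_atTop 2, hu] with n hn hun
    exact hun.isEnergyLocalMin hf hn _
  exhausting := eventually_le_mul_dlt hxinf hx
  forcing_near R _ := eventually_abs_cellMean_sub_affine_le hf hM hxinf hx R
  cost_sub_le := eventually_jumpCost_sub_le hβ hf hM.hasDerivAt.continuousAt hu hx
  cost_le C _ := eventually_jumpCost_le C
  le_cost _ := eventually_le_jumpCost
  abs_le_of_small _ := eventually_abs_le_of_abs_lt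

/-- Blow-up of `u n` at scale `ω(n)` around the point `k n / n` of the graph of `f`. -/
noncomputable def blowup (f : ℝ → ℝ) (u : ℕ → ℝ → ℝ) (k : ℕ → ℕ) (n : ℕ) (y : ℝ) : ℝ :=
  (u n (k n / n + omg n * y) - f (k n / n)) / omg n

lemma IsPC.apply_add_omg_mul {n : ℕ} {v : ℝ → ℝ} (hv : IsPC (1 / (n : ℝ)) v) (hn : 2 ≤ n) {k : ℕ}
    {y : ℝ} (hy : -y ≤ k * dlt n) :
    v (k / n + omg n * y) = v ((⌊(k : ℝ) + y / dlt n⌋₊ : ℕ) / n) := by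
  have hδ := dlt_pos hn
  have hnonneg : 0 ≤ (k : ℝ) + y / dlt n := by
    rw [← mul_nonneg_iff_of_pos_right hδ, add_mul, div_mul_cancel₀ _ hδ.ne']
    linarith
  have hpoint : k / n + omg n * y = ((k : ℝ) + y / dlt n) / n := by
    field_simp
    linear_combination y * natCast_mul_omg_mul_dlt hn
  refine hv.eq_of_mem_Ico _ ⟨?_, ?_⟩ <;> rw [hpoint] <;> gcongr
  · exact Nat.floor_le hnonneg
  · exact_mod_cast Nat.lt_floor_add_one _

lemma staircase_step_pos_and_normalized {β M H : ℝ} (hβ : 0 < β) (hM : M ≠ 0)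
    (hH : H = (1 / (β * |M| ^ 2)) ^ ((1 : ℝ) / 3)) : 0 < H ∧ β * M ^ 2 * H ^ 3 = 1 := by
  refine ⟨by rw [hH]; positivity, ?_⟩
  have hcube : H ^ 3 = 1 / (β * |M| ^ 2) := by
    rw [hH, ← Real.rpow_mul_natCast (by positivity)]
    norm_num
  rw [hcube, sq_abs]
  field_simp

theorem blowup_compactness_oblique_general (hβ : 0 < β)
    (hf : MemLp f 2 (volume.restrict (Ioo 0 1))) (hM : HasStrictDerivAt f M xinf)
    (hxinf : xinf ∈ Ioo (0 : ℝ) 1) (hu : ∀ᶠ n in atTop, IsMinimizer n β f (u n))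
    (hx : Tendsto (fun n => (k n : ℝ) / n) atTop (nhds xinf))
    {H : ℝ} (hH : H = (1 / (β * |M| ^ 2)) ^ ((1 : ℝ) / 3))
    {nk : ℕ → ℕ} (hnk : Tendsto nk atTop atTop) :
    ∃ φ : ℕ → ℕ, StrictMono φ ∧ ∃ winf : ℝ → ℝ, Obl H (M * H) winf ∧
      LocStrictBV (fun h => blowup f u k (nk (φ h))) winf := by
  let D := BlowupSequence.ofMinimizers hβ hf hM hxinf hu hx
  have hH0 : 0 ≤ H := by rw [hH]; positivity
  refine D.exists_subseq_locStrictBV (fun hM0 => staircase_step_pos_and_normalized hβ hM0 hH) hH0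
    (fun R => ?_) hnk
  filter_upwards [eventually_ge_atTop 2, hu, eventually_le_mul_dlt hxinf hx R]
    with n hn hun hdom y hy
  rw [blowup, hun.1.apply_add_omg_mul hn (by linarith [(abs_le.mp hy).1, hdom.1])]
  rfl

end Blowup

lemma memLp_restrict_Ioo_of_continuousOn {f : ℝ → ℝ} {a b : ℝ} (hf : ContinuousOn f (Icc a b))
    (p : ENNReal) : MemLp f p (volume.restrict (Ioo a b)) := by
  obtain ⟨C, hC⟩ := isCompact_Icc.exists_bound_of_continuousOn hf
  exact .of_bound ((hf.mono Ioo_subset_Icc_self).aestronglyMeasurable measurableSet_Ioo) C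
    (ae_restrict_of_forall_mem measurableSet_Ioo fun x hx => hC x (Ioo_subset_Icc_self hx))

/-- Blow-ups `w_n(y) = (u_n(x_n + ω(n)y) − f(x_n))/ω(n)` of minimizers
around points `x_n = k_n/n → x_∞ ∈ (0,1)` are relatively compact with respect to locally
strict convergence, and every limit point is an oblique translation of the canonical
`(H,V)`-staircase with `H = (1/(β|f'(x_∞)|²))^{1/3}`, `V = f'(x_∞)H`. -/
theorem blowup_compactness_oblique
    (β : ℝ) (hβ : 0 < β) (f f' : ℝ → ℝ)
    (hder : ∀ x ∈ Set.Icc (0 : ℝ) 1, HasDerivAt f (f' x) x)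
    (hcont : ContinuousOn f' (Set.Icc (0 : ℝ) 1))
    (u : ℕ → ℝ → ℝ) (hu : ∀ n, 2 ≤ n → IsMinimizer n β f (u n))
    (k : ℕ → ℕ) (hk : ∀ n, 2 ≤ n → k n < n)
    (xs : ℕ → ℝ) (hxs : ∀ n, xs n = (k n : ℝ) / (n : ℝ))
    (xinf : ℝ) (hxinf : xinf ∈ Set.Ioo (0 : ℝ) 1)
    (hx : Tendsto xs atTop (nhds xinf))
    (w : ℕ → ℝ → ℝ)
    (hw : ∀ n y, w n y = (u n (xs n + omg n * y) - f (xs n)) / omg n)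
    (H V : ℝ)
    (hH : H = (1 / (β * |f' xinf| ^ 2)) ^ ((1 : ℝ) / 3))
    (hV : V = f' xinf * H) :
    ∀ nk : ℕ → ℕ, Tendsto nk atTop atTop →
      ∃ φ : ℕ → ℕ, StrictMono φ ∧ ∃ winf : ℝ → ℝ, Obl H V winf ∧
        LocStrictBV (fun h => w (nk (φ h))) winf := by
  obtain rfl : xs = fun n => (k n : ℝ) / n := funext hxs
  obtain rfl : w = blowup f u k := funext fun n => funext (hw n)
  subst hV
  have hnhds : Icc (0 : ℝ) 1 ∈ nhds xinf := Icc_mem_nhds hxinf.1 hxinf.2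
  have hL2 : MemLp f 2 (volume.restrict (Ioo 0 1)) :=
    memLp_restrict_Ioo_of_continuousOn (HasDerivAt.continuousOn hder) 2
  have hstrict : HasStrictDerivAt f (f' xinf) xinf :=
    hasStrictDerivAt_of_hasDerivAt_of_continuousAt (Eventually.mono hnhds hder)
      (hcont.continuousAt hnhds)
  exact fun nk => blowup_compactness_oblique_general hβ hL2 hstrict hxinf
    ((eventually_ge_atTop 2).mono hu) hx hH

end PeronaMalik
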